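/- Let 0 ≤ l < d ≤ n be integers, let V ⊆ ℂ^n be a d-dimensional algebraic set, and let τ_l > 0 be a real number. Let T be an l-dimensional algebraic set of ℂ^n with deg(T) ≥ τ_l · δ(V)^{d−l} · deg(V). Then there exists a polynomial P ∈ ℂ[x_1,…,x_n] of degree at most C(n,τ_l)·(deg(T)/deg(V))^{1/(d−l)}, for some constant C(n,τ_l) depending only on n and τ_l, which vanishes at every point of T but does not vanish identically on V (i.e., it does not vanish on at least one irreducible component of V). -/

import Mathlib

open MvPolynomial Set

noncomputable section

namespace Paper

variable (n : ℕ)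

/-- The zero locus in `ℂⁿ` of a set of polynomials. -/
def zeroLocus (I : Set (MvPolynomial (Fin n) ℂ)) : Set (Fin n → ℂ) :=
  {x | ∀ f ∈ I, eval x f = 0}

/-- A subset of `ℂⁿ` is algebraic if it is the zero locus of a set of polynomials. -/
def IsAlgebraicSet (V : Set (Fin n → ℂ)) : Prop :=
  ∃ I : Set (MvPolynomial (Fin n) ℂ), V = zeroLocus n I

/-- An irreducible (affine) variety in `ℂⁿ`: a nonempty algebraic set that is not covered
by two algebraic sets unless it is contained in one of them. -/
def IsIrredVariety (V : Set (Fin n → ℂ)) : Prop :=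
  IsAlgebraicSet n V ∧ V.Nonempty ∧
    ∀ V₁ V₂ : Set (Fin n → ℂ), IsAlgebraicSet n V₁ → IsAlgebraicSet n V₂ →
      V ⊆ V₁ ∪ V₂ → V ⊆ V₁ ∨ V ⊆ V₂

/-- There is a strictly increasing chain of `d + 1` irreducible varieties inside `V`. -/
def HasChain (V : Set (Fin n → ℂ)) (d : ℕ) : Prop :=
  ∃ W : Fin (d + 1) → Set (Fin n → ℂ),
    (∀ i, IsIrredVariety n (W i)) ∧ (∀ i j : Fin (d + 1), i < j → W i ⊂ W j) ∧
      W (Fin.last d) ⊆ V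

/-- The (Krull) dimension of a subset of `ℂⁿ`, as the length of the longest chain of
irreducible subvarieties. -/
def dim (V : Set (Fin n → ℂ)) : ℕ := sSup {d | HasChain n V d}

/-- `W` is an irreducible component of `X`: an irreducible subvariety that is maximal among
irreducible subvarieties of `X`. -/
def IsIrredComponent (W X : Set (Fin n → ℂ)) : Prop :=
  IsIrredVariety n W ∧ W ⊆ X ∧
    ∀ W', IsIrredVariety n W' → W ⊆ W' → W' ⊆ X → W' = W

/-- The degree of an irreducible variety `V ⊆ ℂⁿ` of dimension `d` (i.e. the degree of its
projective closure): the largest finite number of points in which an affine-linear subspace of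
dimension `n - d` meets `V`. -/
def degree (V : Set (Fin n → ℂ)) : ℕ :=
  sSup { m | ∃ L : AffineSubspace ℂ (Fin n → ℂ),
    Module.finrank ℂ L.direction = n - dim n V ∧ (V ∩ ↑L).Finite ∧ (V ∩ ↑L).ncard = m }

/-- The degree of an algebraic set: the sum of the degrees of its irreducible components. -/
def degreeSum (X : Set (Fin n → ℂ)) : ℕ :=
  ∑ᶠ W ∈ {W | IsIrredComponent n W X}, degree n W

/-- The maximal dimension of an irreducible component of `X` containing `V` equals `e`. -/
def MaxCompDimEq (X V : Set (Fin n → ℂ)) (e : ℕ) : Prop :=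
  (∃ W, IsIrredComponent n W X ∧ V ⊆ W ∧ dim n W = e) ∧
    ∀ W, IsIrredComponent n W X → V ⊆ W → dim n W ≤ e

/-- The partial degrees `δ_i(V)` of an irreducible variety `V`:  the minimal `δ` such that there
are polynomials of degree at most `δ` cutting out an algebraic set containing `V` whose
irreducible components containing `V` have maximal dimension `n - i`.  By convention
`δ_0(V) = 0`. -/
def partialDeg (V : Set (Fin n → ℂ)) (i : ℕ) : ℕ :=
  if i = 0 then 0
  else sInf { δ | ∃ I : Finset (MvPolynomial (Fin n) ℂ),
    (∀ f ∈ I, f.totalDegree ≤ δ) ∧ V ⊆ zeroLocus n ↑I ∧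
      MaxCompDimEq n (zeroLocus n ↑I) V (n - i) }

/-- The partial degrees as extended naturals, with the convention `δ_i(V) = ∞` for
`i > n - dim V`. -/
def partialDegE (V : Set (Fin n → ℂ)) (i : ℕ) : ℕ∞ :=
  if i ≤ n - dim n V then (partialDeg n V i : ℕ∞) else ⊤

/-- `δ(V)` for an irreducible variety `V`: the minimal `δ` such that `V` is an irreducible
component of the zero set of a finite family of polynomials of degree at most `δ`. -/
def deltaIrr (V : Set (Fin n → ℂ)) : ℕ :=
  sInf { δ | ∃ I : Finset (MvPolynomial (Fin n) ℂ),
    (∀ f ∈ I, f.totalDegree ≤ δ) ∧ IsIrredComponent n V (zeroLocus n ↑I) }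

/-- `δ(V)` for a general algebraic set `V`: the minimal `δ` such that every irreducible
component of `V` is an irreducible component of the zero set of a finite family of polynomials
of degree at most `δ`. -/
def deltaSet (V : Set (Fin n → ℂ)) : ℕ :=
  sInf { δ | ∃ I : Finset (MvPolynomial (Fin n) ℂ),
    (∀ f ∈ I, f.totalDegree ≤ δ) ∧
      ∀ W, IsIrredComponent n W V → IsIrredComponent n W (zeroLocus n ↑I) }

/-- An algebraic set all of whose irreducible components have dimension `d`. -/
def IsAlgSetOfDim (V : Set (Fin n → ℂ)) (d : ℕ) : Prop :=
  IsAlgebraicSet n V ∧ V.Nonempty ∧ ∀ W, IsIrredComponent n W V → dim n W = d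

/-- `Δ_i(V) = max (deg V / (δ_{i+1}(V) ⋯ δ_{n-d}(V))) 1`. -/
def Delta (V : Set (Fin n → ℂ)) (i : ℕ) : ℝ :=
  max ((degree n V : ℝ) / ∏ j ∈ Finset.Icc (i + 1) (n - dim n V), (partialDeg n V j : ℝ)) 1

/-- `i` is admissible with respect to `V` if `δ_{i+1}(V) > 2 i δ_i(V)` (with the convention
`δ_i(V) = ∞` for `i > n - dim V`). -/
def Admissible (V : Set (Fin n → ℂ)) (i : ℕ) : Prop :=
  ((2 * i : ℕ) : ℕ∞) * partialDegE n V i < partialDegE n V (i + 1)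

/-- The interval `ℛ_i(V) = [c₁ δ_i(V)^{n-i} Δ_i(V), (c₀/2) δ_{i+1}(V)^{n-i} Δ_i(V)]`,
where `δ_{n-d+1}(V) = ∞` makes the last interval a half-line. -/
def RSet (c0 c1 : ℝ) (V : Set (Fin n → ℂ)) (i : ℕ) : Set ℝ :=
  if i = n - dim n V then
    Set.Ici (c1 * (partialDeg n V i : ℝ) ^ (n - i) * Delta n V i)
  else
    Set.Icc (c1 * (partialDeg n V i : ℝ) ^ (n - i) * Delta n V i)
      ((c0 / 2) * (partialDeg n V (i + 1) : ℝ) ^ (n - i) * Delta n V i)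

/-- The interval `ℛ^l_{s,τ}(V) = [τ δ_s(V)^{n-(s+l)} Δ_s(V), τ δ_{s+1}(V)^{n-(s+l)} Δ_s(V)]`,
where `δ_{n-d+1}(V) = ∞` makes the last interval a half-line. -/
def RlSet (τ : ℝ) (l : ℕ) (V : Set (Fin n → ℂ)) (s : ℕ) : Set ℝ :=
  if s = n - dim n V then
    Set.Ici (τ * (partialDeg n V s : ℝ) ^ (n - (s + l)) * Delta n V s)
  else
    Set.Icc (τ * (partialDeg n V s : ℝ) ^ (n - (s + l)) * Delta n V s)
      (τ * (partialDeg n V (s + 1) : ℝ) ^ (n - (s + l)) * Delta n V s)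

/-- The ideal `I(V)` of polynomials vanishing on `V ⊆ ℂⁿ`. -/
def vanishingIdeal (V : Set (Fin n → ℂ)) : Ideal (MvPolynomial (Fin n) ℂ) where
  carrier := {f | ∀ x ∈ V, eval x f = 0}
  add_mem' := by
    intro a b ha hb x hx
    simp [ha x hx, hb x hx]
  zero_mem' := by
    intro x hx
    simp
  smul_mem' := by
    intro c f hf x hx
    simp [smul_eq_mul, hf x hx]

/-- The ideal `I_ℝ(V)` of real polynomials vanishing on `V ⊆ ℂⁿ`. -/
def vanishingIdealR (V : Set (Fin n → ℂ)) : Ideal (MvPolynomial (Fin n) ℝ) :=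
  (vanishingIdeal n V).comap (MvPolynomial.map (algebraMap ℝ ℂ))

/-- The affine Hilbert function `H_{I(V)}(m) = dim_ℂ ℂ[x]_{≤ m} / I(V)_{≤ m}`, realised as the
dimension of the image of the space of polynomials of total degree at most `m` in the quotient
ring `ℂ[x]/I(V)`. -/
def hilbert (V : Set (Fin n → ℂ)) (m : ℕ) : ℕ :=
  Module.finrank ℂ
    (Submodule.map (Ideal.Quotient.mkₐ ℂ (vanishingIdeal n V)).toLinearMap
      (restrictTotalDegree (Fin n) ℂ m))

/-- The real affine Hilbert function `H_{I(V),ℝ}(m) = dim_ℝ ℝ[x]_{≤ m} / I_ℝ(V)_{≤ m}`. -/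
def hilbertR (V : Set (Fin n → ℂ)) (m : ℕ) : ℕ :=
  Module.finrank ℝ
    (Submodule.map (Ideal.Quotient.mkₐ ℝ (vanishingIdealR n V)).toLinearMap
      (restrictTotalDegree (Fin n) ℝ m))

/-- The inclusion `ℝⁿ → ℂⁿ`. -/
def toC (x : Fin n → ℝ) : Fin n → ℂ := fun i => (x i : ℂ)

/-- The set of real points of `V ⊆ ℂⁿ`. -/
def realPts (V : Set (Fin n → ℂ)) : Set (Fin n → ℝ) := {x | toC n x ∈ V}

/-- The real zero set of a real polynomial. -/
def zeroSetR (g : MvPolynomial (Fin n) ℝ) : Set (Fin n → ℝ) := {x | eval x g = 0}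

/-- The zero locus of the polynomials `P 1, …, P i` (the first `i` members of a tuple of
polynomials indexed from `1`). -/
def zeroLocusUpTo (P : ℕ → MvPolynomial (Fin n) ℂ) (i : ℕ) : Set (Fin n → ℂ) :=
  zeroLocus n {f | ∃ j : ℕ, 1 ≤ j ∧ j ≤ i ∧ f = P j}

/-- `V'` is an `(n-s)`-minimal variety of the irreducible variety `V`. -/
def IsMinimalVariety (V V' : Set (Fin n → ℂ)) (s : ℕ) : Prop :=
  IsIrredVariety n V' ∧ V ⊆ V' ∧ dim n V' = n - s ∧
    ∀ f ∈ vanishingIdeal n V, f ∉ vanishingIdeal n V' →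
      partialDegE n V (s + 1) ≤ (f.totalDegree : ℕ∞)

/-- `S` is `(k,b)`-free with respect to `T`, for the incidence relation `R`. -/
def KBFree {α β : Type*} (R : α → β → Prop) (S : Finset α) (T : Finset β) (k b : ℕ) : Prop :=
  ¬ ∃ (P : Finset α) (B : Finset β), P ⊆ S ∧ B ⊆ T ∧ P.card = k ∧ B.card = b ∧
      ∀ s ∈ P, ∀ t ∈ B, R s t

/-- The number of incidences between a finite set of points and a finite family of sets. -/
def incCountAbs {α : Type*} (S : Finset α) (T : Finset (Set α)) : ℕ :=
  ∑ t ∈ T, (↑S ∩ t).ncard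

/-- The number of incidences between a finite set of real points and a finite family of
subsets of `ℂⁿ`. -/
def incCount (S : Finset (Fin n → ℝ)) (T : Finset (Set (Fin n → ℂ))) : ℕ :=
  ∑ t ∈ T, (↑S ∩ toC n ⁻¹' t).ncard

/-- The total degree `deg T = ∑_{t ∈ T} deg t` of a finite family of algebraic sets. -/
def degFamily (T : Finset (Set (Fin n → ℂ))) : ℕ := ∑ t ∈ T, degreeSum n t

/-- The total degree of a finite family of irreducible varieties. -/
def degFamilyIrred (T : Finset (Set (Fin n → ℂ))) : ℕ := ∑ t ∈ T, degree n t

/-- `α_k(d)`. -/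
def alpha (k d : ℕ) : ℝ :=
  if k = 1 ∧ d = 1 then 0 else (k : ℝ) * ((d : ℝ) - 1) / ((d : ℝ) * (k : ℝ) - 1)

/-- `β_k(d)`. -/
def beta (k d : ℕ) : ℝ :=
  if k = 1 ∧ d = 1 then 1 else (d : ℝ) * ((k : ℝ) - 1) / ((d : ℝ) * (k : ℝ) - 1)

/-- `τ_d(b,k) = b^{1-β_k(d)} k^{1-α_k(d)}`. -/
def tauC (d b k : ℕ) : ℝ := (b : ℝ) ^ (1 - beta k d) * (k : ℝ) ^ (1 - alpha k d)

/-- The Chardin–Philippon property of the constant `c₀`: for every pure-dimensional algebraic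
set `W ⊆ ℂⁿ` and every `m ≥ 2 (n - dim W) δ(W)` one has `H_{I(W)}(m) ≥ c₀ m^{dim W} deg W`. -/
def ChardinPhilippon (c0 : ℝ) : Prop :=
  ∀ (W : Set (Fin n → ℂ)) (e : ℕ), IsAlgSetOfDim n W e →
    ∀ m : ℕ, 2 * (n - e) * deltaSet n W ≤ m →
      c0 * (m : ℝ) ^ e * (degreeSum n W : ℝ) ≤ (hilbert n W m : ℝ)

/-- The defining property of the constant `c₁`: for every irreducible variety `V`, every
positive integer lies in some interval `ℛ_i(V)` with `i` admissible with respect to `V`. -/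
def CoversPositiveIntegers (c0 c1 : ℝ) : Prop :=
  ∀ V : Set (Fin n → ℂ), IsIrredVariety n V →
    ∀ m : ℕ, 0 < m → ∃ i, Admissible n V i ∧ (m : ℝ) ∈ RSet n c0 c1 V i

/-- `i_V(M)`: the smallest admissible `i` such that `M^{n-i} Δ_i(V) ∈ ℛ_i(V)`. -/
def iV (c0 c1 : ℝ) (V : Set (Fin n → ℂ)) (M : ℕ) : ℕ :=
  sInf {i | Admissible n V i ∧ (M : ℝ) ^ (n - i) * Delta n V i ∈ RSet n c0 c1 V i}

/-- A real polynomial bisects a finite set `S ⊆ ℝⁿ` if it is positive on at most half of `S`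
and negative on at most half of `S`. -/
def Bisects (g : MvPolynomial (Fin n) ℝ) (S : Finset (Fin n → ℝ)) : Prop :=
  ((↑S ∩ {x | 0 < eval x g}).ncard : ℝ) ≤ (S.card : ℝ) / 2 ∧
    ((↑S ∩ {x | eval x g < 0}).ncard : ℝ) ≤ (S.card : ℝ) / 2

/-- The set of `r`-rich points of a family `T`: points lying in at least `r` members of `T`. -/
def richPts (T : Finset (Set (Fin n → ℂ))) (r : ℕ) : Set (Fin n → ℂ) :=
  {x | r ≤ ({t | t ∈ T ∧ x ∈ t} : Set (Set (Fin n → ℂ))).ncard}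

/-- A real hypersurface of degree at most `D`: the real zero set of a nonzero real polynomial
of degree at most `D`. -/
def IsRealHypersurfaceDegLE (t : Set (Fin n → ℝ)) (D : ℕ) : Prop :=
  ∃ p : MvPolynomial (Fin n) ℝ, p ≠ 0 ∧ t = zeroSetR n p ∧ p.totalDegree ≤ D

/-- Lexicographic comparison of the tuples `(f 1, …, f m)` and `(g 1, …, g m)`. -/
def LexLE (m : ℕ) (f g : ℕ → ℕ) : Prop :=
  (∀ j ∈ Finset.Icc 1 m, f j = g j) ∨
    ∃ i ∈ Finset.Icc 1 m, (∀ j, 1 ≤ j → j < i → f j = g j) ∧ f i < g i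

/-! A polynomial of degree at most `m` vanishing on `T` but not on `V` exists as soon as the Hilbert
function of `T` is smaller than that of `V` at `m`. Both are compared with polynomials in `m` by
means of linear Noether normalizations.

If `Y` is a linear Noether normalization of the coordinate ring of an irreducible `W` of dimension
`d`, of rank `r` over `ℂ[Y]`, then a function of degree at most `m` on `W` is determined by Taylor
coefficients of its coordinates of order at most `m`, so the Hilbert function is at most
`r (m + 1) ^ d`. The number `r` agrees with the degree of `W` up to a factor `(d + 1) ^ d`.

For the lower bound, choose `Y` common to all components of `V` and consider the `N` generic points
of `V` over a generic point of `ℂᵈ`, where `N` is the sum of the ranks. Each of them is an isolated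
zero of a system of `n` equations of degree at most `max (δ(V)) 1`, and its Bezoutian determinant is
a polynomial of degree at most `n max (δ(V)) 1` that vanishes at the other points but not at this
one. Hence there are `N` polynomials of this degree that are independent over `ℂ[Y]`, and their
multiples by the monomials in `Y` make the Hilbert function of `V` at `n max (δ(V)) 1 + d q` at
least `N (q + 1) ^ d`.

The exponents `l < d` of these bounds differ, so `q` can be chosen of the order of
`(deg T / deg V) ^ (1 / (d - l))`; the hypothesis on `deg T` makes `δ(V)` at most of this order. -/

section Translation

variable {σ R : Type*} [CommRing R]

/-- The translation `f(x) ↦ f(x + a)` of polynomials. -/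
def translate (a : σ → R) : MvPolynomial σ R ≃ₐ[R] MvPolynomial σ R :=
  AlgEquiv.ofAlgHom (aeval fun i => X i + C (a i)) (aeval fun i => X i - C (a i))
    (algHom_ext fun i => by simp [algebraMap_eq]) (algHom_ext fun i => by simp [algebraMap_eq])

@[simp]
lemma translate_X (a : σ → R) (i : σ) : translate a (X i) = X i + C (a i) := by
  simp [translate]

@[simp]
lemma translate_C (a : σ → R) (r : R) : translate a (C r) = C r :=
  (translate a).commutes r

lemma eval_translate (a b : σ → R) (f : MvPolynomial σ R) :
    eval b (translate a f) = eval (b + a) f := by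
  have : (eval b).comp (translate a : MvPolynomial σ R →+* MvPolynomial σ R) = eval (b + a) :=
    MvPolynomial.ringHom_ext (by simp) (by simp)
  exact congr($this f)

lemma constantCoeff_translate (a : σ → R) (f : MvPolynomial σ R) :
    constantCoeff (translate a f) = eval a f := by
  rw [← eval_zero, eval_translate, zero_add]

lemma totalDegree_aeval_le {τ : Type*} {g : σ → MvPolynomial τ R}
    (hg : ∀ i, (g i).totalDegree ≤ 1) (f : MvPolynomial σ R) :
    (aeval g f).totalDegree ≤ f.totalDegree := by
  rw [aeval_def, eval₂_eq]
  refine totalDegree_finsetSum_le fun m hm => ?_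
  calc _ ≤ (∏ i ∈ m.support, g i ^ m i).totalDegree := by
        simpa [algebraMap_eq] using totalDegree_mul (C (coeff m f)) (∏ i ∈ m.support, g i ^ m i)
    _ ≤ ∑ i ∈ m.support, (g i ^ m i).totalDegree := totalDegree_finsetProd _ _
    _ ≤ ∑ i ∈ m.support, m i := Finset.sum_le_sum fun i _ =>
        (totalDegree_pow _ _).trans (mul_le_of_le_one_right' (hg i))
    _ ≤ f.totalDegree := le_totalDegree hm

lemma totalDegree_translate_le (a : σ → R) (f : MvPolynomial σ R) :
    (translate a f).totalDegree ≤ f.totalDegree := by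
  cases subsingleton_or_nontrivial R
  · simp [Subsingleton.elim (translate a f) 0]
  · exact totalDegree_aeval_le (fun i => (totalDegree_add _ _).trans (by simp)) f

lemma mem_idealOfVars_iff {f : MvPolynomial σ R} :
    f ∈ idealOfVars σ R ↔ constantCoeff f = 0 := by
  rw [← pow_one (idealOfVars σ R), mem_pow_idealOfVars_iff', constantCoeff_eq]
  simp [Finsupp.degree_eq_zero_iff]

lemma map_translate_ker_eval (a : σ → R) :
    (RingHom.ker (eval a)).map (translate a) = idealOfVars σ R := by
  ext f
  rw [Ideal.mem_map_of_equiv, mem_idealOfVars_iff]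
  constructor
  · rintro ⟨g, hg, rfl⟩
    rwa [constantCoeff_translate]
  · intro hf
    obtain ⟨g, rfl⟩ := (translate a).surjective f
    exact ⟨g, by rwa [RingHom.mem_ker, ← constantCoeff_translate], rfl⟩

lemma translate_mem_map_iff (a : σ → R) {I : Ideal (MvPolynomial σ R)} {f : MvPolynomial σ R} :
    translate a f ∈ I.map (translate a) ↔ f ∈ I := by
  rw [Ideal.mem_map_of_equiv]
  simp

lemma translate_mem_pow_idealOfVars_iff (a : σ → R) (N : ℕ) {f : MvPolynomial σ R} :
    translate a f ∈ idealOfVars σ R ^ N ↔ f ∈ RingHom.ker (eval a) ^ N := by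
  rw [← map_translate_ker_eval a, ← Ideal.map_pow, translate_mem_map_iff]

end Translation

section Determinants

open Matrix

variable {σ R : Type*} [Fintype σ] [DecidableEq σ] [CommRing R]

lemma det_mul_mem_of_mulVec_mem {J : Ideal R} {M : Matrix σ σ R} {x : σ → R}
    (h : ∀ i, (M *ᵥ x) i ∈ J) (i : σ) : M.det * x i ∈ J := by
  have cramer : M.det • x = M.adjugate *ᵥ (M *ᵥ x) := by
    rw [mulVec_mulVec, adjugate_mul, smul_mulVec, one_mulVec]
  rw [← smul_eq_mul, ← Pi.smul_apply, cramer]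
  exact J.sum_mem fun j _ => J.mul_mem_left _ (h j)

lemma det_mul_mem_of_mem_span_mulVec {J : Ideal R} {M : Matrix σ σ R}
    {x : σ → R} {y : R} (h : ∀ i, (M *ᵥ x) i ∈ J) (hy : y ∈ Ideal.span (Set.range x)) :
    M.det * y ∈ J := by
  obtain ⟨c, rfl⟩ := Ideal.mem_span_range_iff_exists_fun.1 hy
  rw [Finset.mul_sum]
  refine J.sum_mem fun i _ => ?_
  rw [mul_left_comm]
  exact J.mul_mem_left _ (det_mul_mem_of_mulVec_mem h i)

lemma totalDegree_det_le {τ : Type*} {δ : ℕ} {M : Matrix σ σ (MvPolynomial τ R)}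
    (h : ∀ i j, (M i j).totalDegree ≤ δ) : M.det.totalDegree ≤ Fintype.card σ * δ := by
  rw [det_apply]
  refine totalDegree_finsetSum_le fun s _ => ?_
  calc _ ≤ (∏ i, M (s i) i).totalDegree := totalDegree_smul_le _ _
    _ ≤ ∑ i, (M (s i) i).totalDegree := totalDegree_finsetProd _ _
    _ ≤ ∑ _i : σ, δ := Finset.sum_le_sum fun i _ => h _ _
    _ = Fintype.card σ * δ := by simp

end Determinants

section Wiebe

open Matrix

variable {σ R : Type*} [CommRing R]

lemma mem_span_X_pow_image_iff {s : Set σ} {N : ℕ} {f : MvPolynomial σ R} :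
    f ∈ Ideal.span ((fun i => (X i : MvPolynomial σ R) ^ N) '' s) ↔
      ∀ m ∈ f.support, ∃ i ∈ s, N ≤ m i := by
  have h := mem_ideal_span_monomial_image (x := f) (s := (fun i => Finsupp.single i N) '' s)
  simp only [Set.image_image, ← X_pow_eq_monomial] at h
  simp [h, Finsupp.single_le_iff]

lemma mem_span_X_pow_compl_of_X_mul_mem {i : σ} {N : ℕ} {f : MvPolynomial σ R}
    (h : X i * f ∈ Ideal.span ((fun j => (X j : MvPolynomial σ R) ^ N) '' {i}ᶜ)) :
    f ∈ Ideal.span ((fun j => (X j : MvPolynomial σ R) ^ N) '' {i}ᶜ) := by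
  rw [mem_span_X_pow_image_iff] at h ⊢
  intro m hm
  obtain ⟨j, hj, hN⟩ := h (Finsupp.single i 1 + m) (by simpa [coeff_X_mul] using hm)
  have hji : j ≠ i := hj
  exact ⟨j, hj, by simpa [hji] using hN⟩

variable [Fintype σ] [DecidableEq σ]

lemma det_sub_det_updateRow (M : Matrix σ σ R) (i : σ) (r : σ → R) :
    M.det - (M.updateRow i r).det = (M.updateRow i (M i - r)).det := by
  rw [sub_eq_iff_eq_add, ← det_updateRow_add, sub_add_cancel, updateRow_eq_self]

lemma det_sub_det_updateRow_mem_span_X_pow {N : ℕ} {u : MvPolynomial σ R}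
    {M : Matrix σ σ (MvPolynomial σ R)} (hM : ∀ i, (M *ᵥ X) i = u * X i ^ N)
    {i : σ} {r : σ → MvPolynomial σ R} (hr : r ⬝ᵥ X = u * X i ^ N) :
    M.det - (M.updateRow i r).det ∈
      Ideal.span (Set.range fun j => (X j : MvPolynomial σ R) ^ N) := by
  refine Ideal.span_mono (Set.image_subset_range _ {i}ᶜ)
    (mem_span_X_pow_compl_of_X_mul_mem ?_)
  rw [det_sub_det_updateRow, mul_comm]
  refine det_mul_mem_of_mulVec_mem (fun j => ?_) i
  rcases eq_or_ne j i with rfl | hj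
  · have : (M j - r) ⬝ᵥ X = 0 := by
      rw [sub_dotProduct, hr, ← hM j, mulVec, sub_self]
    simp [updateRow_mulVec, this]
  · rw [updateRow_mulVec, Function.update_of_ne hj, hM]
    exact Ideal.mul_mem_left _ _ (Ideal.subset_span ⟨j, hj, rfl⟩)

/- The rows are exchanged one at a time: the difference of two consecutive determinants is
multiplied by `X i` into the ideal generated by the other powers, modulo which `X i` is regular. -/
lemma det_sub_det_mem_span_X_pow {N : ℕ} {u : MvPolynomial σ R}
    {M M' : Matrix σ σ (MvPolynomial σ R)} (hM : ∀ i, (M *ᵥ X) i = u * X i ^ N)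
    (hM' : ∀ i, (M' *ᵥ X) i = u * X i ^ N) :
    M.det - M'.det ∈ Ideal.span (Set.range fun i => (X i : MvPolynomial σ R) ^ N) := by
  suffices ∀ (s : Finset σ) (M : Matrix σ σ (MvPolynomial σ R)),
      (∀ i, (M *ᵥ X) i = u * X i ^ N) → (∀ i ∉ s, M i = M' i) →
      M.det - M'.det ∈ Ideal.span (Set.range fun i => (X i : MvPolynomial σ R) ^ N) from
    this Finset.univ M hM (by simp)
  intro s
  induction s using Finset.induction_on with
  | empty =>
    intro M _ h
    obtain rfl : M = M' := funext fun i => h i (Finset.notMem_empty i)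
    simp
  | insert i s _ ih =>
    intro M hM h
    rw [← sub_add_sub_cancel _ (M.updateRow i (M' i)).det]
    refine add_mem (det_sub_det_updateRow_mem_span_X_pow hM (hM' i)) (ih _ (fun j => ?_) ?_)
    · rcases eq_or_ne j i with rfl | hj
      · rw [updateRow_mulVec, Function.update_self]
        exact hM' j
      · rw [updateRow_mulVec, Function.update_of_ne hj, hM]
    · intro j hj
      rcases eq_or_ne j i with rfl | hji
      · exact updateRow_self
      · rw [updateRow_ne hji, h j (by simp [hji, hj])]

lemma det_sub_prod_mem_span_X_pow {N : ℕ} {u : MvPolynomial σ R}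
    {M : Matrix σ σ (MvPolynomial σ R)} (hM : ∀ i, (M *ᵥ X) i = u * X i ^ (N + 1)) :
    M.det - u ^ Fintype.card σ * ∏ i, X i ^ N ∈
      Ideal.span (Set.range fun i => (X i : MvPolynomial σ R) ^ (N + 1)) := by
  have := det_sub_det_mem_span_X_pow hM (M' := diagonal fun i => u * X i ^ N)
    fun i => by rw [mulVec_diagonal, pow_succ, mul_assoc]
  simpa [det_diagonal, Finset.prod_mul_distrib] using this

end Wiebe

section LocalIdeal

variable {σ k : Type*} [Field k]

/-- The polynomials that lie in the ideal `I` locally at the point `p`, i.e. the contraction of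
the extension of `I` to the local ring of affine space at `p`. -/
def localIdeal (I : Ideal (MvPolynomial σ k)) (p : σ → k) : Ideal (MvPolynomial σ k) where
  carrier := {h | ∃ u, eval p u ≠ 0 ∧ u * h ∈ I}
  add_mem' := by
    rintro x y ⟨u, hu, hx⟩ ⟨v, hv, hy⟩
    refine ⟨u * v, by simp [hu, hv], ?_⟩
    convert I.add_mem (I.mul_mem_left v hx) (I.mul_mem_left u hy) using 1
    ring
  zero_mem' := ⟨1, by simp, by simp⟩
  smul_mem' c x := by
    rintro ⟨u, hu, hx⟩
    refine ⟨u, hu, ?_⟩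
    rw [smul_eq_mul, mul_left_comm]
    exact I.mul_mem_left c hx

lemma mem_localIdeal {I : Ideal (MvPolynomial σ k)} {p : σ → k} {h : MvPolynomial σ k} :
    h ∈ localIdeal I p ↔ ∃ u, eval p u ≠ 0 ∧ u * h ∈ I := Iff.rfl

lemma exists_forall_mul_mem_of_mem_localIdeal {ι : Type*} [Finite ι]
    {I : Ideal (MvPolynomial σ k)} {p : σ → k} {h : ι → MvPolynomial σ k}
    (hh : ∀ i, h i ∈ localIdeal I p) : ∃ u, eval p u ≠ 0 ∧ ∀ i, u * h i ∈ I := by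
  cases nonempty_fintype ι
  classical
  choose u hu hmem using hh
  refine ⟨∏ i, u i, by simp [Finset.prod_ne_zero_iff, hu], fun i => ?_⟩
  rw [← Finset.prod_erase_mul _ _ (Finset.mem_univ i), mul_assoc]
  exact I.mul_mem_left _ (hmem i)

lemma mem_localIdeal_of_mul_mem {I : Ideal (MvPolynomial σ k)} {p q : σ → k} (hpq : q ≠ p)
    {h : MvPolynomial σ k} (hh : ∀ i, h * (X i - C (q i)) ∈ I) : h ∈ localIdeal I p := by
  obtain ⟨i, hi⟩ := Function.ne_iff.1 hpq
  exact ⟨X i - C (q i), by simpa using sub_ne_zero.2 hi.symm, by rw [mul_comm]; exact hh i⟩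

lemma translate_mem_localIdeal_zero_iff {I : Ideal (MvPolynomial σ k)} {p : σ → k}
    {f : MvPolynomial σ k} :
    translate p f ∈ localIdeal (I.map (translate p)) 0 ↔ f ∈ localIdeal I p := by
  rw [mem_localIdeal, mem_localIdeal, (translate p).surjective.exists]
  simp only [← map_mul, translate_mem_map_iff, eval_translate, zero_add]

end LocalIdeal

section Bezoutian

open Matrix

variable {σ k : Type*} [Fintype σ] [Field k]

lemma mul_prod_X_pow_notMem_span_X_pow {u : MvPolynomial σ k} (hu : eval 0 u ≠ 0) (N : ℕ) :
    u * ∏ i, X i ^ N ∉ Ideal.span (Set.range fun i => (X i : MvPolynomial σ k) ^ (N + 1)) := by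
  have hmon : ∏ i, (X i : MvPolynomial σ k) ^ N =
      monomial (Finsupp.equivFunOnFinite.symm fun _ => N) 1 := by
    simp [monomial_eq, Finsupp.prod_fintype]
  rw [eval_zero, constantCoeff_eq] at hu
  rw [← Set.image_univ, mem_span_X_pow_image_iff]
  intro h
  obtain ⟨i, -, hi⟩ := h (Finsupp.equivFunOnFinite.symm fun _ => N) (by
    simpa [hmon, coeff_mul_monomial'] using hu)
  simp at hi

variable [DecidableEq σ]

/- With `C A X = (u X_i ^ (N + 1))_i`, the determinant of `C A` is `u ^ n ∏ X_i ^ N` modulo the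
powers `X_i ^ (N + 1)`, so it is not in the ideal they generate locally at `0`; but
`det C` multiplies the ideal `(A X)` into that ideal by Cramer's rule. -/
lemma det_notMem_localIdeal_zero {A : Matrix σ σ (MvPolynomial σ k)} {N : ℕ}
    (hN : ∀ i, X i ^ (N + 1) ∈ localIdeal (Ideal.span (Set.range (A *ᵥ X))) 0) :
    A.det ∉ localIdeal (Ideal.span (Set.range (A *ᵥ X))) 0 := by
  rintro ⟨v, hv, hmem⟩
  obtain ⟨u, hu, hN⟩ := exists_forall_mul_mem_of_mem_localIdeal hN
  choose B hB using fun i => Ideal.mem_span_range_iff_exists_fun.1 (hN i)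
  have hB' (i : σ) : (of B *ᵥ (A *ᵥ X)) i = u * X i ^ (N + 1) := hB i
  have hdet := det_sub_prod_mem_span_X_pow (M := of B * A) (u := u) (N := N)
    (by simpa only [mulVec_mulVec] using hB')
  have hcramer := det_mul_mem_of_mem_span_mulVec
    (J := Ideal.span (Set.range fun i => (X i : MvPolynomial σ k) ^ (N + 1)))
    (fun i => by rw [hB']; exact Ideal.mul_mem_left _ _ (Ideal.subset_span ⟨i, rfl⟩)) hmem
  refine mul_prod_X_pow_notMem_span_X_pow (u := v * u ^ Fintype.card σ) (N := N) ?_ ?_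
  · rw [map_mul, map_pow]
    exact mul_ne_zero hv (pow_ne_zero _ hu)
  · convert Ideal.sub_mem _ hcramer (Ideal.mul_mem_left _ v hdet) using 1
    rw [det_mul]
    ring

/-- A theorem of Wiebe. -/
theorem det_notMem_localIdeal {p : σ → k} {A : Matrix σ σ (MvPolynomial σ k)}
    {I : Ideal (MvPolynomial σ k)}
    (hI : I = Ideal.span (Set.range (A *ᵥ fun j => X j - C (p j)))) {N : ℕ}
    (hN : ∀ i, (X i - C (p i)) ^ (N + 1) ∈ localIdeal I p) : A.det ∉ localIdeal I p := by
  have hX : translate p ∘ (fun j => X j - C (p j)) = X := by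
    ext1 j
    simp
  have hmap : I.map (translate p) = Ideal.span (Set.range (A.map (translate p) *ᵥ X)) := by
    rw [hI, Ideal.map_span, ← Set.range_comp, ← hX]
    congr 2
    ext1 i
    simp [mulVec, dotProduct]
  have hdet : translate p A.det = (A.map (translate p)).det := AlgEquiv.map_det _ _
  rw [← translate_mem_localIdeal_zero_iff, hmap, hdet]
  refine det_notMem_localIdeal_zero (N := N) fun i => ?_
  rw [← hmap, ← congrFun hX i, Function.comp, ← map_pow, translate_mem_localIdeal_zero_iff]
  exact hN i

end Bezoutian

section DividedDifferences

open Matrix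

variable {σ R : Type*} [CommRing R]

lemma exists_eq_single_add_of_degree_eq_succ {a : σ →₀ ℕ} {m : ℕ} (h : a.degree = m + 1) :
    ∃ i a', a = Finsupp.single i 1 + a' ∧ a'.degree = m := by
  classical
  obtain ⟨i, hi⟩ : ∃ i, a i ≠ 0 := by
    by_contra! h0
    simp [Finsupp.ext (g := 0) h0] at h
  have hle : Finsupp.single i 1 ≤ a := by
    simpa [Finsupp.single_le_iff] using Nat.one_le_iff_ne_zero.2 hi
  obtain ⟨a', rfl⟩ := exists_add_of_le hle
  refine ⟨i, a', rfl, ?_⟩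
  rw [map_add, Finsupp.degree_single] at h
  omega

variable [Fintype σ]

lemma exists_monomial_sub_eq_sum (m : σ →₀ ℕ) :
    ∃ b : σ → MvPolynomial σ (MvPolynomial σ R), (∀ j, (b j).totalDegree ≤ m.degree) ∧
      C (monomial m 1) - map C (monomial m (1 : R)) = ∑ j, b j * (C (X j) - X j) := by
  classical
  induction hm : m.degree generalizing m with
  | zero =>
    rw [Finsupp.degree_eq_zero_iff] at hm
    subst hm
    exact ⟨0, by simp, by simp⟩
  | succ e ih =>
    obtain ⟨i, m, rfl, he⟩ := exists_eq_single_add_of_degree_eq_succ hm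
    obtain ⟨b, hb, hsum⟩ := ih m he
    refine ⟨fun j => b j * X i + (if j = i then C (monomial m 1) else 0), fun j => ?_, ?_⟩
    · refine (totalDegree_add _ _).trans (max_le ?_ ?_)
      · have hX : (X i : MvPolynomial σ (MvPolynomial σ R)).totalDegree ≤ 1 :=
          (totalDegree_monomial_le _ _).trans (by simp)
        exact (totalDegree_mul _ _).trans (add_le_add (hb j) hX)
      · split_ifs <;> simp
    · have hmon : monomial (Finsupp.single i 1 + m) (1 : R) = X i * monomial m 1 := by
        rw [X, monomial_mul, one_mul]
      have leibniz : C (X i * monomial m 1) - map C (X i * monomial m (1 : R)) =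
          (C (monomial m 1) - map C (monomial m 1)) * X i + C (monomial m 1) * (C (X i) - X i) := by
        simp only [map_mul, map_X]
        ring
      rw [hmon, leibniz, hsum, Finset.sum_mul]
      simp only [add_mul, Finset.sum_add_distrib, ite_mul, zero_mul, Finset.sum_ite_eq',
        Finset.mem_univ, if_true, mul_right_comm]

/- Divided differences `G(x) - G(y) = ∑ b_j(x, y) (x_j - y_j)`: the variables of the coefficients
play the role of `x`, the outer variables that of `y`. -/
lemma exists_sub_eq_sum (G : MvPolynomial σ R) :
    ∃ b : σ → MvPolynomial σ (MvPolynomial σ R), (∀ j, (b j).totalDegree ≤ G.totalDegree) ∧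
      C G - map C G = ∑ j, b j * (C (X j) - X j) := by
  choose b hb hsum using exists_monomial_sub_eq_sum (σ := σ) (R := R)
  refine ⟨fun j => ∑ m ∈ G.support, C (C (coeff m G)) * b m j, fun j => ?_, ?_⟩
  · refine totalDegree_finsetSum_le fun m hm => (totalDegree_mul _ _).trans ?_
    rw [totalDegree_C, zero_add]
    exact (hb m j).trans (le_totalDegree hm)
  · calc C G - map C G = ∑ m ∈ G.support, C (C (coeff m G)) *
          (C (monomial m 1) - map C (monomial m 1)) := by
          conv_lhs => rw [G.as_sum]
          simp only [map_sum, ← Finset.sum_sub_distrib, mul_sub]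
          refine Finset.sum_congr rfl fun m _ => ?_
          rw [← C.map_mul, C_mul_monomial, mul_one, ← map_C, ← map_mul, C_mul_monomial, mul_one]
      _ = _ := by
        simp only [hsum, Finset.sum_mul, Finset.mul_sum, mul_assoc]
        exact Finset.sum_comm

lemma exists_bezoutian_matrix {ι : Type*} {G : ι → MvPolynomial σ R} {δ : ℕ}
    (hδ : ∀ i, (G i).totalDegree ≤ δ) :
    ∃ B : Matrix ι σ (MvPolynomial σ (MvPolynomial σ R)), (∀ i j, (B i j).totalDegree ≤ δ) ∧
      ∀ q, (∀ i, eval q (G i) = 0) → G = B.map (eval (C ∘ q)) *ᵥ fun j => X j - C (q j) := by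
  choose b hb hsum using fun i => exists_sub_eq_sum (G i)
  refine ⟨of b, fun i j => (hb i j).trans (hδ i), fun q hq => funext fun i => ?_⟩
  have hcomp : (eval (C ∘ q)).comp (map C) = (C : R →+* MvPolynomial σ R).comp (eval q) := by
    refine MvPolynomial.ringHom_ext ?_ ?_ <;> simp
  have heval : eval (C ∘ q) (map C (G i)) = C (eval q (G i)) := congr($hcomp (G i))
  have := congr(eval (C ∘ q) $(hsum i))
  rw [map_sub, heval, hq i, map_zero, sub_zero] at this
  simpa [mulVec, dotProduct] using this

end DividedDifferences

section Separator

open Matrix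

variable {σ k : Type*} [Field k]

lemma exists_eval_eq_linearMap_eval {A : Type*} [CommRing A] [Algebra k A] (φ : A →ₗ[k] k)
    (F : MvPolynomial σ A) : ∃ f : MvPolynomial σ k, f.totalDegree ≤ F.totalDegree ∧
      ∀ q, eval q f = φ (eval (algebraMap k A ∘ q) F) := by
  refine ⟨∑ m ∈ F.support, monomial m (φ (coeff m F)), ?_, fun q => ?_⟩
  · exact totalDegree_finsetSum_le fun m hm =>
      (totalDegree_monomial_le _ _).trans (le_totalDegree hm)
  · have heval : eval (algebraMap k A ∘ q) F =
        ∑ m ∈ F.support, (m.prod fun i e => q i ^ e) • coeff m F := by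
      rw [eval_eq]
      refine Finset.sum_congr rfl fun m _ => ?_
      rw [Algebra.smul_def, mul_comm]
      simp [Finsupp.prod]
    simp [heval, eval_monomial, mul_comm]

variable [Fintype σ]

/- The Bezoutian determinant, specialised at a common zero `q`, lies in the ideal `(G)` locally at
`p` when `q ≠ p`, and does not when `q = p`; a linear functional tells the two cases apart. -/
theorem exists_separator_of_isolated_zero {G : σ → MvPolynomial σ k} {δ : ℕ}
    (hδ : ∀ i, (G i).totalDegree ≤ δ) {p : σ → k} (hp : ∀ i, eval p (G i) = 0) {N : ℕ}
    (hN : ∀ i, (X i - C (p i)) ^ (N + 1) ∈ localIdeal (Ideal.span (Set.range G)) p) :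
    ∃ f : MvPolynomial σ k, f.totalDegree ≤ Fintype.card σ * δ ∧ eval p f ≠ 0 ∧
      ∀ q, (∀ i, eval q (G i) = 0) → q ≠ p → eval q f = 0 := by
  classical
  obtain ⟨B, hB, hG⟩ := exists_bezoutian_matrix hδ
  set I := Ideal.span (Set.range G)
  have hdet (q : σ → k) : eval (C ∘ q) B.det = (B.map (eval (C ∘ q))).det := RingHom.map_det _ _
  have hp_notMem : eval (C ∘ p) B.det ∉ (localIdeal I p).restrictScalars k := by
    rw [hdet]
    exact det_notMem_localIdeal (congrArg (fun G' => Ideal.span (Set.range G')) (hG p hp)) hN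
  have hq_mem (q : σ → k) (hq : ∀ i, eval q (G i) = 0) (hqp : q ≠ p) :
      eval (C ∘ q) B.det ∈ localIdeal I p := by
    rw [hdet]
    refine mem_localIdeal_of_mul_mem hqp (det_mul_mem_of_mulVec_mem fun i => ?_)
    rw [← hG q hq]
    exact Ideal.subset_span ⟨i, rfl⟩
  obtain ⟨φ, hφp, hφ⟩ := Submodule.exists_le_ker_of_notMem hp_notMem
  obtain ⟨f, hf, heval⟩ := exists_eval_eq_linearMap_eval φ B.det
  refine ⟨f, hf.trans (totalDegree_det_le hB), ?_, fun q hq hqp => ?_⟩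
  · rw [heval]
    exact hφp
  · rw [heval]
    exact hφ (hq_mem q hq hqp)

end Separator

lemma exists_eval_ne_zero {σ k : Type*} [CommRing k] [IsDomain k] [Infinite k]
    {f : MvPolynomial σ k} (hf : f ≠ 0) : ∃ a, eval a f ≠ 0 := by
  by_contra! h
  exact hf (MvPolynomial.funext fun a => by rw [h, map_zero])

section AffineForms

variable {ι k B : Type*} [CommRing k] [CommRing B] [Algebra k B]

/-- The space of inhomogeneous linear forms in the elements `y i` of a `k`-algebra. Its `m`-th
power consists of the values at `y` of the polynomials of degree at most `m`, see
`affineForms_pow`. -/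
def affineForms (k : Type*) {ι B : Type*} [CommRing k] [CommRing B] [Algebra k B] (y : ι → B) :
    Submodule k B :=
  Submodule.span k (insert 1 (Set.range y))

lemma one_mem_affineForms (y : ι → B) : (1 : B) ∈ affineForms k y :=
  Submodule.subset_span (Set.mem_insert _ _)

lemma apply_mem_affineForms (y : ι → B) (i : ι) : y i ∈ affineForms k y :=
  Submodule.subset_span (Set.mem_insert_of_mem _ ⟨i, rfl⟩)

lemma affineForms_le {y : ι → B} {S : Submodule k B} :
    affineForms k y ≤ S ↔ 1 ∈ S ∧ ∀ i, y i ∈ S := by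
  rw [affineForms, Submodule.span_le, Set.insert_subset_iff, Set.range_subset_iff]
  rfl

lemma affineForms_pow_mono (y : ι → B) : Monotone (affineForms k y ^ ·) :=
  fun _ _ h => pow_le_pow_right' (Submodule.one_le.2 (one_mem_affineForms y)) h

lemma map_affineForms {C : Type*} [CommRing C] [Algebra k C] (f : B →ₐ[k] C) (y : ι → B) :
    (affineForms k y).map f.toLinearMap = affineForms k (f ∘ y) := by
  rw [affineForms, affineForms, Submodule.map_span, Set.image_insert_eq, ← Set.range_comp]
  simp

lemma finsuppProd_mem_affineForms_pow (y : ι → B) (a : ι →₀ ℕ) :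
    (a.prod fun i e => y i ^ e) ∈ affineForms k y ^ a.degree := by
  induction a using Finsupp.induction with
  | zero => simpa using ⟨1, map_one _⟩
  | single_add i b f _ _ ih =>
    rw [Finsupp.prod_add_index' (by simp) (fun _ _ _ => pow_add _ _ _), map_add, pow_add,
      Finsupp.degree_single, Finsupp.prod_single_index (by simp)]
    exact Submodule.mul_mem_mul (Submodule.pow_mem_pow _ (apply_mem_affineForms y i) _) ih

lemma aeval_mem_affineForms_pow (y : ι → B) {m : ℕ} {f : MvPolynomial ι k}
    (h : f.totalDegree ≤ m) : aeval y f ∈ affineForms k y ^ m := by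
  rw [f.as_sum, map_sum]
  refine Submodule.sum_mem _ fun a ha => ?_
  rw [aeval_monomial, ← Algebra.smul_def]
  exact Submodule.smul_mem _ _ (affineForms_pow_mono y ((le_totalDegree ha).trans h)
    (finsuppProd_mem_affineForms_pow y a))

lemma affineForms_X_pow (m : ℕ) :
    affineForms k (X : ι → MvPolynomial ι k) ^ m = restrictTotalDegree ι k m := by
  apply le_antisymm
  · induction m with
    | zero =>
      rw [pow_zero, Submodule.one_le]
      simp [mem_restrictTotalDegree]
    | succ m ih =>
      have h1 : affineForms k (X : ι → MvPolynomial ι k) ≤ restrictTotalDegree ι k 1 := by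
        refine affineForms_le.2 ⟨by simp [mem_restrictTotalDegree], fun i => ?_⟩
        rw [mem_restrictTotalDegree]
        exact (totalDegree_monomial_le _ _).trans (by simp)
      refine Submodule.mul_le.2 fun f hf g hg => ?_
      have hf := (mem_restrictTotalDegree _ _ _).1 (ih hf)
      have hg := (mem_restrictTotalDegree _ _ _).1 (h1 hg)
      exact (mem_restrictTotalDegree _ _ _).2 ((totalDegree_mul _ _).trans (add_le_add hf hg))
  · intro f hf
    rw [← aeval_X_left_apply f]
    exact aeval_mem_affineForms_pow X ((mem_restrictTotalDegree _ _ _).1 hf)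

lemma affineForms_pow (y : ι → B) (m : ℕ) :
    affineForms k y ^ m =
      (restrictTotalDegree ι k m).map (aeval y : MvPolynomial ι k →ₐ[k] B).toLinearMap := by
  rw [← affineForms_X_pow, Submodule.map_pow, map_affineForms]
  congr 3
  ext1 i
  simp

lemma mem_affineForms_pow {y : ι → B} {m : ℕ} {b : B} :
    b ∈ affineForms k y ^ m ↔ ∃ f : MvPolynomial ι k, f.totalDegree ≤ m ∧ aeval y f = b := by
  simp [affineForms_pow, mem_restrictTotalDegree]

instance finite_affineForms [Finite ι] (y : ι → B) : Module.Finite k (affineForms k y) :=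
  Module.Finite.span_of_finite k ((Set.finite_range y).insert 1)

end AffineForms

section LinearReduction

variable {ι ι' k B : Type*} [CommRing k] [CommRing B] [Algebra k B]

/-- The elements `y i` form a linear reduction of the space `U`: together with `1` they lie in
`U`, and multiplication by `affineForms k y` maps some power of `U` onto the next one. -/
def IsLinearReduction (U : Submodule k B) (y : ι → B) : Prop :=
  affineForms k y ≤ U ∧ ∃ M, U ^ (M + 1) ≤ affineForms k y * U ^ M

lemma isLinearReduction_affineForms (y : ι → B) : IsLinearReduction (affineForms k y) y :=
  ⟨le_rfl, 0, by simp⟩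

lemma pow_add_le_pow_mul_pow {M : Type*} [CommMonoid M] [Preorder M] [MulLeftMono M] {x u : M}
    {e : ℕ} (h : u ^ (e + 1) ≤ x * u ^ e) (m : ℕ) : u ^ (m + e) ≤ x ^ m * u ^ e := by
  induction m with
  | zero => simp
  | succ m ih =>
    calc u ^ (m + 1 + e) = u * u ^ (m + e) := by rw [← pow_succ', add_right_comm]
      _ ≤ u * (x ^ m * u ^ e) := mul_le_mul_right ih u
      _ = x ^ m * u ^ (e + 1) := by rw [pow_succ, mul_left_comm, mul_comm u]
      _ ≤ x ^ m * (x * u ^ e) := mul_le_mul_right h _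
      _ = x ^ (m + 1) * u ^ e := by rw [pow_succ, mul_assoc]

namespace IsLinearReduction

variable {U : Submodule k B} {y : ι → B} {y' : ι' → B}

lemma one_mem (h : IsLinearReduction U y) : 1 ∈ U := h.1 (one_mem_affineForms y)

lemma apply_mem (h : IsLinearReduction U y) (i : ι) : y i ∈ U := h.1 (apply_mem_affineForms y i)

lemma exists_pow_le (h : IsLinearReduction U y) :
    ∃ M, ∀ m, U ^ m ≤ affineForms k y ^ m * U ^ M := by
  obtain ⟨M, hM⟩ := h.2
  exact ⟨M, fun m => (pow_le_pow_right' (Submodule.one_le.2 h.one_mem) (m.le_add_right M)).trans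
    (pow_add_le_pow_mul_pow hM m)⟩

lemma trans (h : IsLinearReduction U y) (h' : IsLinearReduction (affineForms k y) y') :
    IsLinearReduction U y' := by
  obtain ⟨M, hM⟩ := h.2
  obtain ⟨e, he⟩ := h'.2
  refine ⟨h'.1.trans h.1, e + M, ?_⟩
  calc U ^ (e + M + 1) = U ^ (e + 1 + M) := by rw [add_right_comm]
    _ ≤ affineForms k y ^ (e + 1) * U ^ M := pow_add_le_pow_mul_pow hM _
    _ ≤ affineForms k y' * affineForms k y ^ e * U ^ M := mul_le_mul_left he _
    _ ≤ affineForms k y' * U ^ e * U ^ M :=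
      mul_le_mul_left (mul_le_mul_right (pow_le_pow_left' h.1 e) _) _
    _ = affineForms k y' * U ^ (e + M) := by rw [mul_assoc, pow_add]

lemma map {C : Type*} [CommRing C] [Algebra k C] (h : IsLinearReduction U y) (f : B →ₐ[k] C) :
    IsLinearReduction (U.map f.toLinearMap) (f ∘ y) := by
  obtain ⟨hU, M, hM⟩ := h
  refine ⟨?_, M, ?_⟩ <;> rw [← map_affineForms]
  · exact Submodule.map_mono hU
  · rw [← Submodule.map_pow, ← Submodule.map_pow, ← Submodule.map_mul]
    exact Submodule.map_mono hM

end IsLinearReduction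

end LinearReduction

section Noether

variable {ι k B : Type*} [CommRing B]

lemma aeval_monomial_sub_smul_pow_mem [CommRing k] [Algebra k B] {y : ι → B} {w : B} {c : ι → k}
    {S : Submodule k B} (hw : w ∈ affineForms k y) (h : ∀ j, y j - c j • w ∈ S) {m : ℕ}
    {a : ι →₀ ℕ} (ha : a.degree = m + 1) :
    aeval y (monomial a (1 : k)) - eval c (monomial a 1) • w ^ (m + 1) ∈
      S * affineForms k y ^ m := by
  have hX (i : ι) (a' : ι →₀ ℕ) :
      monomial (Finsupp.single i 1 + a') (1 : k) = X i * monomial a' 1 := by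
    rw [X, monomial_mul, one_mul]
  induction m generalizing a with
  | zero =>
    obtain ⟨i, a', rfl, ha'⟩ := exists_eq_single_add_of_degree_eq_succ ha
    obtain rfl := (Finsupp.degree_eq_zero_iff _).1 ha'
    rw [hX]
    simpa using h i
  | succ m ih =>
    obtain ⟨i, a', rfl, ha'⟩ := exists_eq_single_add_of_degree_eq_succ ha
    have hfirst : (y i - c i • w) * aeval y (monomial a' (1 : k)) ∈
        S * affineForms k y ^ (m + 1) := Submodule.mul_mem_mul (h i)
      (aeval_mem_affineForms_pow y ((totalDegree_monomial_le _ _).trans ha'.le))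
    have hrest : (aeval y (monomial a' (1 : k)) - eval c (monomial a' 1) • w ^ (m + 1)) *
        (c i • w) ∈ S * affineForms k y ^ (m + 1) := by
      rw [pow_succ, ← mul_assoc]
      exact Submodule.mul_mem_mul (ih ha') (Submodule.smul_mem _ _ hw)
    convert add_mem hfirst hrest using 1
    simp only [hX, map_mul, aeval_X, eval_X, Algebra.smul_def]
    ring

lemma aeval_sub_smul_pow_mem [CommRing k] [Algebra k B] {y : ι → B} {w : B} {c : ι → k}
    {S : Submodule k B} (hw : w ∈ affineForms k y) (h : ∀ j, y j - c j • w ∈ S) (h1 : 1 ∈ S)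
    {m : ℕ} {F : MvPolynomial ι k} (hF : F.totalDegree ≤ m + 1) :
    aeval y F - eval c (homogeneousComponent (m + 1) F) • w ^ (m + 1) ∈
      S * affineForms k y ^ m := by
  have hsum : aeval y F - eval c (homogeneousComponent (m + 1) F) • w ^ (m + 1) =
      ∑ a ∈ F.support, coeff a F • (aeval y (monomial a (1 : k)) -
        eval c (homogeneousComponent (m + 1) (monomial a 1)) • w ^ (m + 1)) := by
    have hmon (a : ι →₀ ℕ) : monomial a (coeff a F) = coeff a F • monomial a (1 : k) := by
      rw [smul_monomial, smul_eq_mul, mul_one]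
    conv_lhs => rw [F.as_sum]
    simp only [map_sum, Finset.sum_smul, hmon, map_smul, smul_eval, mul_smul, smul_sub,
      Finset.sum_sub_distrib]
  rw [hsum]
  refine Submodule.sum_mem _ fun a ha => Submodule.smul_mem _ _ ?_
  rcases ((le_totalDegree ha).trans hF).lt_or_eq with hlt | heq
  · have hmem : aeval y (monomial a (1 : k)) ∈ affineForms k y ^ m := aeval_mem_affineForms_pow y
      ((totalDegree_monomial_le _ _).trans (Nat.lt_succ_iff.1 hlt))
    rw [homogeneousComponent_eq_zero _ _ ((totalDegree_monomial_le _ _).trans_lt hlt)]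
    simpa using Submodule.mul_mem_mul h1 hmem
  · rw [homogeneousComponent_of_mem (isHomogeneous_monomial (1 : k) heq), if_pos rfl]
    exact aeval_monomial_sub_smul_pow_mem hw h heq

lemma homogeneousComponent_totalDegree_ne_zero [CommSemiring k] {F : MvPolynomial ι k}
    (hF : F ≠ 0) : homogeneousComponent F.totalDegree F ≠ 0 := by
  obtain ⟨a, ha, hdeg : F.totalDegree = a.degree⟩ :=
    Finset.exists_mem_eq_sup F.support (support_nonempty.2 hF) fun s => s.degree
  intro h0
  have := congr(coeff a $h0)
  rw [coeff_homogeneousComponent, if_pos hdeg.symm, coeff_zero] at this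
  exact mem_support_iff.1 ha this

lemma exists_aeval_eq_zero_of_not_algebraicIndependent [Field k] [Nontrivial B] [Algebra k B]
    {y : ι → B} (hy : ¬ AlgebraicIndependent k y) :
    ∃ (F : MvPolynomial ι k) (e : ℕ), aeval y F = 0 ∧ F.totalDegree = e + 1 ∧
      homogeneousComponent (e + 1) F ≠ 0 := by
  rw [algebraicIndependent_iff] at hy
  push Not at hy
  obtain ⟨F, hF0, hF⟩ := hy
  obtain ⟨e, he⟩ : ∃ e, F.totalDegree = e + 1 := by
    refine Nat.exists_eq_succ_of_ne_zero fun h => hF ?_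
    rw [totalDegree_eq_zero_iff_eq_C] at h
    rw [h, aeval_C] at hF0
    rw [h, (map_eq_zero_iff _ (FaithfulSMul.algebraMap_injective k B)).1 hF0, map_zero]
  exact ⟨F, e, hF0, he, he ▸ homogeneousComponent_totalDegree_ne_zero hF⟩

variable [Field k] [Infinite k] [Algebra k B] [Nontrivial B]

/- If the leading form of a relation `F(y) = 0` does not vanish at `c`, the lines parallel to `c`
meet the hypersurface `F = 0` properly, and one projects along `c`. -/
lemma exists_isLinearReduction_of_not_algebraicIndependent {l : ℕ} {y : Fin (l + 1) → B}
    (hy : ¬ AlgebraicIndependent k y) :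
    ∃ y' : Fin l → B, IsLinearReduction (affineForms k y) y' := by
  obtain ⟨F, e, hF0, he, hlead⟩ := exists_aeval_eq_zero_of_not_algebraicIndependent hy
  obtain ⟨c, hc⟩ := exists_eval_ne_zero (mul_ne_zero hlead (X_ne_zero (Fin.last l)))
  rw [map_mul, eval_X] at hc
  obtain ⟨hFc, hcl⟩ := mul_ne_zero_iff.1 hc
  let w : B := (c (Fin.last l))⁻¹ • y (Fin.last l)
  let y' : Fin l → B := fun j => y j.castSucc - c j.castSucc • w
  have hw : w ∈ affineForms k y := Submodule.smul_mem _ _ (apply_mem_affineForms _ _)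
  have hmem (j : Fin (l + 1)) : y j - c j • w ∈ affineForms k y' := by
    induction j using Fin.lastCases with
    | last => simp [w, smul_smul, hcl]
    | cast j => exact apply_mem_affineForms y' j
  have hw_pow : w ^ (e + 1) ∈ affineForms k y' * affineForms k y ^ e := by
    have := aeval_sub_smul_pow_mem hw hmem (one_mem_affineForms y') he.le
    rwa [hF0, zero_sub, neg_mem_iff, Submodule.smul_mem_iff _ hFc] at this
  refine ⟨y', affineForms_le.2 ⟨one_mem_affineForms y, fun j =>
    sub_mem (apply_mem_affineForms _ _) (Submodule.smul_mem _ _ hw)⟩, e, fun b hb => ?_⟩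
  obtain ⟨g, hg, rfl⟩ := mem_affineForms_pow.1 hb
  simpa using add_mem (aeval_sub_smul_pow_mem hw hmem (one_mem_affineForms y') hg)
    (Submodule.smul_mem _ (eval c (homogeneousComponent (e + 1) g)) hw_pow)

/-- Noether normalization by linear forms. -/
theorem IsLinearReduction.exists_algebraicIndependent {U : Submodule k B} {l : ℕ} {y : Fin l → B}
    (hy : IsLinearReduction U y) :
    ∃ l' ≤ l, ∃ y' : Fin l' → B, IsLinearReduction U y' ∧ AlgebraicIndependent k y' ∧
      (l' = l → AlgebraicIndependent k y) := by
  induction l with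
  | zero =>
    have h0 : AlgebraicIndependent k y := algebraicIndependent_empty_type_iff.2
      (FaithfulSMul.algebraMap_injective k B)
    exact ⟨0, le_rfl, y, hy, h0, fun _ => h0⟩
  | succ l ih =>
    by_cases hi : AlgebraicIndependent k y
    · exact ⟨l + 1, le_rfl, y, hy, hi, fun _ => hi⟩
    · obtain ⟨y₁, h₁⟩ := exists_isLinearReduction_of_not_algebraicIndependent hi
      obtain ⟨l', hl', y', hy', hind, -⟩ := ih (hy.trans h₁)
      exact ⟨l', by omega, y', hy', hind, fun h => by omega⟩

end Noether

section RationalCoordinates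

lemma mem_pow_of_mul_mem_pow {A : Type*} [CommRing A] {P : Ideal A} [hP : P.IsMaximal] {h c : A}
    (hh : h ∉ P) {N : ℕ} (hc : h * c ∈ P ^ N) : c ∈ P ^ N := by
  rcases eq_or_ne N 0 with rfl | hN
  · simp
  have hrad : (P ^ N).radical = P := by rw [Ideal.radical_pow P hN, hP.isPrime.radical]
  have hprim : (P ^ N).IsPrimary := Ideal.isPrimary_of_isMaximal_radical (by rwa [hrad])
  rw [mul_comm] at hc
  exact ((Ideal.isPrimary_iff.1 hprim).2 hc).resolve_right fun hrad' => hh (hrad ▸ hrad')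

/-- Coordinates on a module `B` over `A` with respect to linearly independent vectors `vec i`,
the coordinates of `b` being those of `den • b`, for a fixed common denominator `den`. -/
structure RationalCoordinates (ι A B : Type*) [Fintype ι] [CommRing A] [AddCommGroup B]
    [Module A B] where
  vec : ι → B
  den : A
  coord : B →ₗ[A] ι → A
  linearIndependent : LinearIndependent A vec
  den_ne_zero : den ≠ 0
  den_smul : ∀ b, den • b = ∑ i, coord b i • vec i

lemma exists_ne_zero_forall_smul_mem_span {A B : Type*} [CommRing A] [IsDomain A]
    [AddCommGroup B] [Module A B] [Module.Finite A B] {e : Fin (Module.finrank A B) → B}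
    (he : LinearIndependent A e) : ∃ h : A, h ≠ 0 ∧ ∀ b, h • b ∈ Submodule.span A (range e) := by
  set N := Submodule.span A (range e)
  have hrank : Module.finrank A (B ⧸ N) = 0 := by
    have := Submodule.finrank_quotient_add_finrank N
    have hN : Module.finrank A N = Module.finrank A B := by simpa using finrank_span_eq_card he
    lia
  obtain ⟨h, hann, hh⟩ :=
    Submodule.annihilator_top_inter_nonZeroDivisors (Module.finrank_eq_zero_iff_isTorsion.1 hrank)
  refine ⟨h, nonZeroDivisors.ne_zero hh, fun b => ?_⟩
  rw [← Submodule.Quotient.mk_eq_zero, Submodule.Quotient.mk_smul]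
  exact (Submodule.mem_annihilator.1 hann) _ trivial

lemma nonempty_rationalCoordinates (A B : Type*) [CommRing A] [IsDomain A] [AddCommGroup B]
    [Module A B] [Module.Finite A B] :
    Nonempty (RationalCoordinates (Fin (Module.finrank A B)) A B) := by
  obtain ⟨e, he⟩ := exists_linearIndependent_of_le_finrank (le_refl (Module.finrank A B))
  obtain ⟨h, h0, hh⟩ := exists_ne_zero_forall_smul_mem_span he
  refine ⟨⟨e, h, Finsupp.lcoeFun ∘ₗ he.repr ∘ₗ
    LinearMap.codRestrict _ (LinearMap.lsmul A B h) hh, he, h0, fun b => ?_⟩⟩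
  have := he.linearCombination_repr ⟨h • b, hh b⟩
  rw [Finsupp.linearCombination_apply, Finsupp.sum_fintype _ _ (by simp)] at this
  exact this.symm

namespace RationalCoordinates

variable {ι A B : Type*} [Fintype ι] [CommRing A] [CommRing B] [Algebra A B]
  (K : RationalCoordinates ι A B)

lemma den_sq_smul_coord_mul (f g : B) :
    K.den ^ 2 • K.coord (f * g) =
      ∑ i, ∑ j, (K.coord f i * K.coord g j) • K.coord (K.vec i * K.vec j) := by
  apply K.linearIndependent.fintypeLinearCombination_injective
  have hcoord (b : B) : Fintype.linearCombination A K.vec (K.coord b) = K.den • b :=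
    (K.den_smul b).symm
  simp only [map_smul, map_sum, hcoord]
  calc K.den ^ 2 • K.den • (f * g) = K.den • ((K.den • f) * (K.den • g)) := by
        rw [smul_mul_smul_comm, smul_smul, smul_smul]; ring_nf
    _ = ∑ i, ∑ j, (K.coord f i * K.coord g j) • K.den • (K.vec i * K.vec j) := by
        simp only [K.den_smul f, K.den_smul g, Finset.sum_mul_sum, Finset.smul_sum,
          smul_mul_smul_comm, smul_comm K.den]

variable {P : Ideal A} [P.IsMaximal]

lemma coord_mul_mem_pow (hP : K.den ∉ P) {f g : B} {N N' : ℕ} (hf : ∀ i, K.coord f i ∈ P ^ N)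
    (hg : ∀ i, K.coord g i ∈ P ^ N') (i : ι) : K.coord (f * g) i ∈ P ^ (N + N') := by
  have h := congrFun (K.den_sq_smul_coord_mul f g) i
  refine mem_pow_of_mul_mem_pow hP (mem_pow_of_mul_mem_pow hP ?_)
  rw [← mul_assoc, ← sq, ← smul_eq_mul, ← Pi.smul_apply, h]
  simp only [Finset.sum_apply, Pi.smul_apply, smul_eq_mul]
  refine Ideal.sum_mem _ fun j _ => Ideal.sum_mem _ fun j' _ => Ideal.mul_mem_right _ _ ?_
  rw [pow_add]
  exact Ideal.mul_mem_mul (hf j) (hg j')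

lemma coord_pow_succ_mem_pow (hP : K.den ∉ P) {f : B} {N : ℕ} (hf : ∀ i, K.coord f i ∈ P ^ N)
    (q : ℕ) (i : ι) : K.coord (f ^ (q + 1)) i ∈ P ^ (N * (q + 1)) := by
  induction q generalizing i with
  | zero => simpa using hf i
  | succ q ih =>
    rw [pow_succ, Nat.mul_succ]
    exact K.coord_mul_mem_pow hP ih hf i

end RationalCoordinates

end RationalCoordinates

section FiniteOverPolynomials

lemma exists_totalDegree_le_of_fg {ι k V : Type*} [CommSemiring k] [AddCommMonoid V] [Module k V]
    {W : Submodule k V} (hW : W.FG) (L : V →ₗ[k] MvPolynomial ι k) :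
    ∃ c, ∀ w ∈ W, (L w).totalDegree ≤ c := by
  obtain ⟨t, rfl⟩ := hW
  refine ⟨t.sup fun b => (L b).totalDegree, fun w hw => ?_⟩
  suffices Submodule.span k t ≤ (restrictTotalDegree ι k _).comap L from
    (mem_restrictTotalDegree ..).1 (this hw)
  refine Submodule.span_le.2 fun b hb => (mem_restrictTotalDegree ..).2 ?_
  exact Finset.le_sup (f := fun b => (L b).totalDegree) hb

variable {ι k B : Type*} [Field k] [CommRing B] [Algebra k B]
  [Algebra (MvPolynomial ι k) B] [IsScalarTower k (MvPolynomial ι k) B]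

/-- The images of the variables in an algebra over a polynomial ring. -/
def algebraMapX (ι k B : Type*) [CommSemiring k] [CommSemiring B] [Algebra (MvPolynomial ι k) B] :
    ι → B :=
  fun i => algebraMap (MvPolynomial ι k) B (X i)

lemma aeval_algebraMapX (f : MvPolynomial ι k) :
    aeval (algebraMapX ι k B) f = algebraMap _ B f := by
  have : aeval (algebraMapX ι k B) = IsScalarTower.toAlgHom k (MvPolynomial ι k) B :=
    MvPolynomial.algHom_ext fun i => by simp [algebraMapX]
  simp [this]

lemma mem_affineForms_algebraMapX_pow {m : ℕ} {b : B} :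
    b ∈ affineForms k (algebraMapX ι k B) ^ m ↔
      ∃ f : MvPolynomial ι k, f.totalDegree ≤ m ∧ algebraMap _ B f = b := by
  simp [mem_affineForms_pow, aeval_algebraMapX]

namespace IsLinearReduction

variable {U : Submodule k B} [FiniteDimensional k U]

lemma module_finite (h : IsLinearReduction U (algebraMapX ι k B)) (hU : ∀ b : B, ∃ m, b ∈ U ^ m) :
    Module.Finite (MvPolynomial ι k) B := by
  obtain ⟨M, hM⟩ := h.exists_pow_le
  obtain ⟨t, ht⟩ := Submodule.FG.pow ((Submodule.fg_iff_finiteDimensional U).2 inferInstance) M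
  refine ⟨t, (Submodule.eq_top_iff').2 fun b => ?_⟩
  obtain ⟨m, hm⟩ := hU b
  replace hm := hM m hm
  induction hm using Submodule.mul_induction_on' with
  | mem_mul_mem a ha u hu =>
    obtain ⟨g, -, rfl⟩ := mem_affineForms_algebraMapX_pow.1 ha
    rw [← Algebra.smul_def]
    exact Submodule.smul_mem _ _ (Submodule.span_le_restrictScalars k _ _ (ht ▸ hu))
  | add x _ y _ hx hy => exact add_mem hx hy

lemma exists_totalDegree_le_add {σ : Type*} [Finite σ]
    (h : IsLinearReduction U (algebraMapX ι k B))
    (κ : B →ₗ[MvPolynomial ι k] σ → MvPolynomial ι k) :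
    ∃ c, ∀ m, ∀ f ∈ U ^ m, ∀ j, (κ f j).totalDegree ≤ m + c := by
  obtain ⟨M, hM⟩ := h.exists_pow_le
  obtain ⟨c, hc⟩ : ∃ c, ∀ u ∈ U ^ M, ∀ j, (κ u j).totalDegree ≤ c := by
    have hfg := Submodule.FG.pow ((Submodule.fg_iff_finiteDimensional U).2 inferInstance) M
    choose c hc using fun j => exists_totalDegree_le_of_fg hfg
      (LinearMap.proj j ∘ₗ κ.restrictScalars k : B →ₗ[k] MvPolynomial ι k)
    obtain ⟨C, hC⟩ := (Set.finite_range c).bddAbove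
    exact ⟨C, fun u hu j => (hc j u hu).trans (hC ⟨j, rfl⟩)⟩
  refine ⟨c, fun m f hf j => ?_⟩
  replace hf := hM m hf
  induction hf using Submodule.mul_induction_on' with
  | mem_mul_mem a ha u hu =>
    obtain ⟨g, hg, rfl⟩ := mem_affineForms_algebraMapX_pow.1 ha
    rw [← Algebra.smul_def, map_smul, Pi.smul_apply, smul_eq_mul]
    exact (totalDegree_mul _ _).trans (add_le_add hg (hc u hu j))
  | add x _ y _ hx hy =>
    rw [map_add, Pi.add_apply]
    exact (totalDegree_add _ _).trans (max_le hx hy)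

lemma eq_zero_of_coord_mem_pow {σ : Type*} [Fintype σ] [IsDomain B]
    [FaithfulSMul (MvPolynomial ι k) B] (h : IsLinearReduction U (algebraMapX ι k B))
    (K : RationalCoordinates σ (MvPolynomial ι k) B) {a : ι → k} (ha : eval a K.den ≠ 0) {m : ℕ}
    {f : B} (hf : f ∈ U ^ m) (hcoord : ∀ j, K.coord f j ∈ RingHom.ker (eval a) ^ (m + 1)) :
    f = 0 := by
  have : (RingHom.ker (eval a)).IsMaximal :=
    RingHom.ker_isMaximal_of_surjective _ fun x => ⟨C x, eval_C x⟩
  obtain ⟨c, hc⟩ := h.exists_totalDegree_le_add K.coord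
  have hpow : f ^ (c + 1) ∈ U ^ (m * (c + 1)) := by
    rw [pow_mul]
    exact Submodule.pow_mem_pow _ hf _
  -- The order of vanishing `(m + 1) * (c + 1)` exceeds the degree bound `m * (c + 1) + c`.
  have hzero (j) : K.coord (f ^ (c + 1)) j = 0 := by
    have hord := K.coord_pow_succ_mem_pow ha hcoord c j
    rw [← translate_mem_pow_idealOfVars_iff, mem_pow_idealOfVars_iff'] at hord
    apply (translate a).injective
    rw [map_zero]
    ext x
    by_cases hx : x.degree < (m + 1) * (c + 1)
    · exact hord x hx
    · refine coeff_eq_zero_of_totalDegree_lt (lt_of_lt_of_le ?_ (not_lt.1 hx))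
      have := (totalDegree_translate_le a _).trans (hc _ _ hpow j)
      lia
  have hden := K.den_smul (f ^ (c + 1))
  simp only [hzero, zero_smul, Finset.sum_const_zero] at hden
  rw [Algebra.smul_def, mul_eq_zero] at hden
  refine eq_zero_of_pow_eq_zero (hden.resolve_left fun h0 => K.den_ne_zero ?_)
  exact (map_eq_zero_iff _ (FaithfulSMul.algebraMap_injective _ B)).1 h0

/-- Taylor coefficients at a general point of degree at most `m` of the coordinates of an element
of `U ^ m` determine that element. -/
theorem finrank_pow_le [Infinite k] [IsDomain B] [Fintype ι]
    [Module.Finite (MvPolynomial ι k) B] [FaithfulSMul (MvPolynomial ι k) B]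
    (h : IsLinearReduction U (algebraMapX ι k B)) (m : ℕ) :
    Module.finrank k ↥(U ^ m) ≤
      Module.finrank (MvPolynomial ι k) B * (m + 1) ^ Fintype.card ι := by
  classical
  obtain ⟨K⟩ := nonempty_rationalCoordinates (MvPolynomial ι k) B
  obtain ⟨a, ha⟩ := exists_eval_ne_zero K.den_ne_zero
  let Φ : ↥(U ^ m) →ₗ[k] Fin (Module.finrank (MvPolynomial ι k) B) × (ι → Fin (m + 1)) → k :=
    LinearMap.pi fun p => lcoeff k (Finsupp.equivFunOnFinite.symm fun i => (p.2 i : ℕ)) ∘ₗ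
      (translate a).toLinearMap ∘ₗ LinearMap.proj p.1 ∘ₗ K.coord.restrictScalars k ∘ₗ
        (U ^ m).subtype
  suffices hΦ : Function.Injective Φ by simpa using LinearMap.finrank_le_finrank_of_injective hΦ
  refine (injective_iff_map_eq_zero Φ).2 fun ⟨f, hf⟩ h0 => Subtype.ext ?_
  refine h.eq_zero_of_coord_mem_pow K ha hf fun j => ?_
  rw [← translate_mem_pow_idealOfVars_iff, mem_pow_idealOfVars_iff']
  intro x hx
  have := congrFun h0 (j, fun i => ⟨x i, (Finsupp.le_degree i x).trans_lt hx⟩)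
  simpa [Φ] using this

end IsLinearReduction

end FiniteOverPolynomials

section PointsOfIntegralExtensions

open scoped nonZeroDivisors

lemma nonempty_algHom_of_isIntegral (R B Ω : Type*) [CommRing R] [CommRing B] [Field Ω]
    [IsAlgClosed Ω] [Algebra R B] [FaithfulSMul R B] [Algebra.IsIntegral R B] [Algebra R Ω] :
    Nonempty (B →ₐ[R] Ω) := by
  obtain ⟨p, hp⟩ : ∃ p : Ideal R, p = RingHom.ker (algebraMap R Ω) := ⟨_, rfl⟩
  have hp' : p.IsPrime := hp ▸ RingHom.ker_isPrime _
  obtain ⟨Q, hQ, hQp⟩ := Ideal.nonempty_primesOver (S := B) p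
  let f : R ⧸ p →+* Ω := Ideal.Quotient.lift p (algebraMap R Ω) fun a ha => by rwa [hp] at ha
  let : Algebra (R ⧸ p) Ω := f.toAlgebra
  have hf : Function.Injective f :=
    RingHom.lift_injective_of_ker_le_ideal _ _ hp.ge
  have : FaithfulSMul (R ⧸ p) Ω :=
    (faithfulSMul_iff_algebraMap_injective _ _).2 hf
  have : FaithfulSMul (R ⧸ p) (B ⧸ Q) := inferInstance
  have : Module.IsTorsionFree (R ⧸ p) (B ⧸ Q) := FaithfulSMul.to_isTorsionFree _ _
  have : Module.IsTorsionFree (R ⧸ p) Ω := FaithfulSMul.to_isTorsionFree _ _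
  let ψ : (B ⧸ Q) →ₐ[R ⧸ p] Ω := IsAlgClosed.lift
  exact ⟨{ toRingHom := ψ.toRingHom.comp (Ideal.Quotient.mk Q)
           commutes' := fun r => ψ.commutes (Ideal.Quotient.mk p r) }⟩

lemma exists_algHom_apply_eq_of_aeval_minpoly_eq_zero {A B Ω : Type*} [CommRing A] [IsDomain A]
    [IsIntegrallyClosed A] [CommRing B] [IsDomain B] [Field Ω] [IsAlgClosed Ω] [Algebra A B]
    [FaithfulSMul A B] [Algebra.IsIntegral A B] [Algebra A Ω] {θ : B} {r : Ω}
    (hr : Polynomial.aeval r (minpoly A θ) = 0) : ∃ ψ : B →ₐ[A] Ω, ψ θ = r := by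
  have hθ : IsIntegral A θ := Algebra.IsIntegral.isIntegral θ
  let f : Algebra.adjoin A {θ} →ₐ[A] Ω :=
    (AdjoinRoot.liftAlgHom (minpoly A θ) (Algebra.ofId A Ω) r hr).comp
      (minpoly.equivAdjoin hθ).symm
  let : Algebra (Algebra.adjoin A {θ}) Ω := f.toAlgebra
  have : IsScalarTower A (Algebra.adjoin A {θ}) Ω := .of_algHom f
  have : Algebra.IsIntegral (Algebra.adjoin A {θ}) B := .tower_top A
  obtain ⟨ψ⟩ := nonempty_algHom_of_isIntegral (Algebra.adjoin A {θ}) B Ω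
  refine ⟨ψ.restrictScalars A, (ψ.commutes ⟨θ, Algebra.self_mem_adjoin_singleton A θ⟩).trans ?_⟩
  have hroot : (minpoly.equivAdjoin hθ).symm ⟨θ, Algebra.self_mem_adjoin_singleton A θ⟩ =
      AdjoinRoot.root _ := by
    rw [AlgEquiv.symm_apply_eq]
    ext
    simp
  change AdjoinRoot.liftAlgHom _ _ r hr ((minpoly.equivAdjoin hθ).symm _) = r
  rw [hroot]
  exact AdjoinRoot.lift_root hr

lemma exists_forall_separable_map {A : Type*} (K : Type*) [CommRing A] [IsDomain A] [Field K]
    [Algebra A K] [IsFractionRing A K] {f : Polynomial A} (hf : f.Monic)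
    (hsep : (f.map (algebraMap A K)).Separable) :
    ∃ h : A, h ≠ 0 ∧ ∀ {Ω : Type*} [Field Ω] (φ : A →+* Ω), φ h ≠ 0 → (f.map φ).Separable := by
  rcases eq_or_ne f.natDegree 0 with h0 | h0
  · obtain rfl := Polynomial.eq_one_of_monic_natDegree_zero hf h0
    exact ⟨1, one_ne_zero, fun φ _ => by simp⟩
  obtain ⟨u, v, -, -, huv⟩ := Polynomial.exists_mul_add_mul_eq_C_resultant f f.derivative le_rfl
    le_rfl (Or.inl h0)
  set h := f.resultant f.derivative with hdef
  refine ⟨h, fun hres => ?_, fun φ hφ => ?_⟩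
  · rw [Polynomial.Separable, Polynomial.derivative_map,
      ← Polynomial.isUnit_resultant_iff_isCoprime (hf.map _),
      Polynomial.natDegree_map_eq_of_injective (IsFractionRing.injective A K),
      Polynomial.natDegree_map_eq_of_injective (IsFractionRing.injective A K),
      Polynomial.resultant_map_map, ← hdef, hres, map_zero] at hsep
    exact not_isUnit_zero hsep
  · have huv' := congrArg (Polynomial.map φ) huv
    simp only [Polynomial.map_add, Polynomial.map_mul, Polynomial.map_C,
      ← Polynomial.derivative_map] at huv'
    have hinv := congrArg Polynomial.C (inv_mul_cancel₀ hφ)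
    rw [map_mul, map_one] at hinv
    refine ⟨Polynomial.C (φ h)⁻¹ * u.map φ, Polynomial.C (φ h)⁻¹ * v.map φ, ?_⟩
    linear_combination Polynomial.C (φ h)⁻¹ * huv' + hinv

lemma exists_natDegree_minpoly_eq_finrank (A B : Type*) [CommRing A] [IsDomain A]
    [IsIntegrallyClosed A] [CharZero A] [CommRing B] [IsDomain B] [Algebra A B] [FaithfulSMul A B]
    [Module.Finite A B] :
    ∃ θ : B, (minpoly A θ).natDegree = Module.finrank A B := by
  let K := FractionRing A
  let E := FractionRing B
  let : Algebra K E := FractionRing.liftAlgebra A E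
  have : IsScalarTower A K E := FractionRing.isScalarTower_liftAlgebra A E
  have : CharZero K := charZero_of_injective_algebraMap (IsFractionRing.injective A K)
  have : FiniteDimensional K E := Module.Finite.of_isLocalization A B A⁰
  obtain ⟨α, hα⟩ := Field.exists_primitive_element K E
  obtain ⟨⟨θ, s⟩, hs⟩ := IsLocalizedModule.surj A⁰ (IsScalarTower.toAlgHom A B E).toLinearMap α
  have hαθ : α = (algebraMap A K s)⁻¹ • algebraMap B E θ := by
    rw [eq_inv_smul_iff₀ (IsFractionRing.to_map_ne_zero_of_mem_nonZeroDivisors s.2),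
      algebraMap_smul]
    exact hs
  have hθ : IntermediateField.adjoin K {algebraMap B E θ} = ⊤ := by
    rw [eq_top_iff, ← hα, IntermediateField.adjoin_le_iff, Set.singleton_subset_iff, hαθ]
    exact IntermediateField.smul_mem _ (IntermediateField.mem_adjoin_simple_self K _)
  have hθ_int : IsIntegral A θ := Algebra.IsIntegral.isIntegral θ
  refine ⟨θ, ?_⟩
  rw [← IsFractionRing.finrank_eq A K B E, ← (minpoly.monic hθ_int).natDegree_map (algebraMap A K),
    ← minpoly.isIntegrallyClosed_eq_field_fractions K E hθ_int]
  exact (Field.primitive_element_iff_minpoly_natDegree_eq K _).1 hθ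

theorem exists_forall_card_algHom_eq_finrank (A B : Type*) [CommRing A] [IsDomain A]
    [IsIntegrallyClosed A] [CharZero A] [CommRing B] [IsDomain B] [Algebra A B] [FaithfulSMul A B]
    [Module.Finite A B] :
    ∃ h : A, h ≠ 0 ∧ ∀ {Ω : Type*} [Field Ω] [IsAlgClosed Ω] [Algebra A Ω],
      algebraMap A Ω h ≠ 0 → ∃ S : Finset (B →ₐ[A] Ω), S.card = Module.finrank A B := by
  classical
  obtain ⟨θ, hθ⟩ := exists_natDegree_minpoly_eq_finrank A B
  have hθ_int : IsIntegral A θ := Algebra.IsIntegral.isIntegral θ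
  have : CharZero (FractionRing A) :=
    charZero_of_injective_algebraMap (IsFractionRing.injective A (FractionRing A))
  let : Algebra (FractionRing A) (FractionRing B) := FractionRing.liftAlgebra A _
  have : IsScalarTower A (FractionRing A) (FractionRing B) :=
    FractionRing.isScalarTower_liftAlgebra A _
  have hsep : ((minpoly A θ).map (algebraMap A (FractionRing A))).Separable := by
    rw [← minpoly.isIntegrallyClosed_eq_field_fractions (FractionRing A) (FractionRing B) hθ_int]
    exact (minpoly.irreducible (hθ_int.algebraMap.tower_top)).separable
  obtain ⟨h, h0, hh⟩ := exists_forall_separable_map (FractionRing A) (minpoly.monic hθ_int) hsep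
  refine ⟨h, h0, fun {Ω} _ _ _ hΩ => ?_⟩
  set μ := (minpoly A θ).map (algebraMap A Ω)
  have hcard : μ.roots.toFinset.card = Module.finrank A B := by
    rw [Multiset.toFinset_card_of_nodup (Polynomial.nodup_roots (hh _ hΩ)),
      ← (IsAlgClosed.splits μ).natDegree_eq_card_roots, (minpoly.monic hθ_int).natDegree_map, hθ]
  have hroot : ∀ r ∈ μ.roots.toFinset, ∃ ψ : B →ₐ[A] Ω, ψ θ = r := fun r hr => by
    rw [Multiset.mem_toFinset, Polynomial.mem_roots', Polynomial.IsRoot.def,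
      Polynomial.eval_map_algebraMap] at hr
    exact exists_algHom_apply_eq_of_aeval_minpoly_eq_zero hr.2
  have : Nonempty (B →ₐ[A] Ω) := nonempty_algHom_of_isIntegral A B Ω
  choose! ψ hψ using hroot
  refine ⟨μ.roots.toFinset.image ψ, ?_⟩
  rw [Finset.card_image_of_injOn fun r hr r' hr' h => ?_, hcard]
  rw [← hψ r hr, ← hψ r' hr', h]

variable (ι k B : Type*) [Field k] [CharZero k] [CommRing B] [IsDomain B]
  [Algebra (MvPolynomial ι k) B] [FaithfulSMul (MvPolynomial ι k) B]
  [Module.Finite (MvPolynomial ι k) B]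

theorem exists_fiber_card_eq_finrank [IsAlgClosed k] [Algebra k B]
    [IsScalarTower k (MvPolynomial ι k) B] :
    ∃ (a : ι → k) (S : Finset (B →ₐ[k] k)), S.card = Module.finrank (MvPolynomial ι k) B ∧
      ∀ ψ ∈ S, ∀ i, ψ (algebraMapX ι k B i) = a i := by
  classical
  have : CharZero (MvPolynomial ι k) :=
    charZero_of_injective_algebraMap (MvPolynomial.C_injective ι k)
  obtain ⟨h, h0, hh⟩ := exists_forall_card_algHom_eq_finrank (MvPolynomial ι k) B
  obtain ⟨a, ha⟩ := exists_eval_ne_zero h0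
  let : Algebra (MvPolynomial ι k) k := (eval a).toAlgebra
  have : IsScalarTower k (MvPolynomial ι k) k :=
    .of_algebraMap_eq fun c => (eval_C (f := a) c).symm
  obtain ⟨S, hS⟩ := hh (Ω := k) ha
  refine ⟨a, S.image (AlgHom.restrictScalars k), ?_, fun ψ hψ i => ?_⟩
  · rw [Finset.card_image_of_injective _ (AlgHom.restrictScalars_injective k), hS]
  · obtain ⟨ψ', -, rfl⟩ := Finset.mem_image.1 hψ
    exact (ψ'.commutes (X i)).trans (eval_X i)

theorem exists_injective_algHom_card_eq_finrank (Ω : Type*) [Field Ω] [IsAlgClosed Ω]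
    [Algebra (MvPolynomial ι k) Ω] [FaithfulSMul (MvPolynomial ι k) Ω] :
    ∃ S : Finset (B →ₐ[MvPolynomial ι k] Ω), S.card = Module.finrank (MvPolynomial ι k) B ∧
      ∀ σ ∈ S, Function.Injective σ := by
  have : CharZero (MvPolynomial ι k) :=
    charZero_of_injective_algebraMap (MvPolynomial.C_injective ι k)
  obtain ⟨h, h0, hh⟩ := exists_forall_card_algHom_eq_finrank (MvPolynomial ι k) B
  obtain ⟨S, hS⟩ := hh (Ω := Ω) fun h' =>
    h0 (FaithfulSMul.algebraMap_injective (MvPolynomial ι k) Ω (h'.trans (map_zero _).symm))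
  refine ⟨S, hS, fun σ _ => (RingHom.injective_iff_ker_eq_bot σ.toRingHom).2 ?_⟩
  have : (RingHom.ker σ.toRingHom).IsPrime := RingHom.ker_isPrime _
  refine Ideal.eq_bot_of_comap_eq_bot (R := MvPolynomial ι k) ?_
  refine (RingHom.comap_ker _ _).trans ?_
  rw [show σ.toRingHom.comp (algebraMap _ B) = algebraMap _ Ω from σ.comp_algebraMap]
  exact (RingHom.injective_iff_ker_eq_bot _).1 (FaithfulSMul.algebraMap_injective _ _)

end PointsOfIntegralExtensions

section Counting

variable {ι σ k B : Type*} [Field k] [CommRing B] [Algebra k B] [Fintype ι] [Fintype σ]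

lemma card_mul_pow_le_finrank_pow {U : Submodule k B} [FiniteDimensional k U] {z : σ → B}
    (hz : affineForms k z ≤ U) {M : ℕ} {f : ι → B} (hf : ∀ i, f i ∈ U ^ M)
    (hind : ∀ q : ι → MvPolynomial σ k, ∑ i, f i * aeval z (q i) = 0 → q = 0) (m : ℕ) :
    Fintype.card ι * (m + 1) ^ Fintype.card σ ≤
      Module.finrank k ↥(U ^ (M + Fintype.card σ * m)) := by
  classical
  let e : (σ → Fin (m + 1)) → σ →₀ ℕ := fun β => Finsupp.equivFunOnFinite.symm fun j => β j
  have he : Function.Injective e := fun β γ h =>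
    funext fun j => Fin.ext (DFunLike.congr_fun h j)
  let F : ι × (σ → Fin (m + 1)) → B := fun p => f p.1 * aeval z (monomial (e p.2) (1 : k))
  have hF (p) : F p ∈ U ^ (M + Fintype.card σ * m) := by
    rw [pow_add]
    refine Submodule.mul_mem_mul (hf _) (pow_le_pow_left' hz _ ?_)
    refine aeval_mem_affineForms_pow z ((totalDegree_monomial_le _ _).trans ?_)
    rw [Finsupp.sum_fintype _ _ fun _ => rfl]
    exact Finset.sum_le_card_nsmul _ _ _ fun j _ => Nat.lt_succ_iff.1 (p.2 j).2
  have hli : LinearIndependent k F := by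
    rw [Fintype.linearIndependent_iff]
    rintro g hg ⟨i, β⟩
    have hq := hind (fun i => ∑ β, monomial (e β) (g (i, β))) <| by
      rw [← hg, Fintype.sum_prod_type]
      refine Finset.sum_congr rfl fun i _ => ?_
      rw [map_sum, Finset.mul_sum]
      refine Finset.sum_congr rfl fun β _ => ?_
      rw [← mul_smul_comm, ← map_smul, smul_monomial, smul_eq_mul, mul_one]
    simpa [coeff_sum, coeff_monomial, he.eq_iff] using congrArg (coeff (e β)) (congrFun hq i)
  have : FiniteDimensional k ↥(U ^ (M + Fintype.card σ * m)) :=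
    Module.Finite.iff_fg.2 ((Module.Finite.iff_fg.1 ‹_›).pow _)
  let F' : ι × (σ → Fin (m + 1)) → ↥(U ^ (M + Fintype.card σ * m)) := fun p => ⟨F p, hF p⟩
  have hli' : LinearIndependent k F' := .of_comp (Submodule.subtype _) hli
  simpa using hli'.fintype_card_le_finrank

end Counting

section RestrictionToLines

variable {ι σ k B : Type*} [Field k] [CommRing B] [Algebra k B]

/-- Restriction of a polynomial function to the line through the origin in the direction `c`. -/
def restrictLine (c : σ → k) : MvPolynomial σ k →ₐ[k] Polynomial k :=
  aeval fun t => Polynomial.C (c t) * Polynomial.X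

lemma eval_one_restrictLine (c : σ → k) (f : MvPolynomial σ k) :
    (restrictLine c f).eval 1 = eval c f := by
  refine DFunLike.congr_fun (f := (Polynomial.aeval (1 : k)).comp (restrictLine c)) (g := aeval c)
    (algHom_ext fun t => ?_) f
  simp [restrictLine]

lemma aeval_sub_aeval_restrictLine_mem {Q : Ideal B} {z : σ → B} {c : σ → k} {Y : B}
    (h : ∀ t, z t - c t • Y ∈ Q) (f : MvPolynomial σ k) :
    aeval z f - Polynomial.aeval Y (restrictLine c f) ∈ Q := by
  rw [← Ideal.Quotient.eq_zero_iff_mem, map_sub, sub_eq_zero]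
  refine DFunLike.congr_fun (f := (Ideal.Quotient.mkₐ k Q).comp (aeval z))
    (g := (Ideal.Quotient.mkₐ k Q).comp ((Polynomial.aeval Y).comp (restrictLine c)))
    (algHom_ext fun t => ?_) f
  simpa [restrictLine, Algebra.smul_def] using Ideal.Quotient.eq.2 (h t)

lemma exists_eq_X_pow_mul_of_ne_zero [Finite ι] {P : ι → Polynomial k} (hP : ∃ i, P i ≠ 0) :
    ∃ (e : ℕ) (R : ι → Polynomial k), (∀ i, P i = Polynomial.X ^ e * R i) ∧
      ∃ i, (R i).eval 0 ≠ 0 := by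
  obtain ⟨i, hi, hmin⟩ := Set.exists_min_image {i | P i ≠ 0}
    (fun i => (P i).natTrailingDegree) (toFinite _) hP
  have hdvd (j) : Polynomial.X ^ (P i).natTrailingDegree ∣ P j := by
    rcases eq_or_ne (P j) 0 with hj | hj
    · simp [hj]
    · exact Polynomial.X_pow_dvd_iff.2 fun t ht =>
        Polynomial.coeff_eq_zero_of_lt_natTrailingDegree (ht.trans_le (hmin j hj))
  choose R hR using hdvd
  refine ⟨_, R, hR, i, ?_⟩
  have hcoeff : (P i).trailingCoeff = (R i).coeff 0 :=
    (congrArg (Polynomial.coeff · (P i).natTrailingDegree) (hR i)).trans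
      (by simpa using Polynomial.coeff_X_pow_mul (R i) (P i).natTrailingDegree 0)
  rw [← Polynomial.coeff_zero_eq_eval_zero, ← hcoeff]
  exact Polynomial.trailingCoeff_nonzero_iff_nonzero.2 hi

/- The curve `z_t = c_t Y` through the point `p` is cut out by one equation less than there are
coordinates `z`, so by Krull's height theorem it is not reduced to `p`. -/
lemma exists_prime_le_notMem_of_card_le_height [IsNoetherianRing B] [Fintype σ] {z : σ → B}
    {p : Ideal B} (hp : p ∈ (Ideal.span (range z)).minimalPrimes)
    (hht : (Fintype.card σ : ℕ∞) ≤ p.height) {c : σ → k} {j : σ} (hcj : c j ≠ 0) :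
    ∃ Q ≤ p, Q.IsPrime ∧ (c j)⁻¹ • z j ∉ Q ∧ ∀ t, z t - c t • (c j)⁻¹ • z j ∈ Q := by
  classical
  have hpp : p.IsPrime := hp.1.1
  have hzp (t) : z t ∈ p := hp.1.2 (Ideal.subset_span ⟨t, rfl⟩)
  set Y : B := (c j)⁻¹ • z j
  have hYp : Y ∈ p := Submodule.smul_of_tower_mem p _ (hzp j)
  let G : Finset B := (Finset.univ.erase j).image fun t => z t - c t • Y
  have hGp : Ideal.span (G : Set B) ≤ p := by
    rw [Ideal.span_le, Finset.coe_image, image_subset_iff]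
    exact fun t _ => sub_mem (hzp t) (Submodule.smul_of_tower_mem p _ hYp)
  obtain ⟨Q, hQ, hQp⟩ := Ideal.exists_minimalPrimes_le hGp
  have hzQ (t) : z t - c t • Y ∈ Q := by
    rcases eq_or_ne t j with rfl | ht
    · simp [Y, smul_inv_smul₀ hcj]
    · exact hQ.1.2 (Ideal.subset_span (Finset.mem_image.2 ⟨t, by simp [ht], rfl⟩))
  refine ⟨Q, hQp, hQ.1.1, fun hYQ => ?_, hzQ⟩
  have hspan : Ideal.span (range z) ≤ Q := by
    rw [Ideal.span_le]
    rintro _ ⟨t, rfl⟩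
    simpa using add_mem (hzQ t) (Submodule.smul_of_tower_mem Q (c t) hYQ)
  obtain rfl : Q = p := hQp.antisymm (hp.2 ⟨hQ.1.1, hspan⟩ hQp)
  have hcard : Fintype.card σ ≤ G.card := by
    exact_mod_cast hht.trans (Ideal.height_le_card_of_mem_minimalPrimes_span_finset hQ)
  have : G.card < Fintype.card σ :=
    Finset.card_image_le.trans_lt (Finset.card_erase_lt_of_mem (Finset.mem_univ j))
  lia

/- Functions separating isolated points of the fibre `z = 0` are independent over `k[z]`: restrict
a relation to a curve over a general line through the origin, divide it by the largest possible
power of the parameter, and evaluate at a point of the fibre. -/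
theorem eq_zero_of_sum_mul_aeval_eq_zero [Infinite k] [IsNoetherianRing B] [Fintype ι]
    [DecidableEq ι] [Fintype σ] {ψ : ι → B →ₐ[k] k} {z : σ → B}
    (hmin : ∀ i, RingHom.ker (ψ i) ∈ (Ideal.span (range z)).minimalPrimes)
    (hht : ∀ i, (Fintype.card σ : ℕ∞) ≤ (RingHom.ker (ψ i)).height)
    {f : ι → B} (hf : ∀ i j, ψ j (f i) = if i = j then 1 else 0)
    {q : ι → MvPolynomial σ k} (hq : ∑ i, f i * aeval z (q i) = 0) : q = 0 := by
  have hz (i t) : ψ i (z t) = 0 := (hmin i).1.2 (Ideal.subset_span ⟨t, rfl⟩)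
  have hψ (i) (g : ι → B) : ψ i (∑ j, f j * g j) = ψ i (g i) := by simp [hf]
  funext i₀
  by_contra hi₀
  rcases isEmpty_or_nonempty σ with hσ | ⟨⟨j⟩⟩
  · have h0 := hψ i₀ fun i => aeval z (q i)
    rw [hq, map_zero] at h0
    obtain ⟨a, ha⟩ := C_surjective σ (q i₀)
    rw [← ha, aeval_C, AlgHom.commutes] at h0
    exact hi₀ (by rw [← ha, show a = 0 from h0.symm, map_zero, Pi.zero_apply])
  obtain ⟨c, hc⟩ := exists_eval_ne_zero (mul_ne_zero hi₀ (X_ne_zero j))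
  rw [map_mul, eval_X, mul_ne_zero_iff] at hc
  obtain ⟨e, R, hR, i, hRi⟩ := exists_eq_X_pow_mul_of_ne_zero
    (P := fun i => restrictLine c (q i)) ⟨i₀, fun h => hc.1 <| by
      rw [← eval_one_restrictLine, h, Polynomial.eval_zero]⟩
  obtain ⟨Q, hQ, hQprime, hYQ, hzQ⟩ :=
    exists_prime_le_notMem_of_card_le_height (hmin i) (hht i) hc.2
  set Y : B := (c j)⁻¹ • z j
  have hsum : Y ^ e * ∑ i, f i * Polynomial.aeval Y (R i) ∈ Q := by
    have h := Ideal.sum_mem Q (t := Finset.univ) fun i _ =>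
      Ideal.mul_mem_left Q (f i) (aeval_sub_aeval_restrictLine_mem hzQ (q i))
    simp only [mul_sub, Finset.sum_sub_distrib, hq, zero_sub, neg_mem_iff, hR, map_mul, map_pow,
      Polynomial.aeval_X] at h
    simpa only [Finset.mul_sum, mul_left_comm (Y ^ e)] using h
  have hmem := hQ ((hQprime.mem_or_mem hsum).resolve_left fun h => hYQ (hQprime.mem_of_pow_mem _ h))
  rw [RingHom.mem_ker, hψ, ← Polynomial.aeval_algHom_apply, map_smul, hz, smul_zero,
    Polynomial.coe_aeval_eq_eval] at hmem
  exact hRi hmem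

end RestrictionToLines

section Heights

lemma ringKrullDim_mvPolynomial_field {ι k : Type*} [Field k] [Finite ι] :
    ringKrullDim (MvPolynomial ι k) = (Nat.card ι : ℕ∞) := by
  rw [MvPolynomial.ringKrullDim_of_isNoetherianRing, ringKrullDim_eq_zero_of_field, zero_add]
  rfl

variable {ι k B : Type*} [Field k] [IsAlgClosed k] [CommRing B] [Algebra k B]
  [Algebra (MvPolynomial ι k) B] [IsScalarTower k (MvPolynomial ι k) B]
  [FaithfulSMul (MvPolynomial ι k) B]

lemma exists_algHom_apply_algebraMapX_eq [Algebra.IsIntegral (MvPolynomial ι k) B]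
    (a : ι → k) : ∃ ψ : B →ₐ[k] k, ∀ i, ψ (algebraMapX ι k B i) = a i := by
  let : Algebra (MvPolynomial ι k) k := (eval a).toAlgebra
  have : IsScalarTower k (MvPolynomial ι k) k :=
    .of_algebraMap_eq fun c => (eval_C (f := a) c).symm
  obtain ⟨ψ⟩ := nonempty_algHom_of_isIntegral (MvPolynomial ι k) B k
  exact ⟨ψ.restrictScalars k, fun i => (ψ.commutes (X i)).trans (eval_X i)⟩

variable [Finite ι]

lemma height_ker_eval (a : ι → k) : (RingHom.ker (eval a)).height = Nat.card ι := by
  have : FiniteRingKrullDim (MvPolynomial ι k) := by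
    rw [finiteRingKrullDim_iff_ne_bot_and_top, ringKrullDim_mvPolynomial_field]
    exact ⟨WithBot.coe_ne_bot, fun h => ENat.natCast_ne_top _ (WithBot.coe_inj.1 h)⟩
  obtain ⟨p, hp, hh⟩ := Ideal.exists_isMaximal_height (R := MvPolynomial ι k)
  rw [ringKrullDim_mvPolynomial_field, WithBot.coe_inj] at hh
  obtain ⟨b, rfl⟩ := (isMaximal_iff_eq_vanishingIdeal_singleton (K := k)).1 hp
  rw [← hh, ← RingEquiv.height_comap (translate (b - a)).toRingEquiv (RingHom.ker _)]
  congr 1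
  ext f
  rw [Ideal.mem_comap, mem_vanishingIdeal_singleton_iff, RingHom.mem_ker]
  change eval a (translate (b - a) f) = 0 ↔ eval b f = 0
  rw [eval_translate, add_sub_cancel]

variable [IsDomain B] [Module.Finite (MvPolynomial ι k) B]

lemma card_le_height_ker (ψ : B →ₐ[k] k) : (Nat.card ι : ℕ∞) ≤ (RingHom.ker ψ).height := by
  have : IsNoetherianRing B := .of_finite (MvPolynomial ι k) B
  let p : Ideal (MvPolynomial ι k) := RingHom.ker (eval fun i => ψ (algebraMapX ι k B i))
  have : p.IsPrime := RingHom.ker_isPrime _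
  have : (RingHom.ker ψ).IsPrime := RingHom.ker_isPrime ψ.toRingHom
  have : (RingHom.ker ψ).LiesOver p := ⟨by
    ext f
    rw [Ideal.under_def, Ideal.mem_comap, RingHom.mem_ker, RingHom.mem_ker, ← aeval_algebraMapX,
      ← coe_aeval_eq_eval, ← AlgHom.comp_apply, comp_aeval]
    rfl⟩
  rw [Ideal.height_eq_height_add_of_liesOver_of_hasGoingDown p, height_ker_eval]
  exact le_self_add

lemma ringKrullDim_eq_card_of_finite (ι k B : Type*) [Finite ι] [Field k] [IsAlgClosed k]
    [CommRing B] [IsDomain B] [Algebra k B] [Algebra (MvPolynomial ι k) B]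
    [IsScalarTower k (MvPolynomial ι k) B] [FaithfulSMul (MvPolynomial ι k) B]
    [Module.Finite (MvPolynomial ι k) B] : ringKrullDim B = (Nat.card ι : ℕ∞) := by
  apply le_antisymm
  · rw [← ringKrullDim_mvPolynomial_field (k := k) (ι := ι)]
    exact Order.krullDim_le_of_strictMono (PrimeSpectrum.comap (algebraMap (MvPolynomial ι k) B))
      fun p q hpq => Ideal.IsIntegral.comap_lt_comap (I := p.asIdeal) (J := q.asIdeal) hpq
  · obtain ⟨ψ, -⟩ := exists_algHom_apply_algebraMapX_eq (k := k) (B := B) (ι := ι) 0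
    have : (RingHom.ker ψ).IsPrime := RingHom.ker_isPrime ψ.toRingHom
    exact (WithBot.coe_le_coe.2 (card_le_height_ker ψ)).trans
      (Ideal.height_le_ringKrullDim_of_isPrime (I := RingHom.ker ψ))

end Heights

section Fibres

variable {ι k B : Type*} [Field k] [CommRing B] [Algebra k B]

lemma isMaximal_ker_algHom (ψ : B →ₐ[k] k) : (RingHom.ker ψ).IsMaximal :=
  RingHom.ker_isMaximal_of_surjective ψ.toRingHom fun c => ⟨algebraMap k B c, ψ.commutes c⟩

lemma ker_algHom_injective :
    Function.Injective fun ψ : B →ₐ[k] k => RingHom.ker ψ := by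
  intro ψ φ h
  refine AlgHom.ext fun b => ?_
  have hb : b - algebraMap k B (ψ b) ∈ RingHom.ker ψ := by simp [RingHom.mem_ker]
  replace hb : b - algebraMap k B (ψ b) ∈ RingHom.ker φ := h.le hb
  rw [RingHom.mem_ker, map_sub, φ.commutes, sub_eq_zero] at hb
  exact hb.symm

lemma exists_ker_algHom_eq [IsAlgClosed k] [Algebra.FiniteType k B] (m : Ideal B)
    [hm : m.IsMaximal] : ∃ ψ : B →ₐ[k] k, RingHom.ker ψ = m := by
  let := Ideal.Quotient.field m
  have : Module.Finite k (B ⧸ m) := finite_of_finite_type_of_isJacobsonRing k (B ⧸ m)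
  let e : k ≃ₐ[k] B ⧸ m :=
    .ofBijective (Algebra.ofId k _) IsAlgClosed.algebraMap_bijective_of_isIntegral
  refine ⟨(e.symm : (B ⧸ m) →ₐ[k] k).comp (Ideal.Quotient.mkₐ k m), Ideal.ext fun b => ?_⟩
  simp [RingHom.mem_ker, Ideal.Quotient.eq_zero_iff_mem]

/- A prime containing `z` is the intersection of the maximal ideals above it. All of these are
kernels of points of the finite fibre, so the prime is one of them. -/
lemma ker_mem_minimalPrimes_of_finite [IsAlgClosed k] [Algebra.FiniteType k B] {z : ι → B}
    (hfin : {ψ : B →ₐ[k] k | ∀ j, ψ (z j) = 0}.Finite) {ψ : B →ₐ[k] k} (hψ : ∀ j, ψ (z j) = 0) :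
    RingHom.ker ψ ∈ (Ideal.span (range z)).minimalPrimes := by
  classical
  have : IsJacobsonRing B := isJacobsonRing_of_finiteType (A := k)
  have hspan : Ideal.span (range z) ≤ RingHom.ker ψ := by
    rw [Ideal.span_le, range_subset_iff]
    exact hψ
  refine ⟨⟨RingHom.ker_isPrime ψ.toRingHom, hspan⟩, fun Q ⟨hQ, hzQ⟩ hQψ => ?_⟩
  let S := hfin.toFinset.filter fun φ => Q ≤ RingHom.ker φ
  have hinf : S.inf (fun φ => RingHom.ker φ) ≤ Q := by
    conv_rhs => rw [← IsJacobsonRing.out ‹_› hQ.isRadical, Ideal.jacobson]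
    refine le_sInf fun J ⟨hQJ, hJ⟩ => ?_
    obtain ⟨φ, rfl⟩ := exists_ker_algHom_eq (k := k) J
    have hφ : φ ∈ hfin.toFinset :=
      hfin.mem_toFinset.2 fun j => hQJ (hzQ (Ideal.subset_span ⟨j, rfl⟩))
    exact Finset.inf_le (Finset.mem_filter.2 ⟨hφ, hQJ⟩)
  obtain ⟨φ, hφ, hφQ⟩ := hQ.inf_le'.1 hinf
  obtain rfl : Q = RingHom.ker φ := (Finset.mem_filter.1 hφ).2.antisymm hφQ
  exact ((isMaximal_ker_algHom φ).eq_of_le (RingHom.ker_ne_top ψ.toRingHom) hQψ).ge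

lemma exists_algHom_apply_eq_ite [Finite ι] [DecidableEq ι] {ψ : ι → B →ₐ[k] k}
    (hψ : Function.Injective ψ) : ∃ f : ι → B, ∀ i j, ψ j (f i) = if i = j then 1 else 0 := by
  have hcop : Pairwise (Function.onFun IsCoprime fun j => RingHom.ker (ψ j)) := by
    intro i j hij
    have := isMaximal_ker_algHom (ψ i)
    have := isMaximal_ker_algHom (ψ j)
    exact Ideal.isCoprime_of_isMaximal fun h => hij (hψ (ker_algHom_injective h))
  choose f hf using fun i =>
    Ideal.exists_forall_sub_mem_ideal hcop fun j => if i = j then (1 : B) else 0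
  refine ⟨f, fun i j => ?_⟩
  have hij := hf i j
  rw [RingHom.mem_ker, map_sub, sub_eq_zero] at hij
  rw [hij]
  split_ifs <;> simp

variable [Algebra (MvPolynomial ι k) B] [IsScalarTower k (MvPolynomial ι k) B]
  [Module.Finite (MvPolynomial ι k) B]

lemma finite_setOf_apply_algebraMapX_eq (a : ι → k) :
    {ψ : B →ₐ[k] k | ∀ i, ψ (algebraMapX ι k B i) = a i}.Finite := by
  let : Algebra (MvPolynomial ι k) k := (eval a).toAlgebra
  have : IsScalarTower k (MvPolynomial ι k) k :=
    .of_algebraMap_eq fun c => (eval_C (f := a) c).symm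
  refine (finite_range (AlgHom.restrictScalars k : (B →ₐ[MvPolynomial ι k] k) → _)).subset
    fun ψ hψ => ⟨{ ψ with commutes' := fun f => ?_ }, AlgHom.ext fun _ => rfl⟩
  change ψ (algebraMap _ B f) = eval a f
  rw [← aeval_algebraMapX, ← AlgHom.comp_apply, comp_aeval, funext hψ, aeval_eq_eval]

lemma ncard_fibre_le [Fintype ι] [IsAlgClosed k] [IsDomain B] [FaithfulSMul (MvPolynomial ι k) B]
    {U : Submodule k B} [FiniteDimensional k U] (h : IsLinearReduction U (algebraMapX ι k B))
    (hU : ∀ b, ∃ m, b ∈ U ^ m) {z : ι → B} (hz : ∀ j, z j ∈ U)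
    (hfin : {ψ : B →ₐ[k] k | ∀ j, ψ (z j) = 0}.Finite) :
    {ψ : B →ₐ[k] k | ∀ j, ψ (z j) = 0}.ncard ≤
      (Fintype.card ι + 1) ^ Fintype.card ι * Module.finrank (MvPolynomial ι k) B := by
  classical
  set l := Fintype.card ι
  set D := Module.finrank (MvPolynomial ι k) B
  have : IsNoetherianRing B := .of_finite (MvPolynomial ι k) B
  have : Algebra.FiniteType k B := .trans (S := MvPolynomial ι k) inferInstance inferInstance
  have : Infinite k := IsAlgClosed.instInfinite
  let F := {ψ : B →ₐ[k] k | ∀ j, ψ (z j) = 0}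
  have : Fintype F := hfin.fintype
  obtain ⟨f, hf⟩ := exists_algHom_apply_eq_ite (ψ := ((↑) : F → B →ₐ[k] k)) Subtype.val_injective
  have hz' : affineForms k z ≤ U := affineForms_le.2 ⟨h.one_mem, hz⟩
  obtain ⟨M, hM⟩ : ∃ M, ∀ i, f i ∈ U ^ M := by
    choose m hm using fun i => hU (f i)
    exact ⟨Finset.univ.sup m, fun i => pow_le_pow_right'
      (Submodule.one_le.2 h.one_mem) (Finset.le_sup (Finset.mem_univ i)) (hm i)⟩
  have hind (q : F → MvPolynomial ι k) (hq : ∑ i, f i * aeval z (q i) = 0) : q = 0 :=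
    eq_zero_of_sum_mul_aeval_eq_zero (fun i => ker_mem_minimalPrimes_of_finite hfin i.2)
      (fun i => Nat.card_eq_fintype_card (α := ι) ▸ card_le_height_ker i.1) hf hq
  refine Nat.le_of_mul_le_mul_right (c := (M + 1) ^ l) ?_ (by positivity)
  calc F.ncard * (M + 1) ^ l = Fintype.card F * (M + 1) ^ l := by
        rw [← Nat.card_coe_set_eq, Nat.card_eq_fintype_card]
    _ ≤ Module.finrank k ↥(U ^ (M + l * M)) := card_mul_pow_le_finrank_pow hz' hM hind M
    _ ≤ D * (M + l * M + 1) ^ l := h.finrank_pow_le _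
    _ ≤ D * ((l + 1) * (M + 1)) ^ l := by gcongr; lia
    _ = (l + 1) ^ l * D * (M + 1) ^ l := by rw [mul_pow]; ring

end Fibres

section NoetherNormalization

variable {ι k B : Type*} [Field k] [CommRing B] [Algebra k B]

/-- The `k[ι]`-algebra structure on `B` in which the variables act as the tuple `y`. -/
abbrev aevalAlgebra (k : Type*) {ι B : Type*} [Field k] [CommRing B] [Algebra k B] (y : ι → B) :
    Algebra (MvPolynomial ι k) B :=
  (aeval y : MvPolynomial ι k →ₐ[k] B).toAlgebra

variable (k) in
/-- The rank of `B` over `k[y]`. When `y` is a linear Noether normalization of the coordinate ring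
of a variety, this is the degree of the corresponding finite linear projection. -/
def projectionDegree (y : ι → B) : ℕ :=
  let := aevalAlgebra k y
  Module.finrank (MvPolynomial ι k) B

/-- A linear Noether normalization of an algebra `B` filtered by the powers of `U`: algebraically
independent elements `y` of `U` such that `B` is finite over `k[y]` compatibly with the
filtration. -/
structure IsNoetherNormalization (U : Submodule k B) (y : ι → B) : Prop where
  isLinearReduction : IsLinearReduction U y
  exists_mem_pow : ∀ b, ∃ m, b ∈ U ^ m
  algebraicIndependent : AlgebraicIndependent k y

section AevalAlgebra

variable (y : ι → B)

lemma isScalarTower_aevalAlgebra :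
    let := aevalAlgebra k y
    IsScalarTower k (MvPolynomial ι k) B :=
  let := aevalAlgebra k y
  .of_algebraMap_eq fun c => ((aeval y).commutes c).symm

lemma algebraMapX_aevalAlgebra :
    let := aevalAlgebra k y
    algebraMapX ι k B = y :=
  funext fun i => aeval_X y i

end AevalAlgebra

lemma faithfulSMul_aevalAlgebra {y : ι → B} (hy : AlgebraicIndependent k y) :
    let := aevalAlgebra k y
    FaithfulSMul (MvPolynomial ι k) B :=
  let := aevalAlgebra k y
  (faithfulSMul_iff_algebraMap_injective ..).2 hy

namespace IsNoetherNormalization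

variable {U : Submodule k B} {y : ι → B}

lemma isLinearReduction_algebraMapX (h : IsNoetherNormalization U y) :
    let := aevalAlgebra k y
    IsLinearReduction U (algebraMapX ι k B) := by
  intro
  rw [algebraMapX_aevalAlgebra]
  exact h.isLinearReduction

variable [FiniteDimensional k U]

lemma module_finite (h : IsNoetherNormalization U y) :
    let := aevalAlgebra k y
    Module.Finite (MvPolynomial ι k) B := by
  let := aevalAlgebra k y
  have := isScalarTower_aevalAlgebra (k := k) y
  exact h.isLinearReduction_algebraMapX.module_finite h.exists_mem_pow

lemma exists_algHom_apply_eq [IsAlgClosed k] (h : IsNoetherNormalization U y) (a : ι → k) :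
    ∃ ψ : B →ₐ[k] k, ∀ i, ψ (y i) = a i := by
  let := aevalAlgebra k y
  have := isScalarTower_aevalAlgebra (k := k) y
  have := h.module_finite
  have := faithfulSMul_aevalAlgebra h.algebraicIndependent
  simpa only [algebraMapX_aevalAlgebra] using exists_algHom_apply_algebraMapX_eq (B := B) a

variable [IsDomain B]

lemma projectionDegree_pos (h : IsNoetherNormalization U y) : 0 < projectionDegree k y := by
  let := aevalAlgebra k y
  have := h.module_finite
  have := faithfulSMul_aevalAlgebra h.algebraicIndependent
  have := FaithfulSMul.to_isTorsionFree (MvPolynomial ι k) B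
  exact Module.finrank_pos

lemma finrank_pow_le [Fintype ι] [Infinite k] (h : IsNoetherNormalization U y) (m : ℕ) :
    Module.finrank k ↥(U ^ m) ≤ projectionDegree k y * (m + 1) ^ Fintype.card ι := by
  let := aevalAlgebra k y
  have := isScalarTower_aevalAlgebra (k := k) y
  have := h.module_finite
  have := faithfulSMul_aevalAlgebra h.algebraicIndependent
  exact h.isLinearReduction_algebraMapX.finrank_pow_le m

lemma ringKrullDim_eq [Finite ι] [IsAlgClosed k] (h : IsNoetherNormalization U y) :
    ringKrullDim B = (Nat.card ι : ℕ∞) := by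
  let := aevalAlgebra k y
  have := isScalarTower_aevalAlgebra (k := k) y
  have := h.module_finite
  have := faithfulSMul_aevalAlgebra h.algebraicIndependent
  exact ringKrullDim_eq_card_of_finite ι k B

lemma exists_projectionDegree_le_ncard [IsAlgClosed k] [CharZero k]
    (h : IsNoetherNormalization U y) :
    ∃ a : ι → k, {ψ : B →ₐ[k] k | ∀ i, ψ (y i) = a i}.Finite ∧
      projectionDegree k y ≤ {ψ : B →ₐ[k] k | ∀ i, ψ (y i) = a i}.ncard := by
  let := aevalAlgebra k y
  have := isScalarTower_aevalAlgebra (k := k) y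
  have := h.module_finite
  have := faithfulSMul_aevalAlgebra h.algebraicIndependent
  obtain ⟨a, S, hS, hSa⟩ := exists_fiber_card_eq_finrank ι k B
  have hfin := finite_setOf_apply_algebraMapX_eq (B := B) a
  rw [algebraMapX_aevalAlgebra] at hSa hfin
  refine ⟨a, hfin, ?_⟩
  rw [show projectionDegree k y = S.card from hS.symm, ← ncard_coe_finset]
  exact ncard_le_ncard hSa hfin

lemma ncard_fibre_le [Fintype ι] [IsAlgClosed k] (h : IsNoetherNormalization U y) {z : ι → B}
    (hz : ∀ j, z j ∈ U) (hfin : {ψ : B →ₐ[k] k | ∀ j, ψ (z j) = 0}.Finite) :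
    {ψ : B →ₐ[k] k | ∀ j, ψ (z j) = 0}.ncard ≤
      (Fintype.card ι + 1) ^ Fintype.card ι * projectionDegree k y := by
  let := aevalAlgebra k y
  have := isScalarTower_aevalAlgebra (k := k) y
  have := h.module_finite
  have := faithfulSMul_aevalAlgebra h.algebraicIndependent
  exact Paper.ncard_fibre_le h.isLinearReduction_algebraMapX h.exists_mem_pow hz hfin

lemma exists_injective_algHom_card_eq [CharZero k] (h : IsNoetherNormalization U y)
    {Ω : Type*} [Field Ω] [IsAlgClosed Ω] [Algebra k Ω] {t : ι → Ω}
    (ht : AlgebraicIndependent k t) :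
    ∃ S : Finset (B →ₐ[k] Ω), S.card = projectionDegree k y ∧
      ∀ σ ∈ S, Function.Injective σ ∧ ∀ i, σ (y i) = t i := by
  classical
  let := aevalAlgebra k y
  have := isScalarTower_aevalAlgebra (k := k) y
  have := h.module_finite
  have := faithfulSMul_aevalAlgebra h.algebraicIndependent
  let := aevalAlgebra k t
  have := isScalarTower_aevalAlgebra (k := k) t
  have := faithfulSMul_aevalAlgebra ht
  obtain ⟨S, hS, hSinj⟩ := exists_injective_algHom_card_eq_finrank ι k B Ω
  refine ⟨S.image (AlgHom.restrictScalars k), ?_, fun σ hσ => ?_⟩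
  · rw [Finset.card_image_of_injective _ (AlgHom.restrictScalars_injective k), hS]
    rfl
  · obtain ⟨s, hs, rfl⟩ := Finset.mem_image.1 hσ
    refine ⟨hSinj s hs, fun i => ?_⟩
    rw [← algebraMapX_aevalAlgebra (k := k) y, ← algebraMapX_aevalAlgebra (k := k) t]
    exact s.commutes (X i)

end IsNoetherNormalization

end NoetherNormalization

section AlgebraicSets

variable {n}

lemma vanishingIdeal_eq (V : Set (Fin n → ℂ)) :
    vanishingIdeal n V = MvPolynomial.vanishingIdeal ℂ V := by
  ext f
  simp only [MvPolynomial.mem_vanishingIdeal_iff, aeval_eq_eval]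
  rfl

lemma zeroLocus_eq (I : Ideal (MvPolynomial (Fin n) ℂ)) :
    zeroLocus n I = MvPolynomial.zeroLocus ℂ I := by
  ext x
  simp only [MvPolynomial.mem_zeroLocus_iff, aeval_eq_eval]
  rfl

lemma isAlgebraicSet_zeroLocus (S : Set (MvPolynomial (Fin n) ℂ)) :
    IsAlgebraicSet n (zeroLocus n S) :=
  ⟨S, rfl⟩

lemma zeroLocus_anti {S T : Set (MvPolynomial (Fin n) ℂ)} (h : S ⊆ T) :
    zeroLocus n T ⊆ zeroLocus n S :=
  fun _ hx f hf => hx f (h hf)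

lemma vanishingIdeal_anti {V W : Set (Fin n → ℂ)} (h : V ⊆ W) :
    vanishingIdeal n W ≤ vanishingIdeal n V :=
  fun _ hf x hx => hf x (h hx)

lemma zeroLocus_span (S : Set (MvPolynomial (Fin n) ℂ)) :
    zeroLocus n (Ideal.span S) = zeroLocus n S := by
  refine (zeroLocus_anti Ideal.subset_span).antisymm fun x hx f hf => ?_
  have hle : Ideal.span S ≤ RingHom.ker (eval x) := Ideal.span_le.2 hx
  exact hle hf

lemma zeroLocus_vanishingIdeal {V : Set (Fin n → ℂ)} (hV : IsAlgebraicSet n V) :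
    zeroLocus n (vanishingIdeal n V) = V := by
  obtain ⟨S, rfl⟩ := hV
  exact Subset.antisymm (fun x hx f hf => hx f fun y hy => hy f hf) fun x hx f hf => hf x hx

lemma vanishingIdeal_zeroLocus (I : Ideal (MvPolynomial (Fin n) ℂ)) :
    vanishingIdeal n (zeroLocus n I) = I.radical := by
  rw [vanishingIdeal_eq, zeroLocus_eq, MvPolynomial.vanishingIdeal_zeroLocus_eq_radical]

lemma vanishingIdeal_zeroLocus_of_isPrime {P : Ideal (MvPolynomial (Fin n) ℂ)} (hP : P.IsPrime) :
    vanishingIdeal n (zeroLocus n P) = P := by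
  rw [vanishingIdeal_zeroLocus, hP.radical]

lemma vanishingIdeal_le_iff {V W : Set (Fin n → ℂ)} (hW : IsAlgebraicSet n W) :
    vanishingIdeal n W ≤ vanishingIdeal n V ↔ V ⊆ W := by
  refine ⟨fun h => ?_, vanishingIdeal_anti⟩
  rw [← zeroLocus_vanishingIdeal hW]
  exact fun x hx f hf => h hf x hx

lemma vanishingIdeal_ne_top {V : Set (Fin n → ℂ)} (hV : V.Nonempty) : vanishingIdeal n V ≠ ⊤ := by
  obtain ⟨x, hx⟩ := hV
  refine (Ideal.ne_top_iff_one _).2 fun h => ?_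
  simpa using h x hx

lemma isRadical_vanishingIdeal (V : Set (Fin n → ℂ)) : (vanishingIdeal n V).IsRadical := by
  rintro f ⟨m, hm⟩ x hx
  exact eq_zero_of_pow_eq_zero ((map_pow (eval x) f m).symm.trans (hm x hx))

lemma IsIrredVariety.isPrime_vanishingIdeal {W : Set (Fin n → ℂ)} (hW : IsIrredVariety n W) :
    (vanishingIdeal n W).IsPrime := by
  obtain ⟨-, hne, hirr⟩ := hW
  refine ⟨vanishingIdeal_ne_top hne, fun {f g} hfg => ?_⟩
  have hcover : W ⊆ zeroLocus n {f} ∪ zeroLocus n {g} := fun x hx => by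
    simpa [zeroLocus] using hfg x hx
  exact (hirr _ _ (isAlgebraicSet_zeroLocus _) (isAlgebraicSet_zeroLocus _) hcover).imp
    (fun h x hx => h hx f rfl) (fun h x hx => h hx g rfl)

lemma isIrredVariety_zeroLocus {P : Ideal (MvPolynomial (Fin n) ℂ)} (hP : P.IsPrime) :
    IsIrredVariety n (zeroLocus n P) := by
  have hv := vanishingIdeal_zeroLocus_of_isPrime hP
  refine ⟨isAlgebraicSet_zeroLocus _, ?_, fun V₁ V₂ h₁ h₂ hcover => ?_⟩
  · by_contra! h
    refine hP.ne_top (hv.symm.trans ((Ideal.eq_top_iff_one _).2 fun x hx => ?_))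
    simp [h] at hx
  · rw [← vanishingIdeal_le_iff h₁, ← vanishingIdeal_le_iff h₂, hv, ← hP.mul_le]
    refine Ideal.mul_le.2 fun f hf g hg => hv ▸ fun x hx => ?_
    rw [map_mul, mul_eq_zero]
    exact (hcover hx).imp (hf x) (hg x)

/-- Irreducible subvarieties of an algebraic set correspond to the primes containing its ideal. -/
def subvarietyOrderIso {V : Set (Fin n → ℂ)} (hV : IsAlgebraicSet n V) :
    {W // IsIrredVariety n W ∧ W ⊆ V} ≃o
      (PrimeSpectrum.zeroLocus (vanishingIdeal n V : Set (MvPolynomial (Fin n) ℂ)))ᵒᵈ where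
  toFun W := OrderDual.toDual ⟨⟨vanishingIdeal n W, W.2.1.isPrime_vanishingIdeal⟩,
    vanishingIdeal_anti W.2.2⟩
  invFun P := ⟨zeroLocus n (OrderDual.ofDual P).1.asIdeal, isIrredVariety_zeroLocus P.1.2,
    (zeroLocus_anti P.2).trans (zeroLocus_vanishingIdeal hV).le⟩
  left_inv W := Subtype.ext (zeroLocus_vanishingIdeal W.2.1.1)
  right_inv P := Subtype.ext (PrimeSpectrum.ext (vanishingIdeal_zeroLocus_of_isPrime P.1.2))
  map_rel_iff' {_ W} := vanishingIdeal_le_iff W.2.1.1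

lemma hasChain_iff {V : Set (Fin n → ℂ)} (hV : IsAlgebraicSet n V) (m : ℕ) :
    HasChain n V m ↔
      (m : WithBot ℕ∞) ≤ ringKrullDim (MvPolynomial (Fin n) ℂ ⧸ vanishingIdeal n V) := by
  rw [ringKrullDim_quotient, ← Order.krullDim_orderDual,
    ← Order.krullDim_eq_of_orderIso (subvarietyOrderIso hV), Order.le_krullDim_iff]
  constructor
  · rintro ⟨W, hW, hlt, hlast⟩
    have hmono : StrictMono W := fun i j hij => hlt i j hij
    let s : Fin (m + 1) → {W // IsIrredVariety n W ∧ W ⊆ V} :=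
      fun i => ⟨W i, hW i, (hmono.monotone (Fin.le_last i)).trans hlast⟩
    exact ⟨LTSeries.mk m s fun i j hij => hmono hij, rfl⟩
  · rintro ⟨s, rfl⟩
    exact ⟨fun i => s i, fun i => (s i).2.1, fun i j hij => s.strictMono hij, (s _).2.2⟩

lemma dim_eq_of_ringKrullDim_eq {V : Set (Fin n → ℂ)} (hV : IsAlgebraicSet n V) {d : ℕ}
    (hd : ringKrullDim (MvPolynomial (Fin n) ℂ ⧸ vanishingIdeal n V) = (d : ℕ∞)) :
    dim n V = d := by
  have hset : {m | HasChain n V m} = Iic d := by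
    ext m
    rw [Set.mem_ofPred_eq, hasChain_iff hV, hd]
    exact_mod_cast Iff.rfl
  rw [dim, hset, csSup_Iic]

end AlgebraicSets

section Components

variable {n} {V W : Set (Fin n → ℂ)}

lemma IsIrredComponent.vanishingIdeal_mem_minimalPrimes (hV : IsAlgebraicSet n V)
    (h : IsIrredComponent n W V) : vanishingIdeal n W ∈ (vanishingIdeal n V).minimalPrimes := by
  obtain ⟨hW, hWV, hmax⟩ := h
  refine ⟨⟨hW.isPrime_vanishingIdeal, vanishingIdeal_anti hWV⟩, fun P ⟨hP, hVP⟩ hPW => ?_⟩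
  have hWP : W ⊆ zeroLocus n P :=
    (zeroLocus_vanishingIdeal hW.1).ge.trans (zeroLocus_anti hPW)
  have hPV : zeroLocus n P ⊆ V := (zeroLocus_anti hVP).trans (zeroLocus_vanishingIdeal hV).le
  rw [← hmax _ (isIrredVariety_zeroLocus hP) hWP hPV, vanishingIdeal_zeroLocus_of_isPrime hP]

lemma isIrredComponent_zeroLocus (hV : IsAlgebraicSet n V)
    {P : Ideal (MvPolynomial (Fin n) ℂ)} (hP : P ∈ (vanishingIdeal n V).minimalPrimes) :
    IsIrredComponent n (zeroLocus n P) V := by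
  have hPp : P.IsPrime := hP.1.1
  refine ⟨isIrredVariety_zeroLocus hPp,
    (zeroLocus_anti hP.1.2).trans (zeroLocus_vanishingIdeal hV).le, fun W hW hPW hWV => ?_⟩
  have hWP : vanishingIdeal n W ≤ P :=
    (vanishingIdeal_anti hPW).trans (vanishingIdeal_zeroLocus_of_isPrime hPp).le
  have hPW' := hP.2 ⟨hW.isPrime_vanishingIdeal, vanishingIdeal_anti hWV⟩ hWP
  exact ((zeroLocus_vanishingIdeal hW.1).ge.trans (zeroLocus_anti hPW')).antisymm hPW

lemma finite_setOf_isIrredComponent (hV : IsAlgebraicSet n V) :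
    {W | IsIrredComponent n W V}.Finite := by
  refine ((vanishingIdeal n V).finite_minimalPrimes_of_isNoetherianRing.image
    fun P : Ideal _ => zeroLocus n P).subset fun W hW => ?_
  exact ⟨_, hW.vanishingIdeal_mem_minimalPrimes hV, zeroLocus_vanishingIdeal hW.1.1⟩

lemma mem_vanishingIdeal_of_forall_component (hV : IsAlgebraicSet n V)
    {f : MvPolynomial (Fin n) ℂ} (h : ∀ W, IsIrredComponent n W V → f ∈ vanishingIdeal n W) :
    f ∈ vanishingIdeal n V := by
  rw [← (isRadical_vanishingIdeal V).radical, ← Ideal.sInf_minimalPrimes, Ideal.mem_sInf]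
  intro P hP
  rw [← vanishingIdeal_zeroLocus_of_isPrime hP.1.1]
  exact h _ (isIrredComponent_zeroLocus hV hP)

lemma exists_isIrredComponent (hV : IsAlgebraicSet n V) (hne : V.Nonempty) :
    ∃ W, IsIrredComponent n W V := by
  obtain ⟨P, hP⟩ := Ideal.nonempty_minimalPrimes (vanishingIdeal_ne_top hne)
  exact ⟨_, isIrredComponent_zeroLocus hV hP⟩

end Components

section CoordinateRings

variable {n} {J : Ideal (MvPolynomial (Fin n) ℂ)}

/-- The coordinate functions in `ℂ[x₁, …, xₙ] ⧸ J`. -/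
def coord (J : Ideal (MvPolynomial (Fin n) ℂ)) : Fin n → MvPolynomial (Fin n) ℂ ⧸ J :=
  fun i => Ideal.Quotient.mkₐ ℂ J (X i)

/-- The space of functions on `Z(J)` induced by polynomials of degree at most one. Its `m`-th power
is the space of functions induced by polynomials of degree at most `m`. -/
abbrev affineFunctions (J : Ideal (MvPolynomial (Fin n) ℂ)) :
    Submodule ℂ (MvPolynomial (Fin n) ℂ ⧸ J) :=
  affineForms ℂ (coord J)

lemma aeval_coord (J : Ideal (MvPolynomial (Fin n) ℂ)) :
    aeval (coord J) = Ideal.Quotient.mkₐ ℂ J :=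
  MvPolynomial.algHom_ext fun i => aeval_X _ i

lemma affineFunctions_pow (J : Ideal (MvPolynomial (Fin n) ℂ)) (m : ℕ) :
    affineFunctions J ^ m =
      (restrictTotalDegree (Fin n) ℂ m).map (Ideal.Quotient.mkₐ ℂ J).toLinearMap := by
  rw [affineForms_pow, aeval_coord]

lemma mem_affineFunctions_pow {m : ℕ} {b : MvPolynomial (Fin n) ℂ ⧸ J} :
    b ∈ affineFunctions J ^ m ↔
      ∃ f : MvPolynomial (Fin n) ℂ, f.totalDegree ≤ m ∧ Ideal.Quotient.mkₐ ℂ J f = b := by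
  rw [mem_affineForms_pow, aeval_coord]

lemma exists_mem_affineFunctions_pow (b : MvPolynomial (Fin n) ℂ ⧸ J) :
    ∃ m, b ∈ affineFunctions J ^ m := by
  obtain ⟨f, rfl⟩ := Ideal.Quotient.mkₐ_surjective ℂ J b
  exact ⟨f.totalDegree, mem_affineFunctions_pow.2 ⟨f, le_rfl, rfl⟩⟩

lemma map_factor_affineFunctions {J P : Ideal (MvPolynomial (Fin n) ℂ)} (h : J ≤ P) :
    (affineFunctions J).map (Ideal.Quotient.factorₐ ℂ h).toLinearMap = affineFunctions P :=
  map_affineForms _ _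

/-- The coordinates of the `A`-valued point at which a homomorphism from `ℂ[x₁, …, xₙ] ⧸ J` to `A`
evaluates functions. -/
def point {A : Type*} [CommRing A] [Algebra ℂ A] (ψ : (MvPolynomial (Fin n) ℂ ⧸ J) →ₐ[ℂ] A) :
    Fin n → A :=
  fun i => ψ (coord J i)

lemma apply_mk_eq_aeval_point {A : Type*} [CommRing A] [Algebra ℂ A]
    (ψ : (MvPolynomial (Fin n) ℂ ⧸ J) →ₐ[ℂ] A) (f : MvPolynomial (Fin n) ℂ) :
    ψ (Ideal.Quotient.mkₐ ℂ J f) = aeval (point ψ) f := by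
  rw [← aeval_coord, ← AlgHom.comp_apply, comp_aeval]
  rfl

lemma point_injective {A : Type*} [CommRing A] [Algebra ℂ A] :
    Function.Injective (point : ((MvPolynomial (Fin n) ℂ ⧸ J) →ₐ[ℂ] A) → Fin n → A) := by
  refine fun ψ φ h => AlgHom.ext fun b => ?_
  obtain ⟨f, rfl⟩ := Ideal.Quotient.mkₐ_surjective ℂ J b
  rw [apply_mk_eq_aeval_point, apply_mk_eq_aeval_point, h]

lemma range_point :
    range (point : ((MvPolynomial (Fin n) ℂ ⧸ J) →ₐ[ℂ] ℂ) → Fin n → ℂ) = zeroLocus n J := by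
  refine Subset.antisymm ?_ fun x hx => ?_
  · rintro _ ⟨ψ, rfl⟩ f hf
    rw [← aeval_eq_eval, ← apply_mk_eq_aeval_point]
    exact (congrArg ψ (Ideal.Quotient.eq_zero_iff_mem.2 hf)).trans (map_zero ψ)
  · refine ⟨Ideal.Quotient.liftₐ J (aeval x) fun f hf => ?_, funext fun i => ?_⟩
    · rw [aeval_eq_eval]; exact hx f hf
    · simp [point, coord]

lemma exists_apply_eq_add_of_mem_affineFunctions {b : MvPolynomial (Fin n) ℂ ⧸ J}
    (hb : b ∈ affineFunctions J) :
    ∃ (c : ℂ) (φ : (Fin n → ℂ) →ₗ[ℂ] ℂ),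
      ∀ ψ : (MvPolynomial (Fin n) ℂ ⧸ J) →ₐ[ℂ] ℂ, ψ b = c + φ (point ψ) := by
  obtain ⟨c, s, hs, rfl⟩ := Submodule.mem_span_insert.1 hb
  obtain ⟨a, rfl⟩ := Submodule.mem_span_range_iff_exists_fun ℂ |>.1 hs
  exact ⟨c, ∑ i, a i • LinearMap.proj i, fun ψ => by simp [point]⟩

lemma exists_mem_affineFunctions_apply_eq_add (c : ℂ) (φ : (Fin n → ℂ) →ₗ[ℂ] ℂ) :
    ∃ b ∈ affineFunctions J,
      ∀ ψ : (MvPolynomial (Fin n) ℂ ⧸ J) →ₐ[ℂ] ℂ, ψ b = c + φ (point ψ) := by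
  refine ⟨c • 1 + ∑ i, φ (Pi.single i 1) • coord J i, add_mem ?_ (sum_mem fun i _ => ?_),
    fun ψ => ?_⟩
  · exact Submodule.smul_mem _ _ (one_mem_affineForms _)
  · exact Submodule.smul_mem _ _ (apply_mem_affineForms _ i)
  · conv_rhs => rw [pi_eq_sum_univ' (point ψ), map_sum]
    simp [point, mul_comm]

end CoordinateRings

section Degree

lemma exists_linearMap_mem_affineSubspace_iff {k E : Type*} [Field k] [AddCommGroup E] [Module k E]
    [FiniteDimensional k E] {L : AffineSubspace k E} {p : E} (hp : p ∈ L) {d : ℕ}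
    (hL : Module.finrank k L.direction + d = Module.finrank k E) :
    ∃ Φ : E →ₗ[k] (Fin d → k), ∀ x, x ∈ L ↔ Φ x = Φ p := by
  have hd : Module.finrank k (E ⧸ L.direction) = Module.finrank k (Fin d → k) := by
    have := L.direction.finrank_quotient_add_finrank
    rw [Module.finrank_fin_fun]
    omega
  refine ⟨(LinearEquiv.ofFinrankEq _ _ hd).toLinearMap ∘ₗ L.direction.mkQ, fun x => ?_⟩
  rw [← AffineSubspace.vsub_right_mem_direction_iff_mem hp, vsub_eq_sub,
    ← Submodule.Quotient.mk_eq_zero, Submodule.Quotient.mk_sub, sub_eq_zero]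
  exact (LinearEquiv.injective _).eq_iff.symm

variable {n} {W : Set (Fin n → ℂ)} {d : ℕ}
  {y : Fin d → MvPolynomial (Fin n) ℂ ⧸ vanishingIdeal n W}

lemma inter_eq_image_point (hW : IsAlgebraicSet n W) (S : Set (Fin n → ℂ)) :
    W ∩ S = point '' {ψ : (MvPolynomial (Fin n) ℂ ⧸ vanishingIdeal n W) →ₐ[ℂ] ℂ | point ψ ∈ S} := by
  rw [show {ψ | point ψ ∈ S} = point ⁻¹' S from rfl, image_preimage_eq_inter_range, range_point,
    zeroLocus_vanishingIdeal hW, inter_comm]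

lemma IsIrredVariety.dim_eq (hW : IsIrredVariety n W)
    (hy : IsNoetherNormalization (affineFunctions (vanishingIdeal n W)) y) : dim n W = d := by
  have := hW.isPrime_vanishingIdeal
  exact dim_eq_of_ringKrullDim_eq hW.1 (by rw [hy.ringKrullDim_eq, Nat.card_fin])

lemma exists_surjective_linearMap_apply_eq_add
    (hy : IsNoetherNormalization (affineFunctions (vanishingIdeal n W)) y) :
    ∃ (c : Fin d → ℂ) (Φ : (Fin n → ℂ) →ₗ[ℂ] (Fin d → ℂ)), Function.Surjective Φ ∧
      ∀ (ψ : (MvPolynomial (Fin n) ℂ ⧸ vanishingIdeal n W) →ₐ[ℂ] ℂ) i,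
        ψ (y i) = c i + Φ (point ψ) i := by
  choose c φ hφ using fun i =>
    exists_apply_eq_add_of_mem_affineFunctions (hy.isLinearReduction.apply_mem i)
  refine ⟨c, LinearMap.pi φ, fun b => ?_, fun ψ i => hφ i ψ⟩
  obtain ⟨ψ, hψ⟩ := hy.exists_algHom_apply_eq (c + b)
  refine ⟨point ψ, funext fun i => add_left_cancel (a := c i) ?_⟩
  rw [← Pi.add_apply c b, ← hψ i, hφ]
  rfl

lemma dim_le_of_isNoetherNormalization
    (hy : IsNoetherNormalization (affineFunctions (vanishingIdeal n W)) y) : d ≤ n := by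
  obtain ⟨-, Φ, hΦ, -⟩ := exists_surjective_linearMap_apply_eq_add hy
  simpa only [Module.finrank_fin_fun] using LinearMap.finrank_le_finrank_of_surjective hΦ

lemma IsIrredVariety.ncard_inter_le (hW : IsIrredVariety n W)
    (hy : IsNoetherNormalization (affineFunctions (vanishingIdeal n W)) y)
    {L : AffineSubspace ℂ (Fin n → ℂ)} (hL : Module.finrank ℂ L.direction = n - d)
    (hfin : (W ∩ L).Finite) : (W ∩ L).ncard ≤ (d + 1) ^ d * projectionDegree ℂ y := by
  have := hW.isPrime_vanishingIdeal
  rcases (W ∩ (L : Set (Fin n → ℂ))).eq_empty_or_nonempty with hempty | ⟨p, -, hpL⟩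
  · simp [hempty]
  have hdn := dim_le_of_isNoetherNormalization hy
  obtain ⟨Φ, hΦ⟩ := exists_linearMap_mem_affineSubspace_iff (d := d) hpL
    (by rw [hL, Module.finrank_fin_fun, Nat.sub_add_cancel hdn])
  choose z hzU hz using fun j => exists_mem_affineFunctions_apply_eq_add
    (J := vanishingIdeal n W) (-Φ p j) (LinearMap.proj j ∘ₗ Φ)
  have hzL : {ψ : (MvPolynomial (Fin n) ℂ ⧸ vanishingIdeal n W) →ₐ[ℂ] ℂ | point ψ ∈ (L : Set _)} =
      {ψ | ∀ j, ψ (z j) = 0} := by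
    ext ψ
    simp only [Set.mem_ofPred_eq, SetLike.mem_coe, hΦ, funext_iff, hz, neg_add_eq_zero]
    exact forall_congr' fun j => eq_comm
  rw [inter_eq_image_point hW.1, hzL] at hfin ⊢
  rw [ncard_image_of_injective _ point_injective]
  simpa only [Fintype.card_fin] using
    hy.ncard_fibre_le hzU (hfin.of_finite_image point_injective.injOn)

lemma IsIrredVariety.degree_le (hW : IsIrredVariety n W)
    (hy : IsNoetherNormalization (affineFunctions (vanishingIdeal n W)) y) :
    degree n W ≤ (d + 1) ^ d * projectionDegree ℂ y := by
  refine csSup_le' ?_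
  rintro m ⟨L, hL, hfin, rfl⟩
  rw [hW.dim_eq hy] at hL
  exact hW.ncard_inter_le hy hL hfin

lemma IsIrredVariety.projectionDegree_le (hW : IsIrredVariety n W)
    (hy : IsNoetherNormalization (affineFunctions (vanishingIdeal n W)) y) :
    projectionDegree ℂ y ≤ degree n W := by
  have := hW.isPrime_vanishingIdeal
  obtain ⟨a, hfin, hle⟩ := hy.exists_projectionDegree_le_ncard
  obtain ⟨c, Φ, hΦ, hc⟩ := exists_surjective_linearMap_apply_eq_add hy
  obtain ⟨p, hp⟩ := hΦ (a - c)
  let L : AffineSubspace ℂ (Fin n → ℂ) := AffineSubspace.mk' p (LinearMap.ker Φ)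
  have hmem : ∀ x, x ∈ L ↔ Φ x = a - c := fun x => by
    rw [AffineSubspace.mem_mk', vsub_eq_sub, LinearMap.mem_ker, map_sub, sub_eq_zero, hp]
  have hLa : {ψ : (MvPolynomial (Fin n) ℂ ⧸ vanishingIdeal n W) →ₐ[ℂ] ℂ | point ψ ∈ (L : Set _)} =
      {ψ | ∀ i, ψ (y i) = a i} := by
    ext ψ
    simp only [Set.mem_ofPred_eq, SetLike.mem_coe, hmem, hc, funext_iff, Pi.sub_apply,
      eq_sub_iff_add_eq']
  have hLfinrank : Module.finrank ℂ L.direction = n - dim n W := by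
    have := LinearMap.finrank_range_add_finrank_ker Φ
    rw [LinearMap.range_eq_top.2 hΦ, finrank_top, Module.finrank_fin_fun,
      Module.finrank_fin_fun] at this
    rw [AffineSubspace.direction_mk', hW.dim_eq hy]
    omega
  rw [← hLa] at hfin hle
  rw [← ncard_image_of_injective _ point_injective, ← inter_eq_image_point hW.1] at hle
  refine hle.trans (le_csSup ⟨(d + 1) ^ d * projectionDegree ℂ y, ?_⟩ ⟨L, hLfinrank, ?_, rfl⟩)
  · rintro m ⟨L', hL', hfin', rfl⟩
    rw [hW.dim_eq hy] at hL'
    exact hW.ncard_inter_le hy hL' hfin'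
  · rw [inter_eq_image_point hW.1]
    exact hfin.image _

end Degree

section CommonNormalization

variable {n} {V W : Set (Fin n → ℂ)} {d : ℕ}

lemma IsLinearReduction.of_le {ι : Type*} {J J' : Ideal (MvPolynomial (Fin n) ℂ)} (hJ : J ≤ J')
    {Y : ι → MvPolynomial (Fin n) ℂ}
    (hY : IsLinearReduction (affineFunctions J) (Ideal.Quotient.mkₐ ℂ J ∘ Y)) :
    IsLinearReduction (affineFunctions J') (Ideal.Quotient.mkₐ ℂ J' ∘ Y) := by
  have := hY.map (Ideal.Quotient.factorₐ ℂ hJ)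
  rwa [map_factor_affineFunctions] at this

lemma aeval_mk_comp {ι : Type*} (J : Ideal (MvPolynomial (Fin n) ℂ))
    (Y : ι → MvPolynomial (Fin n) ℂ) (p : MvPolynomial ι ℂ) :
    aeval (Ideal.Quotient.mkₐ ℂ J ∘ Y) p = Ideal.Quotient.mkₐ ℂ J (aeval Y p) := by
  rw [← AlgHom.comp_apply, comp_aeval]
  rfl

lemma exists_isIrredComponent_algebraicIndependent {ι : Type*} (hV : IsAlgebraicSet n V)
    {Y : ι → MvPolynomial (Fin n) ℂ}
    (hY : AlgebraicIndependent ℂ (Ideal.Quotient.mkₐ ℂ (vanishingIdeal n V) ∘ Y)) :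
    ∃ W, IsIrredComponent n W V ∧
      AlgebraicIndependent ℂ (Ideal.Quotient.mkₐ ℂ (vanishingIdeal n W) ∘ Y) := by
  by_contra! hdep
  have hrel (W : {W | IsIrredComponent n W V}) :
      ∃ p : MvPolynomial ι ℂ, aeval Y p ∈ vanishingIdeal n W ∧ p ≠ 0 := by
    obtain ⟨p, hp, hp0⟩ := by
      simpa only [algebraicIndependent_iff, not_forall, exists_prop] using hdep W.1 W.2
    rw [aeval_mk_comp] at hp
    exact ⟨p, Ideal.Quotient.eq_zero_iff_mem.1 hp, hp0⟩
  choose p hp hp0 using hrel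
  have := (finite_setOf_isIrredComponent hV).fintype
  refine Finset.prod_ne_zero_iff.2 (fun W _ => hp0 W) (algebraicIndependent_iff.1 hY (∏ W, p W) ?_)
  rw [aeval_mk_comp]
  refine Ideal.Quotient.eq_zero_iff_mem.2 (mem_vanishingIdeal_of_forall_component hV fun W hW => ?_)
  rw [map_prod]
  exact Ideal.prod_mem _ (Finset.mem_univ (⟨W, hW⟩ : {W | IsIrredComponent n W V})) (hp ⟨W, hW⟩)

lemma IsIrredVariety.isNoetherNormalization (hW : IsIrredVariety n W) (hd : dim n W = d)
    {y : Fin d → MvPolynomial (Fin n) ℂ ⧸ vanishingIdeal n W}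
    (hy : IsLinearReduction (affineFunctions (vanishingIdeal n W)) y) :
    IsNoetherNormalization (affineFunctions (vanishingIdeal n W)) y := by
  have := hW.isPrime_vanishingIdeal
  obtain ⟨l, -, z, hz, hzind, hl⟩ := hy.exists_algebraicIndependent
  have hdim := hW.dim_eq ⟨hz, exists_mem_affineFunctions_pow, hzind⟩
  exact ⟨hy, exists_mem_affineFunctions_pow, hl (hdim.symm.trans hd)⟩

/-- Polynomials `Y` of degree at most one that restrict to a linear Noether normalization of the
coordinate ring of every irreducible component of `V`. -/
structure IsCommonNormalization (V : Set (Fin n → ℂ)) (Y : Fin d → MvPolynomial (Fin n) ℂ) :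
    Prop where
  totalDegree_le_one : ∀ i, (Y i).totalDegree ≤ 1
  isNoetherNormalization : ∀ W, IsIrredComponent n W V →
    IsNoetherNormalization (affineFunctions (vanishingIdeal n W))
      (Ideal.Quotient.mkₐ ℂ (vanishingIdeal n W) ∘ Y)

lemma IsAlgSetOfDim.exists_isCommonNormalization (hV : IsAlgSetOfDim n V d) :
    ∃ Y : Fin d → MvPolynomial (Fin n) ℂ, IsCommonNormalization V Y := by
  have := Ideal.Quotient.nontrivial_iff.2 (vanishingIdeal_ne_top hV.2.1)
  have hcoord := isLinearReduction_affineForms (k := ℂ) (coord (vanishingIdeal n V))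
  obtain ⟨l, -, y, hy, hind, -⟩ := hcoord.exists_algebraicIndependent
  have hY (i : Fin l) : ∃ f : MvPolynomial (Fin n) ℂ, f.totalDegree ≤ 1 ∧
      Ideal.Quotient.mkₐ ℂ (vanishingIdeal n V) f = y i :=
    mem_affineFunctions_pow.1 ((pow_one (affineFunctions _)).ge (hy.apply_mem i))
  choose Y hY hYy using hY
  obtain rfl : Ideal.Quotient.mkₐ ℂ (vanishingIdeal n V) ∘ Y = y := funext hYy
  obtain ⟨W₀, hW₀, hind₀⟩ := exists_isIrredComponent_algebraicIndependent hV.1 hind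
  have hl := hW₀.1.dim_eq
    ⟨hy.of_le (vanishingIdeal_anti hW₀.2.1), exists_mem_affineFunctions_pow, hind₀⟩
  obtain rfl : d = l := (hV.2.2 W₀ hW₀).symm.trans hl
  exact ⟨Y, hY, fun W hW =>
    hW.1.isNoetherNormalization (hV.2.2 W hW) (hy.of_le (vanishingIdeal_anti hW.2.1))⟩

end CommonNormalization

section CompleteIntersections

lemma exists_mem_forall_notMem {k E : Type*} [Field k] [Infinite k] [AddCommGroup E] [Module k E]
    {L : Submodule k E} {S : Set (Submodule k E)} (hS : S.Finite) (hL : ∀ p ∈ S, ¬ L ≤ p) :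
    ∃ x ∈ L, ∀ p ∈ S, x ∉ p := by
  classical
  let s : Finset (Submodule k L) := hS.toFinset.image (Submodule.comap L.subtype)
  have hs : ⊤ ∉ s := fun hmem => by
    obtain ⟨p, hp, hpL⟩ := Finset.mem_image.1 hmem
    exact hL p (hS.mem_toFinset.1 hp) (Submodule.comap_subtype_eq_top.1 hpL)
  obtain ⟨x, hx⟩ := (ne_univ_iff_exists_notMem _).1 (Subspace.biUnion_ne_univ_of_top_notMem hs)
  refine ⟨x, x.2, fun p hp hxp => hx (mem_biUnion (x := p.comap L.subtype) ?_ hxp)⟩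
  exact Finset.mem_image_of_mem _ (hS.mem_toFinset.2 hp)

variable {R : Type*} [CommRing R]

lemma exists_forall_subset_or_le_height {k : Type*} [Field k] [Infinite k] [IsNoetherianRing R]
    [Algebra k R] (L : Submodule k R) (r : ℕ) :
    ∃ G : Fin r → R, (∀ i, G i ∈ L) ∧ ∀ Q : Ideal R, Q.IsPrime → range G ⊆ Q →
      (L : Set R) ⊆ Q ∨ (r : ℕ∞) ≤ Q.height := by
  induction r with
  | zero => exact ⟨Fin.elim0, fun i => i.elim0, fun Q _ _ => Or.inr (by simp)⟩
  | succ r ih =>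
    obtain ⟨G, hGL, hG⟩ := ih
    let S : Set (Ideal R) := {Q | Q ∈ (Ideal.span (range G)).minimalPrimes ∧ ¬ (L : Set R) ⊆ Q}
    have hS : S.Finite := (Ideal.finite_minimalPrimes_of_isNoetherianRing R _).subset fun Q h => h.1
    obtain ⟨g, hgL, hg⟩ := exists_mem_forall_notMem (L := L)
      (hS.image fun Q : Ideal R => Q.restrictScalars k) (by rintro _ ⟨Q, hQ, rfl⟩; exact hQ.2)
    refine ⟨Fin.snoc G g, Fin.lastCases (by simpa using hgL) (by simpa using hGL),
      fun Q hQ hle => or_iff_not_imp_left.2 fun hLQ => ?_⟩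
    have hGQ : range G ⊆ Q := by
      rintro _ ⟨i, rfl⟩
      exact hle ⟨i.castSucc, by simp⟩
    have hgQ : g ∈ Q := hle ⟨Fin.last r, by simp⟩
    obtain ⟨P, hP, hPQ⟩ := Ideal.exists_minimalPrimes_le (Ideal.span_le.2 hGQ)
    have := hP.isPrime
    have hLP : ¬ (L : Set R) ⊆ P := fun h => hLQ (h.trans hPQ)
    have hgP : g ∉ P := hg _ ⟨P, ⟨hP, hLP⟩, rfl⟩
    have hlt : P < Q := lt_of_le_of_ne hPQ fun h => hgP (h ▸ hgQ)
    calc ((r + 1 : ℕ) : ℕ∞) = r + 1 := Nat.cast_succ r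
      _ ≤ P.height + 1 :=
        add_le_add_left ((hG P hP.isPrime (Ideal.span_le.1 hP.le)).resolve_left hLP) 1
      _ ≤ Q.height := Ideal.height_add_one_le_of_lt_of_isPrime hlt

lemma exists_forall_mem_minimalPrimes_of_height_le {k : Type*} [Field k] [Infinite k]
    [IsNoetherianRing R] [Algebra k R] (L : Submodule k R) (r : ℕ) :
    ∃ G : Fin r → R, (∀ i, G i ∈ L) ∧ ∀ P ∈ (Ideal.span (L : Set R)).minimalPrimes,
      P.height ≤ r → P ∈ (Ideal.span (range G)).minimalPrimes := by
  obtain ⟨G, hGL, hG⟩ := exists_forall_subset_or_le_height L r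
  refine ⟨G, hGL, fun P hP hPr => ⟨⟨hP.isPrime, Ideal.span_le.2 ?_⟩, fun Q hQ hQP => ?_⟩⟩
  · rintro _ ⟨i, rfl⟩
    exact Ideal.span_le.1 hP.le (hGL i)
  have := hP.isPrime
  have := hQ.1
  rcases hG Q hQ.1 (Ideal.span_le.1 hQ.2) with hLQ | hrQ
  · exact hP.2 ⟨hQ.1, Ideal.span_le.2 hLQ⟩ hQP
  · by_contra hPQ
    have hlt := Ideal.height_add_one_le_of_lt_of_isPrime (lt_of_le_not_ge hQP hPQ)
    exact absurd ((add_le_add_left hrQ 1).trans (hlt.trans hPr)) (by norm_cast; simp)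

lemma height_add_ringKrullDim_quotient_le (P : Ideal R) [hP : P.IsPrime] :
    (P.height : WithBot ℕ∞) + ringKrullDim (R ⧸ P) ≤ ringKrullDim R := by
  let p : PrimeSpectrum R := ⟨P, hP⟩
  have hnonempty : Nonempty (PrimeSpectrum R) := ⟨p⟩
  have hcoheight : ringKrullDim (R ⧸ P) = Order.coheight p := by
    rw [ringKrullDim_quotient, Order.coheight_eq_krullDim_Ici]
    rfl
  rw [hcoheight, show P.height = Order.height p from PrimeSpectrum.height_eq_orderHeight p,
    ringKrullDim, Order.krullDim_eq_iSup_height_add_coheight_of_nonempty]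
  exact_mod_cast le_iSup (fun q : PrimeSpectrum R => Order.height q + Order.coheight q) p

lemma exists_mul_pow_mem_of_mem_minimalPrimes {I P : Ideal R} (hP : P ∈ I.minimalPrimes) {h : R}
    (hh : h ∈ P) : ∃ u ∉ P, ∃ N : ℕ, u * h ^ N ∈ I := by
  have := hP.isPrime
  by_contra! hI
  let M : Submonoid R := P.primeCompl ⊔ Submonoid.powers h
  have hdisj : Disjoint (I : Set R) M := by
    rw [Set.disjoint_left]
    intro x hxI hxM
    obtain ⟨u, hu, v, ⟨N, rfl⟩, rfl⟩ := Submonoid.mem_sup.1 hxM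
    exact hI u hu N hxI
  obtain ⟨Q, hQ, hIQ, hQM⟩ := Ideal.exists_le_prime_disjoint I M hdisj
  rw [Set.disjoint_left] at hQM
  have hQP : Q ≤ P := fun x hx =>
    by_contra fun hxP => hQM hx ((le_sup_left : P.primeCompl ≤ M) hxP)
  exact hQM (hP.2 ⟨hQ, hIQ⟩ hQP hh)
    ((le_sup_right : Submonoid.powers h ≤ M) (Submonoid.mem_powers h))

variable {n} {V : Set (Fin n → ℂ)} {d : ℕ}

lemma exists_finset_totalDegree_le_deltaSet (hV : IsAlgebraicSet n V) :
    ∃ g : Finset (MvPolynomial (Fin n) ℂ), (∀ f ∈ g, f.totalDegree ≤ deltaSet n V) ∧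
      ∀ W, IsIrredComponent n W V → IsIrredComponent n W (zeroLocus n g) := by
  refine Nat.sInf_mem (s := {δ | ∃ g : Finset (MvPolynomial (Fin n) ℂ),
    (∀ f ∈ g, f.totalDegree ≤ δ) ∧
      ∀ W, IsIrredComponent n W V → IsIrredComponent n W (zeroLocus n g)}) ?_
  obtain ⟨s, hs⟩ := (isNoetherianRing_iff_ideal_fg _).1 inferInstance (vanishingIdeal n V)
  refine ⟨s.sup totalDegree, s, fun f hf => Finset.le_sup hf, fun W hW => ?_⟩
  rwa [← zeroLocus_span, hs, zeroLocus_vanishingIdeal hV]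

lemma IsAlgSetOfDim.height_vanishingIdeal_le (hV : IsAlgSetOfDim n V d) {W : Set (Fin n → ℂ)}
    (hW : IsIrredComponent n W V) : (vanishingIdeal n W).height ≤ (n - d : ℕ) := by
  have := hW.1.isPrime_vanishingIdeal
  obtain ⟨Y, hY⟩ := hV.exists_isCommonNormalization
  have hle := height_add_ringKrullDim_quotient_le (vanishingIdeal n W)
  rw [(hY.isNoetherNormalization W hW).ringKrullDim_eq, ringKrullDim_mvPolynomial_field,
    Nat.card_fin, Nat.card_fin] at hle
  have hle' : (vanishingIdeal n W).height + d ≤ n := by exact_mod_cast hle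
  rw [ENat.natCast_sub]
  exact ENat.le_sub_of_add_le_right (ENat.natCast_ne_top d) hle'

lemma IsAlgSetOfDim.exists_mem_minimalPrimes_span (hV : IsAlgSetOfDim n V d) :
    ∃ G : Fin (n - d) → MvPolynomial (Fin n) ℂ, (∀ i, (G i).totalDegree ≤ deltaSet n V) ∧
      ∀ W, IsIrredComponent n W V → vanishingIdeal n W ∈ (Ideal.span (range G)).minimalPrimes := by
  obtain ⟨g, hgδ, hgV⟩ := exists_finset_totalDegree_le_deltaSet hV.1
  obtain ⟨G, hGg, hG⟩ := exists_forall_mem_minimalPrimes_of_height_le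
    (Submodule.span ℂ (g : Set (MvPolynomial (Fin n) ℂ))) (n - d)
  refine ⟨G, fun i => ?_, fun W hW => hG _ ?_ (hV.height_vanishingIdeal_le hW)⟩
  · have hle : Submodule.span ℂ (g : Set (MvPolynomial (Fin n) ℂ)) ≤
        restrictTotalDegree (Fin n) ℂ (deltaSet n V) :=
      Submodule.span_le.2 fun f hf => (mem_restrictTotalDegree _ _ _).2 (hgδ f hf)
    exact (mem_restrictTotalDegree _ _ _).1 (hle (hGg i))
  · have hmin := (hgV W hW).vanishingIdeal_mem_minimalPrimes (isAlgebraicSet_zeroLocus _)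
    rw [← zeroLocus_span, vanishingIdeal_zeroLocus, Ideal.radical_minimalPrimes] at hmin
    rwa [Ideal.span, Submodule.span_span_of_tower]

end CompleteIntersections

section GenericPoints

lemma totalDegree_map_le {σ R S : Type*} [CommSemiring R] [CommSemiring S] (φ : R →+* S)
    (f : MvPolynomial σ R) : (map φ f).totalDegree ≤ f.totalDegree :=
  Finset.sup_mono (support_map_subset φ f)

variable {σ k Ω : Type*} [Field Ω] {p : σ → Ω} {I : Ideal (MvPolynomial σ Ω)}

lemma le_localIdeal (I : Ideal (MvPolynomial σ Ω)) (p : σ → Ω) : I ≤ localIdeal I p :=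
  fun f hf => ⟨1, by simp, by rwa [one_mul]⟩

lemma mem_radical_localIdeal_of_mul_mem {u f : MvPolynomial σ Ω} (hu : eval p u ≠ 0)
    (huf : u * f ∈ (localIdeal I p).radical) : f ∈ (localIdeal I p).radical := by
  obtain ⟨N, v, hv, hmem⟩ := huf
  refine ⟨N, v * u ^ N, by simp [hu, hv], ?_⟩
  rwa [mul_assoc, ← mul_pow]

lemma X_sub_C_mem_radical_localIdeal {F : Polynomial Ω} (hF : F ≠ 0) {j : σ}
    (hj : Polynomial.aeval (X j : MvPolynomial σ Ω) F ∈ (localIdeal I p).radical) :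
    X j - C (p j) ∈ (localIdeal I p).radical := by
  obtain ⟨w, hFw, hw⟩ :=
    Polynomial.exists_eq_pow_rootMultiplicity_mul_and_not_dvd F hF (p j)
  have heval : eval p (Polynomial.aeval (X j : MvPolynomial σ Ω) w) = w.eval (p j) := by
    rw [← aeval_eq_eval, ← Polynomial.aeval_algHom_apply, aeval_X,
      Polynomial.coe_aeval_eq_eval]
  refine Ideal.mem_radical_of_pow_mem (m := F.rootMultiplicity (p j))
    (mem_radical_localIdeal_of_mul_mem (u := Polynomial.aeval (X j) w) ?_ ?_)
  · rw [heval]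
    exact fun h => hw (Polynomial.dvd_iff_isRoot.2 h)
  · rw [hFw] at hj
    simpa [mul_comm, algebraMap_eq] using hj

variable [CommRing k] [Algebra k Ω]

lemma map_mem_radical_localIdeal {J : Ideal (MvPolynomial σ k)}
    (hJ : RingHom.ker (aeval p : MvPolynomial σ k →ₐ[k] Ω) ∈ J.minimalPrimes)
    (hJI : J.map (map (algebraMap k Ω)) ≤ I) {f : MvPolynomial σ k} (hf : aeval p f = 0) :
    map (algebraMap k Ω) f ∈ (localIdeal I p).radical := by
  obtain ⟨u, hu, N, huN⟩ := exists_mul_pow_mem_of_mem_minimalPrimes hJ hf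
  refine ⟨N, map (algebraMap k Ω) u, by rwa [eval_map], ?_⟩
  rw [← map_pow, ← map_mul]
  exact hJI (Ideal.mem_map_of_mem _ huN)

lemma map_eval₂_sub_aeval_map_mem {κ : Type*} {Y : κ → MvPolynomial σ k} {t : κ → Ω}
    (hI : ∀ i, map (algebraMap k Ω) (Y i) - C (t i) ∈ I) (F : Polynomial (MvPolynomial κ k))
    (g : MvPolynomial σ k) :
    map (algebraMap k Ω) (F.eval₂ (aeval Y : MvPolynomial κ k →ₐ[k] _).toRingHom g) -
      Polynomial.aeval (map (algebraMap k Ω) g)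
        (F.map (aeval t : MvPolynomial κ k →ₐ[k] Ω).toRingHom) ∈ I := by
  rw [← Ideal.Quotient.eq, Polynomial.aeval_def, Polynomial.eval₂_map, Polynomial.hom_eval₂,
    Polynomial.hom_eval₂, Polynomial.hom_eval₂]
  congr 1
  refine MvPolynomial.ringHom_ext (fun c => ?_) fun i => ?_
  · simp [algebraMap_eq]
  · simpa [algebraMap_eq] using Ideal.Quotient.eq.2 (hI i)

lemma X_sub_C_mem_radical_localIdeal_of_isIntegralElem {κ : Type*} {J : Ideal (MvPolynomial σ k)}
    (hJ : RingHom.ker (aeval p : MvPolynomial σ k →ₐ[k] Ω) ∈ J.minimalPrimes)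
    (hJI : J.map (map (algebraMap k Ω)) ≤ I) {Y : κ → MvPolynomial σ k}
    (hYI : ∀ i, map (algebraMap k Ω) (Y i) - C (aeval p (Y i)) ∈ I) {j : σ}
    (hj : (aeval fun i => aeval p (Y i) : MvPolynomial κ k →ₐ[k] Ω).toRingHom.IsIntegralElem
      (p j)) :
    X j - C (p j) ∈ (localIdeal I p).radical := by
  obtain ⟨F, hF, hFp⟩ := hj
  set f := F.eval₂ (aeval Y : MvPolynomial κ k →ₐ[k] _).toRingHom (X j) with hf
  have hfp : aeval p f = 0 := by
    rw [← hFp, hf, ← AlgHom.coe_toRingHom, Polynomial.hom_eval₂]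
    congr 1
    · refine MvPolynomial.ringHom_ext (fun c => ?_) fun i => ?_ <;> simp
    · simp
  have hmem := map_mem_radical_localIdeal hJ hJI hfp
  have hsub := map_eval₂_sub_aeval_map_mem hYI F (X j)
  rw [map_X] at hsub
  have hdiff := sub_mem hmem (Ideal.le_radical (le_localIdeal I p hsub))
  rw [sub_sub_cancel] at hdiff
  exact X_sub_C_mem_radical_localIdeal (hF.map _).ne_zero hdiff

theorem exists_separator_of_generic_point [Fintype σ] {κ₁ κ₂ : Type*} (e : σ ≃ κ₁ ⊕ κ₂) {δ : ℕ}
    {G : κ₁ → MvPolynomial σ k} (hGδ : ∀ i, (G i).totalDegree ≤ δ)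
    {Y : κ₂ → MvPolynomial σ k} (hYδ : ∀ i, (Y i).totalDegree ≤ δ)
    (hG : RingHom.ker (aeval p : MvPolynomial σ k →ₐ[k] Ω) ∈
      (Ideal.span (range G)).minimalPrimes)
    (hY : ∀ j, (aeval fun i => aeval p (Y i) : MvPolynomial κ₂ k →ₐ[k] Ω).toRingHom.IsIntegralElem
      (p j)) :
    ∃ f : MvPolynomial σ Ω, f.totalDegree ≤ Fintype.card σ * δ ∧ eval p f ≠ 0 ∧
      ∀ q : σ → Ω, (∀ i, aeval q (G i) = 0) → (∀ i, aeval q (Y i) = aeval p (Y i)) → q ≠ p →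
        eval q f = 0 := by
  let E : κ₁ ⊕ κ₂ → MvPolynomial σ Ω := Sum.elim (fun i => map (algebraMap k Ω) (G i))
    fun i => map (algebraMap k Ω) (Y i) - C (aeval p (Y i))
  have hEδ : ∀ i, (E i).totalDegree ≤ δ := by
    rintro (i | i)
    · exact (totalDegree_map_le _ _).trans (hGδ i)
    · refine (totalDegree_sub _ _).trans (max_le ((totalDegree_map_le _ _).trans (hYδ i)) ?_)
      rw [totalDegree_C]
      exact Nat.zero_le δ
  have hE (q : σ → Ω) (hqG : ∀ i, aeval q (G i) = 0)
      (hqY : ∀ i, aeval q (Y i) = aeval p (Y i)) : ∀ i, eval q (E i) = 0 := by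
    rintro (i | i)
    · simpa [E, eval_map, aeval_def] using hqG i
    · simpa [E, eval_map, aeval_def, sub_eq_zero] using hqY i
  have hpG (i : κ₁) : aeval p (G i) = 0 := hG.1.2 (Ideal.subset_span ⟨i, rfl⟩)
  have hspan : Ideal.span (range (E ∘ e)) = Ideal.span (range E) := by rw [e.surjective.range_comp]
  have hmem (j : σ) : ∃ N, (X j - C (p j)) ^ N ∈ localIdeal (Ideal.span (range (E ∘ e))) p := by
    rw [hspan]
    refine X_sub_C_mem_radical_localIdeal_of_isIntegralElem hG ?_
      (fun i => Ideal.subset_span (mem_range_self (f := E) (Sum.inr i))) (hY j)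
    rw [Ideal.map_span, Ideal.span_le]
    rintro _ ⟨_, ⟨i, rfl⟩, rfl⟩
    exact Ideal.subset_span ⟨Sum.inl i, rfl⟩
  choose N hN using hmem
  obtain ⟨f, hfδ, hfp, hf⟩ := exists_separator_of_isolated_zero (G := E ∘ e) (p := p)
    (N := Finset.univ.sup N) (fun i => hEδ (e i)) (fun i => hE p hpG (fun _ => rfl) (e i))
    fun j => Ideal.pow_mem_of_pow_mem _ (hN j)
      ((Finset.le_sup (Finset.mem_univ j)).trans (Nat.le_succ _))
  exact ⟨f, hfδ, hfp, fun q hqG hqY => hf q fun i => hE q hqG hqY (e i)⟩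

end GenericPoints

section EvaluationMatrices

variable {σ S k Ω : Type*} [CommRing k] [Field Ω] [Algebra k Ω]

lemma span_range_aeval_eq_top [Finite S] {p : S → σ → Ω} {M : ℕ}
    (h : ∀ s, ∃ f : MvPolynomial σ Ω, f.totalDegree ≤ M ∧ eval (p s) f ≠ 0 ∧
      ∀ s', s' ≠ s → eval (p s') f = 0) :
    Submodule.span Ω (range fun (g : restrictTotalDegree σ k M) (s : S) =>
      aeval (p s) (g : MvPolynomial σ k)) = ⊤ := by
  classical
  rw [eq_top_iff, ← (Pi.basisFun Ω S).span_eq, Submodule.span_le]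
  rintro _ ⟨s, rfl⟩
  obtain ⟨f, hfM, hfs, hf⟩ := h s
  have hcoeff : (fun s' => eval (p s') f) =
      ∑ a ∈ f.support, coeff a f • fun s' => aeval (p s') (monomial a (1 : k)) := by
    funext s'
    simp only [eval_eq, Finset.sum_apply, Pi.smul_apply, aeval_monomial, map_one, one_mul,
      smul_eq_mul, Finsupp.prod]
  have hbasis : Pi.basisFun Ω S s = (eval (p s) f)⁻¹ • fun s' => eval (p s') f := by
    funext s'
    rcases eq_or_ne s' s with rfl | hs'
    · simp [hfs]
    · simp [hf s' hs', hs']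
  rw [SetLike.mem_coe, hbasis, hcoeff]
  refine Submodule.smul_mem _ _ (Submodule.sum_mem _ fun a ha => Submodule.smul_mem _ _
    (Submodule.subset_span ⟨⟨monomial a 1, ?_⟩, rfl⟩))
  exact (mem_restrictTotalDegree _ _ _).2
    ((totalDegree_monomial_le _ _).trans ((le_totalDegree ha).trans hfM))

lemma exists_linearIndependent_aeval [Finite S] {p : S → σ → Ω} {M : ℕ}
    (h : ∀ s, ∃ f : MvPolynomial σ Ω, f.totalDegree ≤ M ∧ eval (p s) f ≠ 0 ∧
      ∀ s', s' ≠ s → eval (p s') f = 0) :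
    ∃ g : S → MvPolynomial σ k, (∀ s, (g s).totalDegree ≤ M) ∧
      LinearIndependent Ω fun s s' => aeval (p s') (g s) := by
  obtain ⟨κ, g, -, hspan, hind⟩ := exists_linearIndependent' Ω
    fun (g : restrictTotalDegree σ k M) (s : S) => aeval (p s) (g : MvPolynomial σ k)
  rw [span_range_aeval_eq_top h] at hspan
  let e := (Pi.basisFun Ω S).indexEquiv (Module.Basis.mk hind hspan.ge)
  exact ⟨fun s => g (e s), fun s => (mem_restrictTotalDegree _ _ _).1 (g (e s)).2,
    hind.comp e e.injective⟩

end EvaluationMatrices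

section LowerBound

/-- A generic point of the prime ideal `J`, lying over `t` and integral over `k[t]` when projected
by `Y`. Such points take the place of the points of a general fibre of the projection. -/
structure IsGenericPoint {σ κ k Ω : Type*} [CommRing k] [CommRing Ω] [Algebra k Ω]
    (J : Ideal (MvPolynomial σ k)) (Y : κ → MvPolynomial σ k) (t : κ → Ω) (x : σ → Ω) : Prop where
  ker_aeval : RingHom.ker (aeval x : MvPolynomial σ k →ₐ[k] Ω) = J
  aeval_eq : ∀ i, aeval x (Y i) = t i
  isIntegralElem :
    ∀ j, (aeval t : MvPolynomial κ k →ₐ[k] Ω).toRingHom.IsIntegralElem (x j)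

lemma algebraicIndependent_algebraMap_X (κ k : Type*) [Field k] :
    AlgebraicIndependent k fun i =>
      algebraMap (MvPolynomial κ k) (AlgebraicClosure (FractionRing (MvPolynomial κ k))) (X i) :=
  (algebraicIndependent_X κ k).map' (f := IsScalarTower.toAlgHom k (MvPolynomial κ k) _)
    ((algebraMap (FractionRing (MvPolynomial κ k)) _).injective.comp
      (IsFractionRing.injective (MvPolynomial κ k) _))

variable {n} {V : Set (Fin n → ℂ)} {d : ℕ} {Y : Fin d → MvPolynomial (Fin n) ℂ}
  {Ω : Type*} [Field Ω] [Algebra ℂ Ω] {t : Fin d → Ω}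

lemma isIntegralElem_apply {ι B : Type*} [CommRing B] [Algebra ℂ B] {U : Submodule ℂ B}
    [FiniteDimensional ℂ U] {y : ι → B} (h : IsNoetherNormalization U y) (ψ : B →ₐ[ℂ] Ω) (b : B) :
    (aeval (ψ ∘ y) : MvPolynomial ι ℂ →ₐ[ℂ] Ω).toRingHom.IsIntegralElem (ψ b) := by
  let := aevalAlgebra ℂ y
  have := h.module_finite
  obtain ⟨F, hF, hFb⟩ := Algebra.IsIntegral.isIntegral (R := MvPolynomial ι ℂ) b
  refine ⟨F, hF, ?_⟩
  have hψ : (aeval (ψ ∘ y) : MvPolynomial ι ℂ →ₐ[ℂ] Ω).toRingHom =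
      (ψ : B →+* Ω).comp (algebraMap (MvPolynomial ι ℂ) B) :=
    congrArg AlgHom.toRingHom (comp_aeval y ψ).symm
  rw [hψ, ← AlgHom.coe_toRingHom, ← Polynomial.hom_eval₂, hFb, map_zero]

lemma IsNoetherNormalization.exists_finset_isGenericPoint [IsAlgClosed Ω]
    {J : Ideal (MvPolynomial (Fin n) ℂ)}
    [J.IsPrime] (h : IsNoetherNormalization (affineFunctions J) (Ideal.Quotient.mkₐ ℂ J ∘ Y))
    (ht : AlgebraicIndependent ℂ t) :
    ∃ E : Finset (Fin n → Ω), E.card = projectionDegree ℂ (Ideal.Quotient.mkₐ ℂ J ∘ Y) ∧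
      ∀ x ∈ E, IsGenericPoint J Y t x := by
  classical
  obtain ⟨S, hS, hSt⟩ := h.exists_injective_algHom_card_eq ht
  refine ⟨S.image point, by rw [Finset.card_image_of_injective _ point_injective, hS], ?_⟩
  intro x hx
  obtain ⟨ψ, hψ, rfl⟩ := Finset.mem_image.1 hx
  obtain ⟨hinj, hψt⟩ := hSt ψ hψ
  obtain rfl : ψ ∘ Ideal.Quotient.mkₐ ℂ J ∘ Y = t := funext hψt
  refine ⟨?_, fun i => (apply_mk_eq_aeval_point ψ (Y i)).symm,
    fun j => isIntegralElem_apply h ψ (coord J j)⟩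
  ext f
  rw [RingHom.mem_ker, ← apply_mk_eq_aeval_point, map_eq_zero_iff ψ hinj]
  exact Ideal.Quotient.eq_zero_iff_mem

/-- The sum over the components of `V` of the degrees of the projections to `ℂᵈ` given by `Y`. For
a common normalization `Y` it plays the role of the degree of `V`. -/
def projectionDegreeSum (V : Set (Fin n → ℂ)) (Y : Fin d → MvPolynomial (Fin n) ℂ) : ℕ :=
  ∑ᶠ W ∈ {W | IsIrredComponent n W V},
    projectionDegree ℂ (Ideal.Quotient.mkₐ ℂ (vanishingIdeal n W) ∘ Y)

lemma finsum_mem_eq_sum {α M : Type*} [AddCommMonoid M] (s : Set α) [Fintype s] (f : α → M) :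
    ∑ᶠ a ∈ s, f a = ∑ a : s, f a := by
  rw [← finsum_set_coe_eq_finsum_mem, finsum_eq_sum_of_fintype]

lemma IsCommonNormalization.exists_finset_isGenericPoint [IsAlgClosed Ω]
    (hV : IsAlgebraicSet n V)
    (hY : IsCommonNormalization V Y) (ht : AlgebraicIndependent ℂ t) :
    ∃ E : Finset (Fin n → Ω), E.card = projectionDegreeSum V Y ∧
      ∀ x ∈ E, ∃ W, IsIrredComponent n W V ∧ IsGenericPoint (vanishingIdeal n W) Y t x := by
  classical
  have hE (W : {W | IsIrredComponent n W V}) :=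
    have := W.2.1.isPrime_vanishingIdeal
    (hY.isNoetherNormalization W W.2).exists_finset_isGenericPoint ht
  choose E hcard hE using hE
  have := (finite_setOf_isIrredComponent hV).fintype
  refine ⟨Finset.univ.biUnion E, ?_, fun x hx => ?_⟩
  · rw [Finset.card_biUnion, projectionDegreeSum, finsum_mem_eq_sum]
    · exact Finset.sum_congr rfl fun W _ => hcard W
    refine fun W _ W' _ hne => Finset.disjoint_left.2 fun x hx hx' => hne (Subtype.ext ?_)
    rw [← zeroLocus_vanishingIdeal W.2.1.1, ← zeroLocus_vanishingIdeal W'.2.1.1,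
      ← (hE W x hx).ker_aeval, ← (hE W' x hx').ker_aeval]
  · obtain ⟨W, -, hxW⟩ := Finset.mem_biUnion.1 hx
    exact ⟨W, W.2, hE W x hxW⟩

lemma IsAlgSetOfDim.dim_le (hV : IsAlgSetOfDim n V d) : d ≤ n := by
  obtain ⟨W, hW⟩ := exists_isIrredComponent hV.1 hV.2.1
  obtain ⟨Y, hY⟩ := hV.exists_isCommonNormalization
  exact dim_le_of_isNoetherNormalization (hY.isNoetherNormalization W hW)

lemma IsCommonNormalization.exists_separator (hV : IsAlgSetOfDim n V d)
    (hY : IsCommonNormalization V Y) {E : Set (Fin n → Ω)}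
    (hE : ∀ x ∈ E, ∃ W, IsIrredComponent n W V ∧ IsGenericPoint (vanishingIdeal n W) Y t x)
    (x : E) :
    ∃ f : MvPolynomial (Fin n) Ω, f.totalDegree ≤ n * max (deltaSet n V) 1 ∧ eval x f ≠ 0 ∧
      ∀ x' : E, x' ≠ x → eval x' f = 0 := by
  obtain ⟨G, hGδ, hG⟩ := hV.exists_mem_minimalPrimes_span
  obtain ⟨W, hW, hx⟩ := hE x x.2
  obtain ⟨f, hfδ, hfx, hf⟩ := exists_separator_of_generic_point (p := (x : Fin n → Ω))
    ((finCongr (Nat.sub_add_cancel hV.dim_le).symm).trans finSumFinEquiv.symm)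
    (fun i => (hGδ i).trans (le_max_left _ 1))
    (fun i => (hY.totalDegree_le_one i).trans (le_max_right _ _))
    (by rw [hx.ker_aeval]; exact hG W hW)
    (by simpa only [hx.aeval_eq] using hx.isIntegralElem)
  rw [Fintype.card_fin] at hfδ
  refine ⟨f, hfδ, hfx, fun x' hne => ?_⟩
  obtain ⟨W', hW', hx'⟩ := hE x' x'.2
  refine hf x' (fun i => ?_) (fun i => (hx'.aeval_eq i).trans (hx.aeval_eq i).symm)
    (Subtype.coe_injective.ne hne)
  have hGx' : G i ∈ RingHom.ker (aeval x' : MvPolynomial (Fin n) ℂ →ₐ[ℂ] Ω) := by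
    rw [hx'.ker_aeval]
    exact (hG W' hW').1.2 (Ideal.subset_span ⟨i, rfl⟩)
  exact hGx'

lemma hilbert_eq_finrank_affineFunctions_pow (V : Set (Fin n → ℂ)) (m : ℕ) :
    hilbert n V m = Module.finrank ℂ ↥(affineFunctions (vanishingIdeal n V) ^ m) := by
  rw [hilbert, affineFunctions_pow]

lemma eq_zero_of_sum_mul_aeval_mem_vanishingIdeal (ht : AlgebraicIndependent ℂ t)
    {E : Finset (Fin n → Ω)}
    (hE : ∀ x ∈ E, ∃ W, IsIrredComponent n W V ∧ IsGenericPoint (vanishingIdeal n W) Y t x)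
    {g : E → MvPolynomial (Fin n) ℂ}
    (hg : LinearIndependent Ω fun x (x' : E) => aeval (x' : Fin n → Ω) (g x))
    {q : E → MvPolynomial (Fin d) ℂ} (hq : ∑ x, g x * aeval Y (q x) ∈ vanishingIdeal n V) :
    q = 0 := by
  have hqt : ∀ x, aeval t (q x) = 0 := by
    refine Fintype.linearIndependent_iff.1 hg _ (funext fun x' => ?_)
    obtain ⟨W, hW, hx'⟩ := hE x' x'.2
    have hzero : aeval (x' : Fin n → Ω) (∑ x, g x * aeval Y (q x)) = 0 := by
      rw [← RingHom.mem_ker, hx'.ker_aeval]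
      exact vanishingIdeal_anti hW.2.1 hq
    have hYt (x : E) : aeval (x' : Fin n → Ω) (aeval Y (q x)) = aeval t (q x) := by
      rw [← AlgHom.comp_apply, comp_aeval, ← funext hx'.aeval_eq]
    simpa only [map_sum, map_mul, hYt, mul_comm, Finset.sum_apply, Pi.smul_apply, smul_eq_mul,
      Pi.zero_apply] using hzero
  exact funext fun x => algebraicIndependent_iff.1 ht _ (hqt x)

theorem IsCommonNormalization.projectionDegreeSum_mul_pow_le_hilbert (hV : IsAlgSetOfDim n V d)
    (hY : IsCommonNormalization V Y) (q : ℕ) :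
    projectionDegreeSum V Y * (q + 1) ^ d ≤ hilbert n V (n * max (deltaSet n V) 1 + d * q) := by
  have ht := algebraicIndependent_algebraMap_X (Fin d) ℂ
  obtain ⟨E, hcard, hE⟩ := hY.exists_finset_isGenericPoint hV.1 ht
  obtain ⟨g, hgδ, hg⟩ := exists_linearIndependent_aeval (k := ℂ) (hY.exists_separator hV hE)
  have hcount := card_mul_pow_le_finrank_pow (U := affineFunctions (vanishingIdeal n V))
    (z := Ideal.Quotient.mkₐ ℂ (vanishingIdeal n V) ∘ Y)
    (f := fun x : E => Ideal.Quotient.mkₐ ℂ (vanishingIdeal n V) (g x))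
    (affineForms_le.2 ⟨one_mem_affineForms _, fun i => ?_⟩)
    (fun x => mem_affineFunctions_pow.2 ⟨g x, hgδ x, rfl⟩) (fun r hr => ?_) q
  · rwa [Fintype.card_fin, Fintype.card_coe, hcard,
      ← hilbert_eq_finrank_affineFunctions_pow] at hcount
  · rw [← pow_one (affineFunctions _)]
    exact mem_affineFunctions_pow.2 ⟨Y i, hY.totalDegree_le_one i, rfl⟩
  · refine eq_zero_of_sum_mul_aeval_mem_vanishingIdeal ht hE hg
      (Ideal.Quotient.eq_zero_iff_mem.1 (.trans ?_ hr))
    simp only [aeval_mk_comp, ← Ideal.Quotient.mkₐ_eq_mk ℂ, map_sum, map_mul]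

end LowerBound

section HilbertFunctions

lemma finrank_range_le_of_ker_le {k A B C : Type*} [Field k] [AddCommGroup A] [AddCommGroup B]
    [AddCommGroup C] [Module k A] [Module k B] [Module k C] [FiniteDimensional k A]
    {f : A →ₗ[k] B} {g : A →ₗ[k] C} (h : LinearMap.ker g ≤ LinearMap.ker f) :
    Module.finrank k (LinearMap.range f) ≤ Module.finrank k (LinearMap.range g) := by
  have hf := f.finrank_range_add_finrank_ker
  have hg := g.finrank_range_add_finrank_ker
  have := Submodule.finrank_mono h
  lia

lemma finrank_range_le_sum {ι k A B : Type*} {C : ι → Type*} [Fintype ι] [Field k]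
    [AddCommGroup A] [AddCommGroup B] [∀ i, AddCommGroup (C i)] [Module k A] [Module k B]
    [∀ i, Module k (C i)] [FiniteDimensional k A] {f : A →ₗ[k] B} {g : ∀ i, A →ₗ[k] C i}
    (h : ∀ a, (∀ i, g i a = 0) → f a = 0) :
    Module.finrank k (LinearMap.range f) ≤ ∑ i, Module.finrank k (LinearMap.range (g i)) := by
  rw [← Module.finrank_pi_fintype]
  refine (finrank_range_le_of_ker_le (g := LinearMap.pi fun i => (g i).rangeRestrict)
    fun a ha => h a fun i => ?_).trans (Submodule.finrank_le _)
  exact congrArg Subtype.val (congrFun ha i)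

variable {n} {V T : Set (Fin n → ℂ)} {d l : ℕ}

lemma hilbert_eq_finrank_range (V : Set (Fin n → ℂ)) (m : ℕ) :
    hilbert n V m = Module.finrank ℂ (LinearMap.range
      ((Ideal.Quotient.mkₐ ℂ (vanishingIdeal n V)).toLinearMap.domRestrict
        (restrictTotalDegree (Fin n) ℂ m))) := by
  rw [hilbert, LinearMap.range_domRestrict]

lemma exists_mem_vanishingIdeal_notMem {m : ℕ} (h : hilbert n T m < hilbert n V m) :
    ∃ P : MvPolynomial (Fin n) ℂ,
      P.totalDegree ≤ m ∧ P ∈ vanishingIdeal n T ∧ P ∉ vanishingIdeal n V := by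
  contrapose! h
  rw [hilbert_eq_finrank_range, hilbert_eq_finrank_range]
  refine finrank_range_le_of_ker_le fun P hP => Ideal.Quotient.eq_zero_iff_mem.2 ?_
  exact h P ((mem_restrictTotalDegree _ _ _).1 P.2) (Ideal.Quotient.eq_zero_iff_mem.1 hP)

lemma hilbert_le_sum_hilbert (hV : IsAlgebraicSet n V) [Fintype {W | IsIrredComponent n W V}]
    (m : ℕ) : hilbert n V m ≤ ∑ W : {W | IsIrredComponent n W V}, hilbert n W m := by
  simp only [hilbert_eq_finrank_range]
  refine finrank_range_le_sum fun P hP => Ideal.Quotient.eq_zero_iff_mem.2 ?_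
  exact mem_vanishingIdeal_of_forall_component hV fun W hW =>
    Ideal.Quotient.eq_zero_iff_mem.1 (hP ⟨W, hW⟩)

lemma hilbert_le_finrank_restrictTotalDegree (V : Set (Fin n → ℂ)) (m : ℕ) :
    hilbert n V m ≤ Module.finrank ℂ (restrictTotalDegree (Fin n) ℂ m) :=
  Submodule.finrank_map_le _ _

lemma IsCommonNormalization.degreeSum_le {Y : Fin d → MvPolynomial (Fin n) ℂ}
    (hV : IsAlgebraicSet n V) (hY : IsCommonNormalization V Y) :
    degreeSum n V ≤ (d + 1) ^ d * projectionDegreeSum V Y := by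
  have := (finite_setOf_isIrredComponent hV).fintype
  rw [projectionDegreeSum, degreeSum, finsum_mem_eq_sum, finsum_mem_eq_sum, Finset.mul_sum]
  exact Finset.sum_le_sum fun W _ => W.2.1.degree_le (hY.isNoetherNormalization W W.2)

namespace IsAlgSetOfDim

lemma hilbert_le_degreeSum_mul_pow (hV : IsAlgSetOfDim n V d) (m : ℕ) :
    hilbert n V m ≤ degreeSum n V * (m + 1) ^ d := by
  obtain ⟨Y, hY⟩ := hV.exists_isCommonNormalization
  have := (finite_setOf_isIrredComponent hV.1).fintype
  refine (hilbert_le_sum_hilbert hV.1 m).trans ?_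
  rw [degreeSum, finsum_mem_eq_sum, Finset.sum_mul]
  refine Finset.sum_le_sum fun W _ => ?_
  have := W.2.1.isPrime_vanishingIdeal
  have hW := hY.isNoetherNormalization W W.2
  rw [hilbert_eq_finrank_affineFunctions_pow]
  calc _ ≤ projectionDegree ℂ _ * (m + 1) ^ Fintype.card (Fin d) := hW.finrank_pow_le m
    _ ≤ degree n W * (m + 1) ^ d := by
      rw [Fintype.card_fin]
      exact Nat.mul_le_mul_right _ (W.2.1.projectionDegree_le hW)

lemma degreeSum_mul_pow_le_hilbert (hV : IsAlgSetOfDim n V d) (q : ℕ) :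
    degreeSum n V * (q + 1) ^ d ≤
      (d + 1) ^ d * hilbert n V (n * max (deltaSet n V) 1 + d * q) := by
  obtain ⟨Y, hY⟩ := hV.exists_isCommonNormalization
  calc _ ≤ (d + 1) ^ d * projectionDegreeSum V Y * (q + 1) ^ d :=
        Nat.mul_le_mul_right _ (hY.degreeSum_le hV.1)
    _ ≤ _ := by
      rw [mul_assoc]
      exact Nat.mul_le_mul_left _ (hY.projectionDegreeSum_mul_pow_le_hilbert hV q)

lemma degreeSum_pos (hV : IsAlgSetOfDim n V d) : 0 < degreeSum n V := by
  obtain ⟨Y, hY⟩ := hV.exists_isCommonNormalization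
  obtain ⟨W, hW⟩ := exists_isIrredComponent hV.1 hV.2.1
  have := (finite_setOf_isIrredComponent hV.1).fintype
  have := hW.1.isPrime_vanishingIdeal
  have hWY := hY.isNoetherNormalization W hW
  rw [degreeSum, finsum_mem_eq_sum]
  exact Finset.sum_pos' (fun _ _ => Nat.zero_le _) ⟨⟨W, hW⟩, Finset.mem_univ _,
    hWY.projectionDegree_pos.trans_le (hW.1.projectionDegree_le hWY)⟩

lemma degreeSum_le_of_deltaSet_eq_zero (hV : IsAlgSetOfDim n V d) (hδ : deltaSet n V = 0) :
    degreeSum n V ≤ (d + 1) ^ d * Module.finrank ℂ (restrictTotalDegree (Fin n) ℂ n) := by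
  have h := hV.degreeSum_mul_pow_le_hilbert 0
  rw [hδ, Nat.zero_max, mul_zero, mul_one, add_zero, zero_add, one_pow, mul_one] at h
  exact h.trans (Nat.mul_le_mul_left _ (hilbert_le_finrank_restrictTotalDegree V n))

theorem exists_mem_vanishingIdeal_notMem_of_lt (hV : IsAlgSetOfDim n V d)
    (hT : IsAlgSetOfDim n T l) {q : ℕ}
    (h : (d + 1) ^ d * (degreeSum n T * (n * max (deltaSet n V) 1 + d * q + 1) ^ l) <
      degreeSum n V * (q + 1) ^ d) :
    ∃ P : MvPolynomial (Fin n) ℂ, P.totalDegree ≤ n * max (deltaSet n V) 1 + d * q ∧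
      P ∈ vanishingIdeal n T ∧ P ∉ vanishingIdeal n V := by
  refine exists_mem_vanishingIdeal_notMem (lt_of_mul_lt_mul_left' (a := (d + 1) ^ d) ?_)
  calc _ ≤ (d + 1) ^ d * (degreeSum n T * (n * max (deltaSet n V) 1 + d * q + 1) ^ l) :=
        Nat.mul_le_mul_left _ (hT.hilbert_le_degreeSum_mul_pow _)
    _ < degreeSum n V * (q + 1) ^ d := h
    _ ≤ _ := hV.degreeSum_mul_pow_le_hilbert q

-- `δ(V)` vanishes for `V = ℂⁿ`; the bound on `deg V` in that case lets `max (δ(V)) 1` replace it.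
lemma exists_mul_max_deltaSet_pow_le (n d e : ℕ) {τ : ℝ} (hτ : 0 < τ) :
    ∃ τ' : ℝ, 0 < τ' ∧ ∀ V : Set (Fin n → ℂ), IsAlgSetOfDim n V d → ∀ b : ℝ, 1 ≤ b →
      τ * (deltaSet n V : ℝ) ^ e * degreeSum n V ≤ b →
      τ' * ((max (deltaSet n V) 1 : ℕ) : ℝ) ^ e * degreeSum n V ≤ b := by
  let K := (d + 1) ^ d * Module.finrank ℂ (restrictTotalDegree (Fin n) ℂ n)
  refine ⟨min τ (K + 1 : ℝ)⁻¹, by positivity, fun V hV b hb hle => ?_⟩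
  rcases Nat.eq_zero_or_pos (deltaSet n V) with hδ | hδ
  · have hK : (degreeSum n V : ℝ) ≤ K + 1 :=
      (Nat.cast_le.2 (hV.degreeSum_le_of_deltaSet_eq_zero hδ)).trans
        (le_add_of_nonneg_right zero_le_one)
    rw [hδ, Nat.zero_max, Nat.cast_one, one_pow, mul_one]
    calc _ ≤ (K + 1 : ℝ)⁻¹ * (K + 1) := by gcongr; exact min_le_right _ _
      _ = 1 := inv_mul_cancel₀ (by positivity)
      _ ≤ b := hb
  · rw [Nat.max_eq_left hδ]
    refine le_trans ?_ hle
    gcongr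
    exact min_le_left _ _

end IsAlgSetOfDim

end HilbertFunctions

section ChoiceOfDegree

lemma mul_mul_pow_lt_mul_pow {l d : ℕ} (hl : l < d) {a m x ρ : ℝ} (ha : 0 < a) (hρ : 0 ≤ ρ)
    (hm : 0 ≤ m) (hmx : m ≤ (d + 1) * x) (hx : ρ * (d + 1) ^ (d + l) < x) :
    (d + 1) ^ d * (ρ ^ (d - l) * a * m ^ l) < a * x ^ d := by
  have he : d - l ≠ 0 := by lia
  have hx0 : 0 < x := lt_of_le_of_lt (by positivity) hx
  have hK : (1 : ℝ) ≤ (d + 1) ^ (d + l) := one_le_pow₀ (le_add_of_nonneg_left d.cast_nonneg)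
  calc (d + 1) ^ d * (ρ ^ (d - l) * a * m ^ l)
      ≤ (d + 1) ^ d * (ρ ^ (d - l) * a * ((d + 1) * x) ^ l) := by gcongr
    _ = ρ ^ (d - l) * (d + 1) ^ (d + l) * (a * x ^ l) := by rw [mul_pow, pow_add]; ring
    _ ≤ ρ ^ (d - l) * ((d + 1) ^ (d + l)) ^ (d - l) * (a * x ^ l) := by
      gcongr
      exact le_self_pow₀ hK he
    _ = (ρ * (d + 1) ^ (d + l)) ^ (d - l) * (a * x ^ l) := by rw [mul_pow]
    _ < x ^ (d - l) * (a * x ^ l) := by gcongr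
    _ = a * x ^ d := by rw [mul_left_comm, ← pow_add, Nat.sub_add_cancel hl.le]

lemma exists_le_mul_and_mul_pow_lt {l d : ℕ} (hl : l < d) (n δ : ℕ) {a ρ s : ℝ} (ha : 0 < a)
    (hs : 0 < s) (hρ : 0 ≤ ρ) (hδ : s * δ ≤ ρ) :
    ∃ q : ℕ, (n * δ + d * q : ℝ) ≤ ((d + 1) * (n / s) + d * (d + 1) ^ (d + l)) * ρ ∧
      (d + 1) ^ d * (ρ ^ (d - l) * a * (n * δ + d * q + 1) ^ l) < a * (q + 1) ^ d := by
  have hnδ : (n * δ : ℝ) ≤ n / s * ρ := by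
    rw [div_mul_eq_mul_div, le_div_iff₀ hs, mul_right_comm, mul_assoc]
    gcongr
  let x := ρ * (d + 1) ^ (d + l) + n * δ
  have hfloor : (⌊x⌋₊ : ℝ) ≤ x := Nat.floor_le (by positivity)
  have hceil : x < ⌊x⌋₊ + 1 := Nat.lt_floor_add_one x
  have hnδ_floor : (n * δ : ℝ) ≤ ⌊x⌋₊ := by
    have : n * δ ≤ ⌊x⌋₊ := Nat.le_floor (by push_cast; exact le_add_of_nonneg_left (by positivity))
    exact_mod_cast this
  refine ⟨⌊x⌋₊, ?_, mul_mul_pow_lt_mul_pow hl ha hρ (by positivity) (by linarith)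
    (lt_of_le_of_lt (le_add_of_nonneg_right (by positivity)) hceil)⟩
  calc (n * δ + d * ⌊x⌋₊ : ℝ) ≤ n * δ + d * x := by gcongr
    _ = (d + 1) * (n * δ) + d * (d + 1) ^ (d + l) * ρ := by ring
    _ ≤ (d + 1) * (n / s * ρ) + d * (d + 1) ^ (d + l) * ρ := by gcongr
    _ = ((d + 1) * (n / s) + d * (d + 1) ^ (d + l)) * ρ := by ring

lemma exists_forall_exists_le_mul_rpow (n : ℕ) {l d : ℕ} (hl : l < d) {τ : ℝ} (hτ : 0 < τ) :
    ∃ C : ℝ, 0 < C ∧ ∀ a b δ : ℕ, 0 < a → τ * (δ : ℝ) ^ (d - l) * a ≤ b →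
      ∃ q : ℕ, ((n * δ + d * q : ℕ) : ℝ) ≤ C * ((b : ℝ) / a) ^ (((d - l : ℕ) : ℝ)⁻¹) ∧
        (d + 1) ^ d * (b * (n * δ + d * q + 1) ^ l) < a * (q + 1) ^ d := by
  have he : d - l ≠ 0 := by lia
  have hd : (0 : ℝ) < d := Nat.cast_pos.2 (by lia)
  let s := τ ^ (((d - l : ℕ) : ℝ)⁻¹)
  have hs : 0 < s := Real.rpow_pos_of_pos hτ _
  refine ⟨(d + 1) * (n / s) + d * (d + 1) ^ (d + l), by positivity, fun a b δ ha hle => ?_⟩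
  have ha' : (0 : ℝ) < a := Nat.cast_pos.2 ha
  let ρ := ((b : ℝ) / a) ^ (((d - l : ℕ) : ℝ)⁻¹)
  have hρ : 0 ≤ ρ := by positivity
  have hρ_pow : ρ ^ (d - l) = b / a := Real.rpow_inv_natCast_pow (by positivity) he
  have hδ : s * δ ≤ ρ := by
    refine le_of_pow_le_pow_left₀ he hρ ?_
    rwa [mul_pow, Real.rpow_inv_natCast_pow hτ.le he, hρ_pow, le_div_iff₀ ha']
  obtain ⟨q, hq, hlt⟩ := exists_le_mul_and_mul_pow_lt hl n δ ha' hs hρ hδ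
  rw [hρ_pow, div_mul_cancel₀ _ ha'.ne'] at hlt
  exact ⟨q, by exact_mod_cast hq, by exact_mod_cast hlt⟩

end ChoiceOfDegree

/-- Theorem 2 of the paper: a Siegel-type lemma. Given a `d`-dimensional
algebraic set `V` and an `l`-dimensional algebraic set `T` of sufficiently large degree, there
is a polynomial of controlled degree vanishing on `T` but not identically on `V`. -/
theorem statement1 (n l d : ℕ) (hl : l < d) (hd : d ≤ n) (τ : ℝ) (hτ : 0 < τ) :
    ∃ C : ℝ, 0 < C ∧
      ∀ V T : Set (Fin n → ℂ), IsAlgSetOfDim n V d → IsAlgSetOfDim n T l →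
        τ * (deltaSet n V : ℝ) ^ (d - l) * (degreeSum n V : ℝ) ≤ (degreeSum n T : ℝ) →
        ∃ P : MvPolynomial (Fin n) ℂ,
          (P.totalDegree : ℝ) ≤
            C * ((degreeSum n T : ℝ) / (degreeSum n V : ℝ)) ^ ((1 : ℝ) / ((d : ℝ) - (l : ℝ))) ∧
          (∀ x ∈ T, eval x P = 0) ∧ P ∉ vanishingIdeal n V := by
  obtain ⟨τ', hτ', hδ⟩ := IsAlgSetOfDim.exists_mul_max_deltaSet_pow_le n d (d - l) hτ
  obtain ⟨C, hC, hq⟩ := exists_forall_exists_le_mul_rpow n hl hτ'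
  refine ⟨C, hC, fun V T hV hT hle => ?_⟩
  have hT_pos : (1 : ℝ) ≤ degreeSum n T := Nat.one_le_cast.2 hT.degreeSum_pos
  obtain ⟨q, hqC, hlt⟩ := hq _ _ _ hV.degreeSum_pos (hδ V hV _ hT_pos hle)
  obtain ⟨P, hPq, hPT, hPV⟩ := hV.exists_mem_vanishingIdeal_notMem_of_lt hT hlt
  rw [one_div, ← Nat.cast_sub hl.le]
  exact ⟨P, (Nat.cast_le.2 hPq).trans hqC, hPT, hPV⟩

end Paper
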